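/- Let m ≥ 2, let H be a finite set of nonzero vectors in ℤ_{≥0}^m, fix h = (h_1,…,h_m) ∈ H, and fix r ∈ ℝ_{>0}^m with r·h > r·h′ for all h′ ∈ H with h′ ≠ h. Then there exist a constant c > 0 and D_0 such that for every integer D ≥ D_0 divisible by gcd(h_1,…,h_m), there exists d = (d_1,…,d_m) ∈ ℤ_{≥1}^m with gcd(d_1,…,d_m) = 1, with |d_j − D·r_j/(r·h)| ≤ c·(log D)² for every j, such that h·d = D and h′·d < D for all h′ ∈ H with h′ ≠ h. -/

import Mathlib

/-!
The vectors `d` are integer points of the hyperplane `h·x = D` close to the real point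
`D r / (r·h)`. Integer points of the hyperplane lie within `O(1)` of any of its real points
(`exists_int_point`), so positivity and the strict inequalities `h'·d < D` are automatic for large
`D` as long as the point is moved by at most `O(log² D)`. What has to be arranged is `gcd(d) = 1`.
Moving `x` along `h_j e_i - h_i e_j` (divided by `gcd(h_i, h_j)`) preserves the integer
`N = (h_i x_i + h_j x_j) / gcd(h_i, h_j)`, and `gcd(d_i, d_j) = gcd(N, w + t)` after `t` steps. So
all that is needed is some `0 < t ≪ log² N` with `w + t` coprime to `N`
(`exists_coprime_shift`). Its existence is Iwaniec's bound `≪ log² n` for Jacobsthal's function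
(`jacobsthal`).

Jacobsthal's function is bounded with the linear sieve. Put `z = K log n` with a large constant `K`.
An interval of length `X ≍ z²` lies just beyond the sifting limit `2` of the linear sieve, which
leaves `≫ X / log² z` integers free of primes below `z`. Primes `p ∣ n` with `p ≥ z` number at most
`log n / log z ≤ z / (K log z)`, and each removes `≪ X / (z log z)` survivors by the upper bound
sieve, in total `≪ X / (K log² z)`; hence survivors coprime to `n` remain.

To reach the sifting limit with a saving of only a constant in `X`, the sieve is needed with a
sharp error term (`linear_sieve`). It is obtained by induction over the sifting level through
Buchstab's identity (`sieve_induction`): with `v = c / V(z) ∼ log z` and `U = log X - η_z`, the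
bounds `F(U/v)/v + v^{-5/2}(v/U)^6` and `f(U/v)/v - v^{-5/2}(v/U)^6` propagate. The shift `η_z`,
which grows by `K/(p √v)` at each prime and stays bounded, pays for the error terms of each step
because `-F'` and `f'` are positive. The discrepancy `v(p) - log p` is only `O(1)`, which would be
too large by itself; but its sums against `1/p` are `O(1/v)` (`sieve_density`). That cancellation rests on
a mean-value form of Mertens' theorem, `∑_{p<z} (log p/p) log (z/p) =
(log z)²/2 + E log z + O(1)`, which follows from Möbius inversion (`bounded_of_sum_div`) and
`|∑ μ(n)/n| ≤ 1` without the prime number theorem. The functions `F`, `f` come from the delay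
equations `(sF)' = f(s - 1)`, `(sf)' = F(s - 1)`, decoupled into `sF ± sf` (`linear_sieve_pair`).
-/

noncomputable section

open Finset

/-! ### Möbius sums and inversion -/

/-- Summing over pairs `(k, m)` with `k m ≤ N` by grouping according to the product. -/
lemma sum_hyperbola (f : ℕ → ℕ → ℝ) (N : ℕ) :
    ∑ k ∈ Ioc 0 N, ∑ m ∈ Ioc 0 (N / k), f k m =
      ∑ n ∈ Ioc 0 N, ∑ x ∈ n.divisorsAntidiagonal, f x.1 x.2 := by
  have h1 : ∑ n ∈ Ioc 0 N, ∑ x ∈ n.divisorsAntidiagonal, f x.1 x.2 =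
      ∑ x ∈ Ioc 0 N ×ˢ Ioc 0 N with x.1 * x.2 ≤ N, f x.1 x.2 := by
    trans ∑ n ∈ Ioc 0 N, ∑ x ∈ Ioc 0 N ×ˢ Ioc 0 N with x.1 * x.2 = n, f x.1 x.2
    · refine sum_congr rfl fun n hn ↦ ?_
      simp only [mem_Ioc] at hn
      rw [Nat.divisorsAntidiagonal_eq_prod_filter_of_le hn.1.ne' hn.2]
    · simp_rw [sum_filter]
      rw [sum_comm]
      exact sum_congr rfl fun _ _ ↦ (by simp_all)
  rw [h1, sum_filter, sum_product]
  refine sum_congr rfl fun n hn ↦ ?_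
  rw [← sum_filter]
  apply sum_congr _ (fun _ _ => rfl)
  ext m
  simp only [mem_Ioc, mem_filter] at hn ⊢
  rw [Nat.le_div_iff_mul_le hn.1, mul_comm m n]
  constructor
  · rintro ⟨h1, h2⟩
    refine ⟨⟨h1, ?_⟩, h2⟩
    nlinarith
  · rintro ⟨⟨h1, h3⟩, h2⟩
    exact ⟨h1, h2⟩

open ArithmeticFunction in
/-- The classical elementary bound, from `∑_{n ≤ N} μ(n) ⌊N/n⌋ = 1`. -/
lemma abs_sum_moebius_div_le (N : ℕ) :
    |∑ n ∈ Ioc 0 N, (ArithmeticFunction.moebius n : ℝ) / n| ≤ 1 := by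
  rcases Nat.eq_zero_or_pos N with rfl | hN
  · simp
  have hsum : ∑ n ∈ Ioc 0 N, (ArithmeticFunction.moebius n : ℝ) * ((N / n : ℕ) : ℝ) = 1 := by
    have h := sum_Ioc_mul_zeta_eq_sum (ArithmeticFunction.moebius) N
    rw [moebius_mul_coe_zeta] at h
    have h2 : ∑ n ∈ Ioc 0 N, (1 : ArithmeticFunction ℤ) n = 1 := by
      rw [Finset.sum_eq_single 1]
      · simp
      · intro b _ hb; simp [one_apply, hb]
      · intro h; simp at h; omega
    rw [h2] at h
    have := congrArg (fun t : ℤ => (t : ℝ)) h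
    push_cast at this
    exact this.symm
  have hN' : (0 : ℝ) < N := by exact_mod_cast hN
  have hfr : ∀ n ∈ Ioc 0 N, |(ArithmeticFunction.moebius n : ℝ) * ((N : ℝ) / n - ((N / n : ℕ) : ℝ))|
      ≤ if n = 1 then 0 else 1 := by
    intro n hn
    simp only [mem_Ioc] at hn
    split_ifs with h1
    · subst h1; simp
    have hn0 : (0 : ℝ) < n := by exact_mod_cast hn.1
    have hmu : |(ArithmeticFunction.moebius n : ℝ)| ≤ 1 := by
      exact_mod_cast abs_moebius_le_one
    rw [abs_mul]
    have h3 : |(N : ℝ) / n - ((N / n : ℕ) : ℝ)| ≤ 1 := by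
      rw [abs_le]
      have h4 : ((N / n : ℕ) : ℝ) ≤ (N : ℝ) / n := Nat.cast_div_le
      have h5 : (N : ℝ) / n < ((N / n : ℕ) : ℝ) + 1 := by
        rw [div_lt_iff₀ hn0]
        exact_mod_cast (Nat.lt_mul_of_div_lt (Nat.lt_succ_self _) hn.1)
      constructor <;> linarith
    calc _ ≤ 1 * 1 := mul_le_mul hmu h3 (abs_nonneg _) zero_le_one
      _ = 1 := one_mul 1
  have hmain : (N : ℝ) * ∑ n ∈ Ioc 0 N, (ArithmeticFunction.moebius n : ℝ) / n =
      1 + ∑ n ∈ Ioc 0 N, (ArithmeticFunction.moebius n : ℝ) * ((N : ℝ) / n - ((N / n : ℕ) : ℝ)) := by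
    rw [← hsum, ← sum_add_distrib, mul_sum]
    apply sum_congr rfl; intro n _; ring
  have hb : |∑ n ∈ Ioc 0 N, (ArithmeticFunction.moebius n : ℝ) * ((N : ℝ) / n - ((N / n : ℕ) : ℝ))|
      ≤ N - 1 := by
    refine (abs_sum_le_sum_abs _ _).trans ((sum_le_sum hfr).trans ?_)
    have : ∑ n ∈ Ioc 0 N, (if n = 1 then (0 : ℝ) else 1) =
        ∑ n ∈ Ioc 0 N, ((1 : ℝ) - if n = 1 then 1 else 0) := by
      apply sum_congr rfl; intro n _; split_ifs <;> simp
    rw [this, sum_sub_distrib]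
    simp [Nat.succ_le_of_lt hN]
  have h6 : |(N : ℝ) * ∑ n ∈ Ioc 0 N, (ArithmeticFunction.moebius n : ℝ) / n| ≤ N := by
    rw [hmain]
    refine (abs_add_le _ _).trans ?_
    rw [abs_one]; linarith
  rw [abs_mul, abs_of_pos hN'] at h6
  by_contra hcon
  push Not at hcon
  nlinarith

lemma log_pow_le (j k : ℕ) (hk : 0 < k) {t : ℝ} (ht : 1 ≤ t) :
    Real.log t ^ j ≤ (j.factorial * k ^ j : ℝ) * t ^ (1 / (k : ℝ)) := by
  have hk' : (0 : ℝ) < k := by exact_mod_cast hk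
  have h0 : 0 ≤ Real.log t / k := div_nonneg (Real.log_nonneg ht) hk'.le
  have h := Real.pow_div_factorial_le_exp (Real.log t / k) h0 j
  have he : Real.exp (Real.log t / k) = t ^ (1 / (k : ℝ)) := by
    rw [Real.rpow_def_of_pos (by linarith)]; congr 1; ring
  rw [he, div_le_iff₀ (by positivity), div_pow, div_le_iff₀ (by positivity)] at h
  linarith

lemma sum_rpow_le (N : ℕ) : ∑ n ∈ Ioc 0 N, (n : ℝ) ^ (-(3 / 4) : ℝ) ≤ 4 * (N : ℝ) ^ (1 / 4 : ℝ) := by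
  induction N with
  | zero => simp
  | succ N ih =>
    rw [← Finset.insert_Ioc_right_eq_Ioc_add_one (Nat.zero_le N), sum_insert (by simp)]
    have key : ((N + 1 : ℕ) : ℝ) ^ (-(3 / 4) : ℝ) ≤
        4 * ((N + 1 : ℕ) : ℝ) ^ (1 / 4 : ℝ) - 4 * (N : ℝ) ^ (1 / 4 : ℝ) := by
      -- with `b⁴ = N + 1` and `a⁴ = N`, this is `4 a b³ ≤ 3 b⁴ + a⁴`
      set b := ((N + 1 : ℕ) : ℝ) ^ (1 / 4 : ℝ) with hb
      set a := (N : ℝ) ^ (1 / 4 : ℝ) with ha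
      have hbp : 0 < b := by positivity
      have hap : 0 ≤ a := by positivity
      have hb4 : b ^ 4 = N + 1 := by
        rw [hb, ← Real.rpow_natCast, ← Real.rpow_mul (by positivity)]; norm_num
      have ha4 : a ^ 4 = N := by
        rw [ha, ← Real.rpow_natCast, ← Real.rpow_mul (by positivity)]; norm_num
      have hb3 : ((N + 1 : ℕ) : ℝ) ^ (-(3 / 4) : ℝ) = (b ^ 3)⁻¹ := by
        rw [Real.rpow_neg (by positivity), hb, ← Real.rpow_natCast, ← Real.rpow_mul (by positivity)]
        norm_num
      rw [hb3, inv_le_iff_one_le_mul₀ (by positivity)]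
      nlinarith [sq_nonneg (b ^ 2 - a ^ 2), sq_nonneg (b - a), mul_nonneg hap hbp.le,
        mul_nonneg (sq_nonneg (b - a)) (sq_nonneg (b + a)),
        mul_nonneg (sq_nonneg (b - a)) (sq_nonneg b)]
    linarith

open ArithmeticFunction in
/-- Möbius inversion of `F(y) = ∑_{k ≤ y} G(y/k)/k`: if `F(y) = b + O(y^{-1/4})`, then `G` is
bounded on the positive integers. -/
lemma bounded_of_sum_div (G : ℝ → ℝ) (b C : ℝ)
    (h : ∀ y : ℝ, 1 ≤ y →
      |∑ k ∈ Ioc 0 ⌊y⌋₊, G (y / k) / k - b| ≤ C * y ^ (-(1 / 4) : ℝ)) (x : ℕ) (hx : 1 ≤ x) :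
    |G x| ≤ |b| + 4 * C := by
  have hx0 : (0 : ℝ) < x := by exact_mod_cast hx
  have hC : 0 ≤ C := by
    have := (abs_nonneg _).trans (h 1 le_rfl)
    simpa using this
  have hinv : G x = ∑ n ∈ Ioc 0 x, (moebius n : ℝ) / n *
      ∑ k ∈ Ioc 0 ⌊(x : ℝ) / n⌋₊, G ((x : ℝ) / n / k) / k := by
    have h1 : ∀ n ∈ Ioc 0 x, (moebius n : ℝ) / n *
        ∑ k ∈ Ioc 0 ⌊(x : ℝ) / n⌋₊, G ((x : ℝ) / n / k) / k =
        ∑ k ∈ Ioc 0 (x / n), (moebius n : ℝ) * (G ((x : ℝ) / (n * k : ℕ)) / (n * k : ℕ)) := by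
      intro n _
      rw [Nat.floor_div_eq_div, mul_sum]
      apply sum_congr rfl; intro k _
      push_cast
      rw [div_div]
      ring
    rw [sum_congr rfl h1,
      sum_hyperbola (fun n k => (moebius n : ℝ) * (G ((x : ℝ) / (n * k : ℕ)) / (n * k : ℕ)))]
    have h2 : ∀ n ∈ Ioc 0 x, ∑ y ∈ n.divisorsAntidiagonal,
        (moebius y.1 : ℝ) * (G ((x : ℝ) / (y.1 * y.2 : ℕ)) / (y.1 * y.2 : ℕ)) =
        if n = 1 then G x else 0 := by
      intro n hn
      have h3 : ∑ y ∈ n.divisorsAntidiagonal,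
        (moebius y.1 : ℝ) * (G ((x : ℝ) / (y.1 * y.2 : ℕ)) / (y.1 * y.2 : ℕ)) =
        ∑ y ∈ n.divisorsAntidiagonal, (moebius y.1 : ℝ) * (G ((x : ℝ) / n) / n) := by
        apply sum_congr rfl; intro y hy
        rw [(Nat.mem_divisorsAntidiagonal.mp hy).1]
      rw [h3, ← sum_mul]
      have h4 : ∑ y ∈ n.divisorsAntidiagonal, (moebius y.1 : ℝ) = if n = 1 then 1 else 0 := by
        have h5 : (moebius * (zeta : ArithmeticFunction ℤ)) n = (1 : ArithmeticFunction ℤ) n := by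
          rw [moebius_mul_coe_zeta]
        rw [mul_apply, one_apply] at h5
        have h6 : ∀ y ∈ n.divisorsAntidiagonal, moebius y.1 * (zeta : ArithmeticFunction ℤ) y.2
            = moebius y.1 := by
          intro y hy
          have : y.2 ≠ 0 := Nat.right_ne_zero_of_mem_divisorsAntidiagonal hy
          simp [natCoe_apply, zeta_apply, this]
        rw [sum_congr rfl h6] at h5
        have := congrArg (fun t : ℤ => (t : ℝ)) h5
        push_cast at this
        exact this
      rw [h4]
      split_ifs with h1
      · subst h1; simp
      · simp
    rw [sum_congr rfl h2]
    simp only [sum_ite_eq']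
    rw [if_pos (by simp; omega)]
  set F : ℕ → ℝ := fun n => ∑ k ∈ Ioc 0 ⌊(x : ℝ) / n⌋₊, G ((x : ℝ) / n / k) / k with hF
  have hsplit : G x = b * ∑ n ∈ Ioc 0 x, (moebius n : ℝ) / n +
      ∑ n ∈ Ioc 0 x, (moebius n : ℝ) / n * (F n - b) := by
    rw [hinv, mul_sum, ← sum_add_distrib]
    apply sum_congr rfl; intro n _; simp only [hF]; ring
  have h2 : |∑ n ∈ Ioc 0 x, (moebius n : ℝ) / n * (F n - b)| ≤ 4 * C := by
    refine (abs_sum_le_sum_abs _ _).trans ?_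
    have h3 : ∀ n ∈ Ioc 0 x, |(moebius n : ℝ) / n * (F n - b)| ≤
        C * (x : ℝ) ^ (-(1 / 4) : ℝ) * (n : ℝ) ^ (-(3 / 4) : ℝ) := by
      intro n hn
      simp only [mem_Ioc] at hn
      have hn0 : (0 : ℝ) < n := by exact_mod_cast hn.1
      have hmu : |(moebius n : ℝ)| ≤ 1 := by exact_mod_cast abs_moebius_le_one
      have h4 := h ((x : ℝ) / n) (by rw [le_div_iff₀ hn0]; exact_mod_cast (by omega))
      rw [abs_mul, abs_div, abs_of_pos hn0]
      calc _ ≤ 1 / (n : ℝ) * (C * ((x : ℝ) / n) ^ (-(1 / 4) : ℝ)) := by gcongr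
        _ = C * (x : ℝ) ^ (-(1 / 4) : ℝ) * (n : ℝ) ^ (-(3 / 4) : ℝ) := by
          rw [Real.div_rpow hx0.le hn0.le, Real.rpow_neg hn0.le (1 / 4), div_inv_eq_mul,
            show (-(3 / 4) : ℝ) = -1 + 1 / 4 by norm_num, Real.rpow_add hn0, Real.rpow_neg_one]
          ring
    refine (sum_le_sum h3).trans ?_
    rw [← mul_sum]
    calc _ ≤ C * (x : ℝ) ^ (-(1 / 4) : ℝ) * (4 * (x : ℝ) ^ (1 / 4 : ℝ)) := by
          gcongr; exact sum_rpow_le x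
      _ = 4 * C * ((x : ℝ) ^ (-(1 / 4) : ℝ) * (x : ℝ) ^ (1 / 4 : ℝ)) := by ring
      _ = 4 * C := by rw [← Real.rpow_add hx0]; norm_num
  rw [hsplit]
  refine (abs_add_le _ _).trans (add_le_add ?_ h2)
  rw [abs_mul]
  have := abs_sum_moebius_div_le x
  nlinarith [abs_nonneg b]

/-! ### Sums of powers of the logarithm -/

/-- A sequence whose increments are dominated by those of a nonnegative decreasing sequence `w`
has a limit `γ`, approached within `w`. -/
lemma exists_limit_of_increment (u w : ℕ → ℝ) (N0 : ℕ) (hw : ∀ n, N0 ≤ n → 0 ≤ w n)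
    (h : ∀ n, N0 ≤ n → |u (n + 1) - u n| ≤ w n - w (n + 1)) :
    ∃ γ : ℝ, ∀ n, N0 ≤ n → |u n - γ| ≤ w n := by
  have hup : ∀ m n, N0 ≤ m → m ≤ n → u n + w n ≤ u m + w m := by
    intro m n hm hmn
    induction n, hmn using Nat.le_induction with
    | base => exact le_rfl
    | succ n hn ih => have := (abs_le.mp (h n (hm.trans hn))).2; linarith
  have hdn : ∀ m n, N0 ≤ m → m ≤ n → u m - w m ≤ u n - w n := by
    intro m n hm hmn
    induction n, hmn using Nat.le_induction with
    | base => exact le_rfl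
    | succ n hn ih => have := (abs_le.mp (h n (hm.trans hn))).1; linarith
  have hall : ∀ m n, N0 ≤ m → N0 ≤ n → u n - w n ≤ u m + w m := by
    intro m n hm hn
    have h1 := hdn n (max m n) hn (le_max_right _ _)
    have h2 := hup m (max m n) hm (le_max_left _ _)
    have h3 := hw (max m n) (hm.trans (le_max_left _ _))
    linarith
  have hbdd : BddAbove (Set.range fun k : ℕ => u (N0 + k) - w (N0 + k)) :=
    ⟨u N0 + w N0, by rintro _ ⟨k, rfl⟩; exact hall N0 (N0 + k) le_rfl (by omega)⟩
  refine ⟨⨆ k : ℕ, (u (N0 + k) - w (N0 + k)), fun n hn => ?_⟩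
  have h1 : u n - w n ≤ ⨆ k : ℕ, (u (N0 + k) - w (N0 + k)) := by
    have := le_ciSup hbdd (n - N0)
    simp only [show N0 + (n - N0) = n by omega] at this
    exact this
  have h2 : (⨆ k : ℕ, (u (N0 + k) - w (N0 + k))) ≤ u n + w n :=
    ciSup_le fun k => hall n (N0 + k) hn (by omega)
  rw [abs_le]; constructor <;> linarith

lemma rpow_telescope (n : ℕ) (hn : 1 ≤ n) : (n : ℝ) ^ (-(3 / 2) : ℝ) ≤
    4 * (n : ℝ) ^ (-(1 / 2) : ℝ) - 4 * ((n + 1 : ℕ) : ℝ) ^ (-(1 / 2) : ℝ) := by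
  have hn0 : (1 : ℝ) ≤ n := by exact_mod_cast hn
  set a := √(n : ℝ) with ha
  set b := √((n + 1 : ℕ) : ℝ) with hb
  have ha2 : a ^ 2 = n := Real.sq_sqrt (by positivity)
  have hb2 : b ^ 2 = n + 1 := by rw [hb, Real.sq_sqrt (by positivity)]; push_cast; ring
  have hap : 0 < a := by positivity
  have hbp : 0 < b := by positivity
  have e1 : (n : ℝ) ^ (-(1 / 2) : ℝ) = a⁻¹ := by
    rw [Real.rpow_neg (by positivity), ha, Real.sqrt_eq_rpow]
  have e2 : ((n + 1 : ℕ) : ℝ) ^ (-(1 / 2) : ℝ) = b⁻¹ := by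
    rw [Real.rpow_neg (by positivity), hb, Real.sqrt_eq_rpow]
  have e3 : (n : ℝ) ^ (-(3 / 2) : ℝ) = (a ^ 3)⁻¹ := by
    rw [Real.rpow_neg (by positivity), ha, Real.sqrt_eq_rpow, ← Real.rpow_natCast,
      ← Real.rpow_mul (by positivity)]
    norm_num
  rw [e1, e2, e3]
  have hab : a ≤ b := Real.sqrt_le_sqrt (by push_cast; linarith)
  have hb15 : b ≤ 3 / 2 * a := by
    nlinarith [mul_pos hap hbp]
  have : 4 * a⁻¹ - 4 * b⁻¹ = 4 * (b - a) / (a * b) := by field_simp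
  rw [this, inv_eq_one_div, div_le_div_iff₀ (by positivity) (by positivity)]
  have h1 : (b - a) * (b + a) = 1 := by ring_nf; linarith
  have h2 : b * (b + a) ≤ 4 * a ^ 2 := by nlinarith
  have h3 : (b + a) * (1 * (a * b)) ≤ (b + a) * (4 * (b - a) * a ^ 3) := by
    have : (b + a) * (4 * (b - a) * a ^ 3) = 4 * a ^ 3 := by linear_combination 4 * a ^ 3 * h1
    rw [this]; nlinarith
  exact le_of_mul_le_mul_left h3 (by positivity)

/-- Euler–Maclaurin to first order: `∑_{k ≤ y} (log k)^j / k = (log y)^{j+1}/(j+1) + γ + O(y^{-1/2})`,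
for real `y`. -/
lemma log_pow_sum_asymp (j : ℕ) : ∃ γ C : ℝ, 0 ≤ C ∧ ∀ y : ℝ, 1 ≤ y →
    |∑ k ∈ Ioc 0 ⌊y⌋₊, Real.log k ^ j / k - Real.log y ^ (j + 1) / (j + 1) - γ| ≤
      C * y ^ (-(1 / 2) : ℝ) := by
  set L : ℝ → ℝ := fun t => Real.log t ^ (j + 1) / (j + 1) with hL
  set g : ℝ → ℝ := fun t => Real.log t ^ j / t with hg
  have hLd : ∀ t : ℝ, 0 < t → HasDerivAt L (g t) t := by
    intro t ht
    have h1 := ((Real.hasDerivAt_log ht.ne').pow (j + 1)).div_const ((j : ℝ) + 1)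
    refine h1.congr_deriv ?_
    simp only [hg, Nat.add_sub_cancel]
    push_cast
    field_simp
  have hgd : ∀ t : ℝ, 0 < t → HasDerivAt g
      (((j : ℝ) * Real.log t ^ (j - 1) - Real.log t ^ j) / t ^ 2) t := by
    intro t ht
    have h1 := ((Real.hasDerivAt_log ht.ne').pow j).div (hasDerivAt_id t) ht.ne'
    refine h1.congr_deriv ?_
    simp only [id, Pi.pow_apply]
    field_simp
  set C1 : ℝ := j * ((j - 1).factorial * 2 ^ (j - 1)) + j.factorial * 2 ^ j with hC1
  have hC1n : 0 ≤ C1 := by positivity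
  have hlp : ∀ i : ℕ, ∀ t : ℝ, 1 ≤ t →
      Real.log t ^ i ≤ (i.factorial * 2 ^ i : ℝ) * t ^ (1 / 2 : ℝ) := by
    intro i t ht
    have := log_pow_le i 2 (by norm_num) ht
    exact_mod_cast this
  have hgb : ∀ t : ℝ, 1 ≤ t → |g t| ≤ C1 * t ^ (-(1 / 2) : ℝ) := by
    intro t ht
    have ht0 : 0 < t := by linarith
    have hl := Real.log_nonneg ht
    rw [abs_of_nonneg (by positivity)]
    have : t ^ (-(1 / 2) : ℝ) = t ^ (1 / 2 : ℝ) / t := by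
      rw [eq_div_iff ht0.ne', ← Real.rpow_add_one ht0.ne']; norm_num
    rw [this, ← mul_div_assoc]
    simp only [hg]
    gcongr
    refine (hlp j t ht).trans ?_
    have : 0 ≤ (j * ((j - 1).factorial * 2 ^ (j - 1)) : ℝ) := by positivity
    gcongr; linarith
  have hgd' : ∀ t : ℝ, 1 ≤ t →
      |((j : ℝ) * Real.log t ^ (j - 1) - Real.log t ^ j) / t ^ 2| ≤ C1 * t ^ (-(3 / 2) : ℝ) := by
    intro t ht
    have ht0 : 0 < t := by linarith
    have hl := Real.log_nonneg ht
    have : t ^ (-(3 / 2) : ℝ) = t ^ (1 / 2 : ℝ) / t ^ 2 := by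
      rw [eq_div_iff (by positivity), ← Real.rpow_natCast, ← Real.rpow_add ht0]; norm_num
    rw [this, ← mul_div_assoc, abs_div, abs_of_pos (by positivity : 0 < t ^ 2)]
    gcongr
    refine (abs_sub _ _).trans ?_
    rw [abs_of_nonneg (by positivity), abs_of_nonneg (by positivity), hC1, add_mul]
    apply add_le_add _ (hlp j t ht)
    rw [mul_assoc]
    gcongr
    exact hlp (j - 1) t ht
  set u : ℕ → ℝ := fun n => ∑ k ∈ Ioc 0 n, Real.log k ^ j / k - L n with hu
  obtain ⟨γ, hγ⟩ := exists_limit_of_increment u (fun n => C1 * (4 * (n : ℝ) ^ (-(1 / 2) : ℝ))) 1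
    (fun n _ => by positivity) (by
      intro n hn
      have hn0 : (1 : ℝ) ≤ n := by exact_mod_cast hn
      have hlt : (n : ℝ) < (n + 1 : ℕ) := by push_cast; linarith
      obtain ⟨ξ, hξ, hξe⟩ := exists_hasDerivAt_eq_slope L g hlt
        (fun t ht => (hLd t (by have := ht.1; linarith)).continuousAt.continuousWithinAt)
        (fun t ht => hLd t (by have := ht.1; linarith))
      obtain ⟨ζ, hζ, hζe⟩ := exists_hasDerivAt_eq_slope g _ hξ.2
        (fun t ht => (hgd t (by have := ht.1; have := hξ.1; linarith)).continuousAt.continuousWithinAt)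
        (fun t ht => hgd t (by have := ht.1; have := hξ.1; linarith))
      have hd : u (n + 1) - u n = g ((n + 1 : ℕ) : ℝ) - g ξ := by
        have h1 : u (n + 1) - u n = g ((n + 1 : ℕ) : ℝ) - (L ((n + 1 : ℕ) : ℝ) - L n) := by
          simp only [hu]
          rw [← Finset.insert_Ioc_right_eq_Ioc_add_one (Nat.zero_le n), sum_insert (by simp)]
          simp only [hg]; ring
        rw [h1, hξe]; push_cast; ring
      have h2 : g ((n + 1 : ℕ) : ℝ) - g ξ =
          ((j : ℝ) * Real.log ζ ^ (j - 1) - Real.log ζ ^ j) / ζ ^ 2 * ((n + 1 : ℕ) - ξ) := by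
        rw [hζe, div_mul_cancel₀]
        have := hξ.2; intro h; linarith
      have hζ1 : (n : ℝ) ≤ ζ := by have := hζ.1; have := hξ.1; linarith
      rw [hd, h2, abs_mul]
      have h3 : |((n + 1 : ℕ) : ℝ) - ξ| ≤ 1 := by
        have := hξ.1; have := hξ.2
        rw [abs_of_nonneg (by linarith)]; push_cast; linarith
      have h4 := hgd' ζ (by linarith)
      have h5 : ζ ^ (-(3 / 2) : ℝ) ≤ (n : ℝ) ^ (-(3 / 2) : ℝ) :=
        Real.rpow_le_rpow_of_nonpos (by linarith) hζ1 (by norm_num)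
      calc _ ≤ (C1 * ζ ^ (-(3 / 2) : ℝ)) * 1 :=
            mul_le_mul h4 h3 (abs_nonneg _) ((abs_nonneg _).trans h4)
        _ ≤ C1 * (n : ℝ) ^ (-(3 / 2) : ℝ) := by rw [mul_one]; gcongr
        _ ≤ C1 * (4 * (n : ℝ) ^ (-(1 / 2) : ℝ) - 4 * ((n + 1 : ℕ) : ℝ) ^ (-(1 / 2) : ℝ)) := by
            gcongr; exact rpow_telescope n hn
        _ = _ := by ring)
  refine ⟨γ, C1 * 10, by positivity, fun y hy => ?_⟩
  set n := ⌊y⌋₊ with hn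
  have hn1 : 1 ≤ n := Nat.le_floor (by simpa using hy)
  have hn0 : (1 : ℝ) ≤ n := by exact_mod_cast hn1
  have hny : (n : ℝ) ≤ y := Nat.floor_le (by linarith)
  have hyn : y < n + 1 := Nat.lt_floor_add_one y
  have hyr : (n : ℝ) ^ (-(1 / 2) : ℝ) ≤ 2 * y ^ (-(1 / 2) : ℝ) := by
    have h2n : y ≤ 4 * n := by linarith
    have h1 := Real.rpow_le_rpow_of_nonpos (by linarith) h2n (by norm_num : (-(1 / 2) : ℝ) ≤ 0)
    rw [Real.mul_rpow (by norm_num) (by linarith)] at h1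
    have h4 : (4 : ℝ) ^ (-(1 / 2) : ℝ) = 1 / 2 := by
      rw [show (4 : ℝ) = 2 ^ (2 : ℝ) by norm_num, ← Real.rpow_mul (by norm_num)]
      norm_num [Real.rpow_neg_one]
    rw [h4] at h1; linarith
  have hLdiff : |L y - L n| ≤ C1 * (n : ℝ) ^ (-(1 / 2) : ℝ) := by
    rcases hny.eq_or_lt with heq | hlt
    · rw [heq]; simp only [sub_self, abs_zero]; positivity
    obtain ⟨ξ, hξ, hξe⟩ := exists_hasDerivAt_eq_slope L g hlt
        (fun t ht => (hLd t (by have := ht.1; linarith)).continuousAt.continuousWithinAt)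
        (fun t ht => hLd t (by have := ht.1; linarith))
    have h1 : L y - L n = g ξ * (y - n) := by
      rw [hξe, div_mul_cancel₀]; intro h; linarith
    rw [h1, abs_mul]
    have h2 := hgb ξ (by have := hξ.1; linarith)
    have h3 : |y - n| ≤ 1 := by rw [abs_of_nonneg (by linarith)]; linarith
    have h5 : ξ ^ (-(1 / 2) : ℝ) ≤ (n : ℝ) ^ (-(1 / 2) : ℝ) :=
        Real.rpow_le_rpow_of_nonpos (by linarith) hξ.1.le (by norm_num)
    calc _ ≤ (C1 * ξ ^ (-(1 / 2) : ℝ)) * 1 :=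
            mul_le_mul h2 h3 (abs_nonneg _) ((abs_nonneg _).trans h2)
        _ ≤ C1 * (n : ℝ) ^ (-(1 / 2) : ℝ) := by rw [mul_one]; gcongr
  have h1 := hγ n hn1
  have h2 : ∑ k ∈ Ioc 0 n, Real.log k ^ j / k - Real.log y ^ (j + 1) / (j + 1) - γ =
      (u n - γ) - (L y - L n) := by simp only [hu, hL]; ring
  rw [h2]
  refine (abs_sub _ _).trans ?_
  nlinarith

/-! ### Mertens-type estimates for the von Mangoldt function -/

open ArithmeticFunction in
/-- The identity `∑_{d ∣ n} Λ(d) = log n`, summed against `W(n) / n`. -/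
lemma sum_mangoldt_conv (W : ℕ → ℝ) (N : ℕ) :
    ∑ k ∈ Ioc 0 N, (∑ m ∈ Ioc 0 (N / k), Λ m / m * W (k * m)) / k =
      ∑ n ∈ Ioc 0 N, Real.log n / n * W n := by
  have h1 : ∀ k ∈ Ioc 0 N, (∑ m ∈ Ioc 0 (N / k), Λ m / m * W (k * m)) / k =
      ∑ m ∈ Ioc 0 (N / k), Λ m * (W (k * m) / (k * m : ℕ)) := by
    intro k _
    rw [sum_div]
    apply sum_congr rfl; intro m _
    push_cast; ring
  rw [sum_congr rfl h1, sum_hyperbola (fun k m => Λ m * (W (k * m) / (k * m : ℕ)))]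
  apply sum_congr rfl
  intro n hn
  have h2 : ∀ x ∈ n.divisorsAntidiagonal, Λ x.2 * (W (x.1 * x.2) / (x.1 * x.2 : ℕ)) =
      Λ x.2 * (W n / n) := by
    intro x hx
    rw [(Nat.mem_divisorsAntidiagonal.mp hx).1]
  rw [sum_congr rfl h2, ← sum_mul, Nat.sum_divisorsAntidiagonal' (fun _ m => Λ m), vonMangoldt_sum]
  ring

lemma log_sq_rpow_le {y : ℝ} (hy : 1 ≤ y) :
    (1 + Real.log y + Real.log y ^ 2) * y ^ (-(1 / 2) : ℝ) ≤ 40 * y ^ (-(1 / 4) : ℝ) := by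
  have hy0 : 0 < y := by linarith
  have h1 := log_pow_le 1 4 (by norm_num) hy
  have h2 := log_pow_le 2 4 (by norm_num) hy
  have h0 := log_pow_le 0 4 (by norm_num) hy
  norm_num [Nat.factorial] at h0 h1 h2
  have h3 : 1 + Real.log y + Real.log y ^ 2 ≤ 40 * y ^ (1 / 4 : ℝ) := by linarith
  calc _ ≤ (40 * y ^ (1 / 4 : ℝ)) * y ^ (-(1 / 2) : ℝ) := by gcongr
    _ = 40 * (y ^ (1 / 4 : ℝ) * y ^ (-(1 / 2) : ℝ)) := by ring
    _ = _ := by rw [← Real.rpow_add hy0]; norm_num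

open ArithmeticFunction in
/-- Mertens-type estimates for `Λ`: `∑_{m ≤ x} Λ(m)/m = log x - γ₀ + O(1)` and
`∑_{m ≤ x} Λ(m)/m · log (x/m) = (log x)²/2 - γ₀ log x + O(1)`. -/
lemma mangoldt_asymp : ∃ γ C : ℝ, ∀ x : ℕ, 1 ≤ x →
    |∑ m ∈ Ioc 0 x, Λ m / m - Real.log x + γ| ≤ C ∧
    |∑ m ∈ Ioc 0 x, Λ m / m * Real.log (x / m) - Real.log x ^ 2 / 2 + γ * Real.log x| ≤ C := by
  obtain ⟨g0, C0, hC0, h0⟩ := log_pow_sum_asymp 0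
  obtain ⟨g1, C1, hC1, h1⟩ := log_pow_sum_asymp 1
  obtain ⟨g2, C2, hC2, h2⟩ := log_pow_sum_asymp 2
  set c0 : ℝ := -2 * g1 - g0 ^ 2 with hc0
  -- the sums over `k` of `(log k)^j / k` against powers of `log (y/k)`
  have hlogdiv : ∀ y : ℝ, 1 ≤ y → ∀ k ∈ Ioc 0 ⌊y⌋₊, Real.log (y / k) = Real.log y - Real.log k := by
    intro y hy k hk
    simp only [mem_Ioc] at hk
    exact Real.log_div (by linarith) (by have := hk.1; positivity)
  have hconv : ∀ (y : ℝ) (W : ℝ → ℝ),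
      ∑ k ∈ Ioc 0 ⌊y⌋₊, (∑ m ∈ Ioc 0 ⌊y / k⌋₊, Λ m / m * W (y / k / m)) / k =
      ∑ n ∈ Ioc 0 ⌊y⌋₊, Real.log n / n * W (y / n) := by
    intro y W
    rw [← sum_mangoldt_conv (fun n => W (y / n))]
    apply sum_congr rfl; intro k _
    rw [Nat.floor_div_natCast]
    congr 1
    apply sum_congr rfl; intro m _
    rw [div_div]; push_cast; rfl
  set G1 : ℝ → ℝ := fun y => ∑ m ∈ Ioc 0 ⌊y⌋₊, Λ m / m - Real.log y + g0 with hG1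
  set G2 : ℝ → ℝ := fun y => ∑ m ∈ Ioc 0 ⌊y⌋₊, Λ m / m * Real.log (y / m) -
    Real.log y ^ 2 / 2 + g0 * Real.log y + c0 with hG2
  have hF1 : ∀ y : ℝ, 1 ≤ y → |∑ k ∈ Ioc 0 ⌊y⌋₊, G1 (y / k) / k - (2 * g1 + g0 ^ 2)| ≤
      (40 * (2 * C1 + C0 + |g0| * C0)) * y ^ (-(1 / 4) : ℝ) := by
    intro y hy
    have hS : ∑ k ∈ Ioc 0 ⌊y⌋₊, G1 (y / k) / k =
        2 * (∑ k ∈ Ioc 0 ⌊y⌋₊, Real.log k ^ 1 / k) -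
        (Real.log y - g0) * ∑ k ∈ Ioc 0 ⌊y⌋₊, Real.log k ^ 0 / k := by
      have e1 := hconv y (fun _ => 1)
      simp only [mul_one] at e1
      have e2 : ∑ k ∈ Ioc 0 ⌊y⌋₊, G1 (y / k) / k =
          ∑ k ∈ Ioc 0 ⌊y⌋₊, (∑ m ∈ Ioc 0 ⌊y / k⌋₊, Λ m / m) / k +
          (∑ k ∈ Ioc 0 ⌊y⌋₊, Real.log k ^ 1 / k -
          (Real.log y - g0) * ∑ k ∈ Ioc 0 ⌊y⌋₊, Real.log k ^ 0 / k) := by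
        rw [mul_sum, ← sum_sub_distrib, ← sum_add_distrib]
        apply sum_congr rfl; intro k hk
        simp only [hG1, hlogdiv y hy k hk]
        ring
      rw [e2, e1]
      simp only [pow_one]; ring
    have a0 := h0 y hy
    have a1 := h1 y hy
    set l := Real.log y with hl
    have hl0 : 0 ≤ l := Real.log_nonneg hy
    set q := y ^ (-(1 / 2) : ℝ) with hq
    have hq0 : 0 ≤ q := by positivity
    set S0 := ∑ k ∈ Ioc 0 ⌊y⌋₊, Real.log k ^ 0 / (k : ℝ)
    set S1 := ∑ k ∈ Ioc 0 ⌊y⌋₊, Real.log k ^ 1 / (k : ℝ)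
    rw [hS]
    norm_num at a0 a1
    have e : 2 * S1 - (l - g0) * S0 - (2 * g1 + g0 ^ 2) =
        2 * (S1 - l ^ 2 / 2 - g1) + (-(l * (S0 - l - g0)) + g0 * (S0 - l - g0)) := by ring
    have hlog := log_sq_rpow_le hy
    rw [← hl, ← hq] at hlog
    rw [e]
    calc _ ≤ 2 * (C1 * q) + (l * (C0 * q) + |g0| * (C0 * q)) := by
          refine (abs_add_le _ _).trans (add_le_add ?_ ((abs_add_le _ _).trans (add_le_add ?_ ?_)))
          · rw [abs_mul, abs_two]; gcongr
          · rw [abs_neg, abs_mul, abs_of_nonneg hl0]; gcongr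
          · rw [abs_mul]; gcongr
      _ ≤ (2 * C1 + C0 + |g0| * C0) * ((1 + l + l ^ 2) * q) := by
          have k1 : 0 ≤ C1 * q := by positivity
          have k2 : 0 ≤ C0 * q := by positivity
          have k3 : 0 ≤ |g0| * (C0 * q) := by positivity
          nlinarith [mul_nonneg k1 hl0, mul_nonneg k2 hl0, mul_nonneg k3 hl0,
            mul_nonneg k1 (sq_nonneg l), mul_nonneg k2 (sq_nonneg l), mul_nonneg k3 (sq_nonneg l)]
      _ ≤ (2 * C1 + C0 + |g0| * C0) * (40 * y ^ (-(1 / 4) : ℝ)) := by gcongr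
      _ = _ := by ring
  have hF2 : ∀ y : ℝ, 1 ≤ y → |∑ k ∈ Ioc 0 ⌊y⌋₊, G2 (y / k) / k -
        (-(3 / 2) * g2 - g0 * g1 + c0 * g0)| ≤
      (40 * (2 * C1 + 3 / 2 * C2 + C0 + |g0| * C0 + |g0| * C1 + |c0| * C0)) *
        y ^ (-(1 / 4) : ℝ) := by
    intro y hy
    have hS : ∑ k ∈ Ioc 0 ⌊y⌋₊, G2 (y / k) / k =
        (2 * Real.log y - g0) * (∑ k ∈ Ioc 0 ⌊y⌋₊, Real.log k ^ 1 / k)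
        - 3 / 2 * (∑ k ∈ Ioc 0 ⌊y⌋₊, Real.log k ^ 2 / k)
        + (-(1 / 2) * Real.log y ^ 2 + g0 * Real.log y + c0) *
          ∑ k ∈ Ioc 0 ⌊y⌋₊, Real.log k ^ 0 / k := by
      have e1 := hconv y Real.log
      have e1' : ∑ n ∈ Ioc 0 ⌊y⌋₊, Real.log n / n * Real.log (y / n) =
          Real.log y * (∑ k ∈ Ioc 0 ⌊y⌋₊, Real.log k ^ 1 / k)
          - ∑ k ∈ Ioc 0 ⌊y⌋₊, Real.log k ^ 2 / k := by
        rw [mul_sum, ← sum_sub_distrib]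
        apply sum_congr rfl; intro k hk
        rw [hlogdiv y hy k hk]; ring
      have e2 : ∑ k ∈ Ioc 0 ⌊y⌋₊, G2 (y / k) / k =
          ∑ k ∈ Ioc 0 ⌊y⌋₊, (∑ m ∈ Ioc 0 ⌊y / k⌋₊, Λ m / m * Real.log (y / k / m)) / k +
          ((Real.log y - g0) * (∑ k ∈ Ioc 0 ⌊y⌋₊, Real.log k ^ 1 / k)
          - 1 / 2 * (∑ k ∈ Ioc 0 ⌊y⌋₊, Real.log k ^ 2 / k) +
          (-(1 / 2) * Real.log y ^ 2 + g0 * Real.log y + c0) *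
          ∑ k ∈ Ioc 0 ⌊y⌋₊, Real.log k ^ 0 / k) := by
        rw [mul_sum, mul_sum, mul_sum, ← sum_sub_distrib, ← sum_add_distrib, ← sum_add_distrib]
        apply sum_congr rfl; intro k hk
        simp only [hG2, hlogdiv y hy k hk]
        ring
      rw [e2, e1, e1']
      ring
    have a0 := h0 y hy
    have a1 := h1 y hy
    have a2 := h2 y hy
    set l := Real.log y with hl
    have hl0 : 0 ≤ l := Real.log_nonneg hy
    set q := y ^ (-(1 / 2) : ℝ) with hq
    have hq0 : 0 ≤ q := by positivity
    set S0 := ∑ k ∈ Ioc 0 ⌊y⌋₊, Real.log k ^ 0 / (k : ℝ)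
    set S1 := ∑ k ∈ Ioc 0 ⌊y⌋₊, Real.log k ^ 1 / (k : ℝ)
    set S2 := ∑ k ∈ Ioc 0 ⌊y⌋₊, Real.log k ^ 2 / (k : ℝ)
    rw [hS]
    norm_num at a0 a1 a2
    have e : (2 * l - g0) * S1 - 3 / 2 * S2 + (-(1 / 2) * l ^ 2 + g0 * l + c0) * S0 -
          (-(3 / 2) * g2 - g0 * g1 + c0 * g0) =
        2 * (l * (S1 - l ^ 2 / 2 - g1)) + (-(g0 * (S1 - l ^ 2 / 2 - g1)) +
        (-(3 / 2 * (S2 - l ^ 3 / 3 - g2)) + (-(1 / 2 * (l ^ 2 * (S0 - l - g0))) +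
          (g0 * (l * (S0 - l - g0)) + c0 * (S0 - l - g0))))) := by
      rw [hc0]; ring
    have hlog := log_sq_rpow_le hy
    rw [← hl, ← hq] at hlog
    rw [e]
    calc _ ≤ 2 * (l * (C1 * q)) + (|g0| * (C1 * q) + (3 / 2 * (C2 * q) +
          (1 / 2 * (l ^ 2 * (C0 * q)) + (|g0| * (l * (C0 * q)) + |c0| * (C0 * q))))) := by
          refine (abs_add_le _ _).trans (add_le_add ?_ ((abs_add_le _ _).trans (add_le_add ?_
            ((abs_add_le _ _).trans (add_le_add ?_ ((abs_add_le _ _).trans (add_le_add ?_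
            ((abs_add_le _ _).trans (add_le_add ?_ ?_)))))))))
          · rw [abs_mul, abs_two, abs_mul, abs_of_nonneg hl0]; gcongr
          · rw [abs_neg, abs_mul]; gcongr
          · rw [abs_neg, abs_mul, abs_of_pos (by norm_num : (0 : ℝ) < 3 / 2)]; gcongr
          · rw [abs_neg, abs_mul, abs_of_pos (by norm_num : (0 : ℝ) < 1 / 2), abs_mul,
              abs_of_nonneg (sq_nonneg l)]; gcongr
          · rw [abs_mul, abs_mul, abs_of_nonneg hl0]; gcongr
          · rw [abs_mul]; gcongr
      _ ≤ (2 * C1 + 3 / 2 * C2 + C0 + |g0| * C0 + |g0| * C1 + |c0| * C0) *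
            ((1 + l + l ^ 2) * q) := by
          have k1 : 0 ≤ C1 * q := by positivity
          have k2 : 0 ≤ C0 * q := by positivity
          have k3 : 0 ≤ |g0| * (C0 * q) := by positivity
          have k4 : 0 ≤ |c0| * (C0 * q) := by positivity
          have k5 : 0 ≤ |g0| * (C1 * q) := by positivity
          have k6 : 0 ≤ C2 * q := by positivity
          nlinarith [mul_nonneg k1 hl0, mul_nonneg k2 hl0, mul_nonneg k3 hl0,
            mul_nonneg k1 (sq_nonneg l), mul_nonneg k2 (sq_nonneg l), mul_nonneg k3 (sq_nonneg l),
            mul_nonneg k4 hl0, mul_nonneg k5 hl0, mul_nonneg k6 hl0,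
            mul_nonneg k4 (sq_nonneg l), mul_nonneg k5 (sq_nonneg l), mul_nonneg k6 (sq_nonneg l)]
      _ ≤ (2 * C1 + 3 / 2 * C2 + C0 + |g0| * C0 + |g0| * C1 + |c0| * C0) *
            (40 * y ^ (-(1 / 4) : ℝ)) := by gcongr
      _ = _ := by ring
  refine ⟨g0, max (|2 * g1 + g0 ^ 2| + 4 * (40 * (2 * C1 + C0 + |g0| * C0)))
    (|(-(3 / 2) * g2 - g0 * g1 + c0 * g0)| +
      4 * (40 * (2 * C1 + 3 / 2 * C2 + C0 + |g0| * C0 + |g0| * C1 + |c0| * C0)) + |c0|),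
    fun x hx => ⟨?_, ?_⟩⟩
  · refine le_trans ?_ (le_max_left _ _)
    have := bounded_of_sum_div G1 _ _ hF1 x hx
    simpa only [hG1, Nat.floor_natCast] using this
  · refine le_trans ?_ (le_max_right _ _)
    have := bounded_of_sum_div G2 _ _ hF2 x hx
    simp only [hG2, Nat.floor_natCast] at this
    have h3 := abs_sub (∑ m ∈ Ioc 0 x, Λ m / (m : ℝ) * Real.log ((x : ℝ) / m) -
        Real.log x ^ 2 / 2 + g0 * Real.log x + c0) c0
    rw [add_sub_cancel_right] at h3
    linarith

/-! ### Mertens estimates over primes -/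

open ArithmeticFunction in
/-- Proper prime powers contribute a convergent amount to `∑ Λ(n) log n / n`; this follows from
`ψ x - θ x = O(√x)` by summation by parts. -/
lemma summable_nonprime :
    Summable (fun n : ℕ => (if n.Prime then 0 else Λ n / n) * Real.log n) := by
  obtain ⟨C, hC⟩ := Chebyshev.psi_sub_theta_le_mul_sqrt
  set a : ℕ → ℝ := fun n => if n.Prime then 0 else Λ n with ha
  have ha0 : ∀ n, 0 ≤ a n := by
    intro n; simp only [ha]; split_ifs
    · exact le_rfl
    · exact vonMangoldt_nonneg
  set P : ℕ → ℝ := fun n => ∑ k ∈ Ioc 0 n, a k with hP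
  have hPC : ∀ n, P n ≤ C * √n := by
    intro n
    have h := hC n
    rw [Chebyshev.psi_sub_theta_eq_sum_not_prime, Nat.floor_natCast, sum_filter] at h
    refine le_trans (le_of_eq ?_) h
    apply sum_congr rfl; intro k _; simp only [ha]; split_ifs <;> simp_all
  have hP0 : ∀ n, 0 ≤ P n := fun n => sum_nonneg fun k _ => ha0 k
  have hC0 : 0 ≤ C := by have := (hP0 1).trans (hPC 1); simpa using this
  have hparts : ∀ N : ℕ, ∑ k ∈ Ioc 0 N, a k * (k : ℝ) ^ (-(3 / 4) : ℝ) =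
      P N * ((N + 1 : ℕ) : ℝ) ^ (-(3 / 4) : ℝ) +
      ∑ k ∈ Ioc 0 N, P k * ((k : ℝ) ^ (-(3 / 4) : ℝ) - ((k + 1 : ℕ) : ℝ) ^ (-(3 / 4) : ℝ)) := by
    intro N
    induction N with
    | zero => simp [hP]
    | succ N ih =>
      have hPs : P (N + 1) = a (N + 1) + P N := by
        simp only [hP]
        rw [← Finset.insert_Ioc_right_eq_Ioc_add_one (Nat.zero_le N), sum_insert (by simp)]
      rw [← Finset.insert_Ioc_right_eq_Ioc_add_one (Nat.zero_le N), sum_insert (by simp),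
        sum_insert (by simp), ih, hPs]
      ring
  have hsum : Summable (fun k : ℕ => (k : ℝ) ^ (-(5 / 4) : ℝ)) :=
    Real.summable_nat_rpow.mpr (by norm_num)
  have hterm : ∀ k : ℕ, 1 ≤ k →
      P k * ((k : ℝ) ^ (-(3 / 4) : ℝ) - ((k + 1 : ℕ) : ℝ) ^ (-(3 / 4) : ℝ)) ≤
        C * (k : ℝ) ^ (-(5 / 4) : ℝ) := by
    intro k hk
    have hk1 : (1 : ℝ) ≤ k := by exact_mod_cast hk
    have hk0 : (0 : ℝ) < k := by linarith
    have h1 : (k : ℝ) ^ (-(3 / 4) : ℝ) - ((k + 1 : ℕ) : ℝ) ^ (-(3 / 4) : ℝ) ≤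
        (k : ℝ) ^ (-(7 / 4) : ℝ) := by
      have e1 : ((k + 1 : ℕ) : ℝ) = k * (1 + 1 / k) := by push_cast; field_simp
      rw [e1, Real.mul_rpow hk0.le (by positivity)]
      have e2 : (k : ℝ) ^ (-(7 / 4) : ℝ) = (k : ℝ) ^ (-(3 / 4) : ℝ) * (1 / k) := by
        rw [show (-(7 / 4) : ℝ) = -(3 / 4) - 1 by norm_num, Real.rpow_sub_one hk0.ne']; ring
      rw [e2]
      have h2 : 1 - 1 / (k : ℝ) ≤ (1 + 1 / (k : ℝ)) ^ (-(3 / 4) : ℝ) := by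
        calc 1 - 1 / (k : ℝ) ≤ (1 + 1 / (k : ℝ)) ^ (-1 : ℝ) := by
              rw [Real.rpow_neg_one, inv_eq_one_div, le_div_iff₀ (by positivity)]
              have : 0 < 1 / (k : ℝ) := by positivity
              nlinarith
          _ ≤ _ := Real.rpow_le_rpow_of_exponent_le (by
              have : 0 < 1 / (k : ℝ) := by positivity
              linarith) (by norm_num)
      have h3 : 0 < (k : ℝ) ^ (-(3 / 4) : ℝ) := by positivity
      nlinarith
    calc _ ≤ P k * (k : ℝ) ^ (-(7 / 4) : ℝ) := by gcongr
      _ ≤ (C * √k) * (k : ℝ) ^ (-(7 / 4) : ℝ) := by gcongr; exact hPC k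
      _ = _ := by
        rw [mul_assoc, Real.sqrt_eq_rpow, ← Real.rpow_add hk0]; norm_num
  have hbound : ∀ N : ℕ, ∑ k ∈ Ioc 0 N, a k * (k : ℝ) ^ (-(3 / 4) : ℝ) ≤
      C + C * ∑' k : ℕ, (k : ℝ) ^ (-(5 / 4) : ℝ) := by
    intro N
    rw [hparts]
    apply add_le_add
    · have hN1 : (1 : ℝ) ≤ (N + 1 : ℕ) := by push_cast; linarith [(Nat.cast_nonneg N : (0 : ℝ) ≤ N)]
      calc _ ≤ (C * √((N + 1 : ℕ) : ℝ)) * ((N + 1 : ℕ) : ℝ) ^ (-(3 / 4) : ℝ) := by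
            gcongr
            refine (hPC N).trans ?_
            gcongr
            simp
        _ = C * ((N + 1 : ℕ) : ℝ) ^ (-(1 / 4) : ℝ) := by
            rw [mul_assoc, Real.sqrt_eq_rpow, ← Real.rpow_add (by linarith)]; norm_num
        _ ≤ C * 1 := by
            gcongr; exact Real.rpow_le_one_of_one_le_of_nonpos hN1 (by norm_num)
        _ = C := mul_one C
    · rw [← tsum_mul_left]
      refine (sum_le_sum fun k hk => hterm k (by simp at hk; omega)).trans ?_
      exact (hsum.mul_left C).sum_le_tsum _ (fun k _ => by positivity)
  have hs : Summable (fun n : ℕ => a n * (n : ℝ) ^ (-(3 / 4) : ℝ)) := by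
    refine summable_of_sum_range_le (c := C + C * ∑' k : ℕ, (k : ℝ) ^ (-(5 / 4) : ℝ))
      (fun n => mul_nonneg (ha0 n) (by positivity)) (fun N => ?_)
    refine le_trans (le_trans ?_ (hbound N)) le_rfl
    have h0 : a 0 = 0 := by simp [ha]
    have : ∑ k ∈ range (N + 1), a k * (k : ℝ) ^ (-(3 / 4) : ℝ) =
        ∑ k ∈ Ioc 0 N, a k * (k : ℝ) ^ (-(3 / 4) : ℝ) := by
      symm
      apply sum_subset
      · intro k hk; simp at hk ⊢; omega
      · intro k hk hk2
        have : k = 0 := by simp at hk hk2; omega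
        rw [this, h0, zero_mul]
    rw [← this, sum_range_succ]
    have := mul_nonneg (ha0 N) (by positivity : 0 ≤ (N : ℝ) ^ (-(3 / 4) : ℝ))
    linarith
  refine Summable.of_nonneg_of_le (fun n => ?_) (fun n => ?_) (hs.mul_left 4)
  · apply mul_nonneg _ (Real.log_natCast_nonneg n)
    split_ifs
    · exact le_rfl
    · exact div_nonneg vonMangoldt_nonneg (Nat.cast_nonneg n)
  · rcases Nat.eq_zero_or_pos n with rfl | hn
    · simp [ha]
    have hn1 : (1 : ℝ) ≤ n := by exact_mod_cast hn
    have hn0 : (0 : ℝ) < n := by linarith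
    have h1 := log_pow_le 1 4 (by norm_num) hn1
    norm_num at h1
    have h2 : Real.log n / n ≤ 4 * (n : ℝ) ^ (-(3 / 4) : ℝ) := by
      rw [div_le_iff₀ hn0, mul_assoc, ← Real.rpow_add_one hn0.ne']
      norm_num; exact h1
    have e : (if n.Prime then 0 else Λ n / n) * Real.log n = a n * (Real.log n / n) := by
      simp only [ha]; split_ifs
      · simp
      · ring
    rw [e]
    have := mul_le_mul_of_nonneg_left h2 (ha0 n)
    linarith

/-- The weight `log p / p` on primes, zero elsewhere. -/
def primeWt (n : ℕ) : ℝ := if n.Prime then Real.log n / n else 0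

/-- `A(z) = ∑_{p < z} log p / p`. -/
def primeSum (z : ℕ) : ℝ := ∑ n ∈ range z, primeWt n

lemma primeWt_nonneg (n : ℕ) : 0 ≤ primeWt n := by
  unfold primeWt; split_ifs
  · exact div_nonneg (Real.log_natCast_nonneg n) (Nat.cast_nonneg n)
  · exact le_rfl

open ArithmeticFunction in
/-- Mertens' first theorem, together with its mean: `∑_{p<z} (log p / p) log (z/p)` is
`(log z)²/2 + E log z + O(1)`, written in terms of `∑_{p<z} (log p)²/p`. -/
lemma prime_mertens : ∃ E C : ℝ, ∀ z : ℕ, 1 ≤ z →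
    |primeSum z - Real.log z| ≤ C ∧
    |∑ n ∈ range z, primeWt n * Real.log n -
      (Real.log z * primeSum z - Real.log z ^ 2 / 2 - E * Real.log z)| ≤ C := by
  obtain ⟨γ, C, hC⟩ := mangoldt_asymp
  set b : ℕ → ℝ := fun n => if n.Prime then 0 else Λ n / n with hb
  have hb0 : ∀ n, 0 ≤ b n := by
    intro n; simp only [hb]; split_ifs
    · exact le_rfl
    · exact div_nonneg vonMangoldt_nonneg (Nat.cast_nonneg n)
  have hs : Summable (fun n => b n * Real.log n) := summable_nonprime
  have hsb : Summable b := by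
    refine Summable.of_nonneg_of_le hb0 (fun n => ?_) (hs.mul_left 2)
    by_cases hn : n < 2
    · have : b n = 0 := by
        simp only [hb]; interval_cases n <;> simp
      rw [this]; simp
    · have h2 : Real.log 2 ≤ Real.log n := Real.log_le_log (by norm_num) (by exact_mod_cast (by omega))
      have := Real.log_two_gt_d9
      nlinarith [hb0 n]
  set T := ∑' n, b n with hT
  set M := ∑' n, b n * Real.log n with hM
  have hM0 : 0 ≤ M := tsum_nonneg fun n => mul_nonneg (hb0 n) (Real.log_natCast_nonneg n)
  have hT0 : 0 ≤ T := tsum_nonneg hb0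
  have hΛ : ∀ n, Λ n / n = primeWt n + b n := by
    intro n; simp only [hb, primeWt]; split_ifs with h
    · rw [vonMangoldt_apply_prime h]; ring
    · ring
  have hrange : ∀ (f : ℕ → ℝ) (z : ℕ), f 0 = 0 → ∑ k ∈ Ioc 0 z, f k = ∑ k ∈ range z, f k + f z := by
    intro f z h0
    rw [← sum_range_succ]
    apply sum_subset
    · intro k hk; simp at hk ⊢; omega
    · intro k hk hk2
      have : k = 0 := by simp at hk hk2; omega
      rw [this, h0]
  have hw0 : primeWt 0 = 0 := by simp [primeWt]
  have hbz : b 0 = 0 := by simp [hb]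
  refine ⟨-γ - T, |γ| + C + T + 1 + 2 * M, fun z hz => ?_⟩
  obtain ⟨h1, h2⟩ := hC z hz
  have hz1 : (1 : ℝ) ≤ z := by exact_mod_cast hz
  have hl0 : 0 ≤ Real.log z := Real.log_nonneg hz1
  have hbs : ∑ m ∈ Ioc 0 z, b m ≤ T := hsb.sum_le_tsum _ (fun k _ => hb0 k)
  have hbs0 : 0 ≤ ∑ m ∈ Ioc 0 z, b m := sum_nonneg fun k _ => hb0 k
  have hbl : ∑ m ∈ Ioc 0 z, b m * Real.log m ≤ M :=
    hs.sum_le_tsum _ (fun k _ => mul_nonneg (hb0 k) (Real.log_natCast_nonneg k))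
  have hbl0 : 0 ≤ ∑ m ∈ Ioc 0 z, b m * Real.log m :=
    sum_nonneg fun k _ => mul_nonneg (hb0 k) (Real.log_natCast_nonneg k)
  have hwz : primeWt z ≤ 1 := by
    unfold primeWt; split_ifs
    · rw [div_le_one (by linarith)]
      linarith [Real.log_le_sub_one_of_pos (by linarith : (0 : ℝ) < z)]
    · norm_num
  -- the tail `log z * ∑_{m > z} b m` is bounded by `M`
  have htail : Real.log z * (T - ∑ m ∈ Ioc 0 z, b m) ≤ M := by
    have e1 : T - ∑ m ∈ Ioc 0 z, b m = ∑' n, if n ∈ Ioc 0 z then 0 else b n := by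
      have h3 := (hasSum_sum_of_ne_finset_zero (f := fun n => if n ∈ Ioc 0 z then b n else 0)
        (s := Ioc 0 z) (L := SummationFilter.unconditional ℕ) (by intro n hn; simp [hn]))
      have h4 := hsb.hasSum.sub h3
      have h5 : ∑ n ∈ Ioc 0 z, (if n ∈ Ioc 0 z then b n else 0) = ∑ n ∈ Ioc 0 z, b n :=
        sum_congr rfl fun n hn => by simp [hn]
      rw [h5] at h4
      rw [← h4.tsum_eq]
      apply tsum_congr; intro n; split_ifs <;> simp
    have hs' : Summable (fun n => if n ∈ Ioc 0 z then 0 else b n) := by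
      refine Summable.of_nonneg_of_le (fun n => ?_) (fun n => ?_) hsb
      · split_ifs <;> simp [hb0]
      · split_ifs <;> simp [hb0]
    rw [e1, ← tsum_mul_left]
    refine Summable.tsum_le_tsum (fun n => ?_) (hs'.mul_left _) hs
    split_ifs with h
    · rw [mul_zero]; exact mul_nonneg (hb0 n) (Real.log_natCast_nonneg n)
    · rcases Nat.eq_zero_or_pos n with rfl | hn
      · simp [hbz]
      · have : z < n := by simp at h; omega
        have := Real.log_le_log (by linarith) (by exact_mod_cast this.le : (z : ℝ) ≤ n)
        nlinarith [hb0 n]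
  have htail0 : 0 ≤ Real.log z * (T - ∑ m ∈ Ioc 0 z, b m) := mul_nonneg hl0 (by linarith)
  have hA : ∑ m ∈ Ioc 0 z, Λ m / m = primeSum z + primeWt z + ∑ m ∈ Ioc 0 z, b m := by
    rw [primeSum, ← hrange _ z hw0, ← sum_add_distrib]
    exact sum_congr rfl fun n _ => hΛ n
  have hB : ∑ m ∈ Ioc 0 z, Λ m / m * Real.log (z / m) =
      Real.log z * primeSum z - ∑ n ∈ range z, primeWt n * Real.log n +
      (Real.log z * ∑ m ∈ Ioc 0 z, b m - ∑ m ∈ Ioc 0 z, b m * Real.log m) := by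
    have e1 : Real.log z * primeSum z - ∑ n ∈ range z, primeWt n * Real.log n =
        ∑ m ∈ Ioc 0 z, primeWt m * (Real.log z - Real.log m) := by
      rw [hrange _ z (by simp [hw0]), sub_self, mul_zero, add_zero, primeSum, mul_sum,
        ← sum_sub_distrib]
      exact sum_congr rfl fun n _ => by ring
    rw [e1, mul_sum, ← sum_sub_distrib, ← sum_add_distrib]
    apply sum_congr rfl
    intro n hn
    simp only [mem_Ioc] at hn
    have : 0 < n := hn.1
    rw [hΛ, Real.log_div (by positivity) (by positivity)]
    ring
  rw [hA] at h1
  rw [hB] at h2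
  have hw := primeWt_nonneg z
  constructor
  · rw [abs_le] at h1 ⊢
    have := neg_abs_le γ
    have := le_abs_self γ
    constructor <;> linarith [h1.1, h1.2]
  · rw [abs_le] at h2 ⊢
    have := abs_nonneg γ
    constructor <;> nlinarith [h2.1, h2.2]

/-! ### The sieve density and summation by parts -/

/-- `V(z) = ∏_{p < z} (1 - 1/p)`. -/
def sieveV (z : ℕ) : ℝ := ∏ n ∈ range z, if n.Prime then 1 - 1 / (n : ℝ) else 1

lemma sieveV_pos (z : ℕ) : 0 < sieveV z := by
  apply prod_pos
  intro n _
  split_ifs with h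
  · have : (2 : ℝ) ≤ n := by exact_mod_cast h.two_le
    rw [sub_pos, div_lt_one (by linarith)]; linarith
  · norm_num

/-- Summation by parts with tail sums. -/
lemma abel_tail (f g : ℕ → ℝ) {y z : ℕ} (hyz : y ≤ z) :
    ∑ n ∈ Ico y z, f n * g n = (∑ n ∈ Ico y z, f n) * g y +
      ∑ n ∈ Ico y z, (∑ k ∈ Ico (n + 1) z, f k) * (g (n + 1) - g n) := by
  set T : ℕ → ℝ := fun n => ∑ k ∈ Ico n z, f k with hT
  have h1 : ∑ n ∈ Ico y z, (f n * g n - T (n + 1) * (g (n + 1) - g n)) =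
      ∑ n ∈ Ico y z, (-(T (n + 1) * g (n + 1)) - -(T n * g n)) := by
    apply sum_congr rfl
    intro n hn
    have : T n = f n + T (n + 1) := by
      simp only [hT]; rw [sum_eq_sum_Ico_succ_bot (mem_Ico.mp hn).2]
    rw [this]; ring
  rw [sum_sub_distrib, Finset.sum_Ico_sub (fun n => -(T n * g n)) hyz] at h1
  have h2 : T z = 0 := by simp [hT]
  rw [h2] at h1
  linarith

lemma abs_sum_mul_le_of_antitone (f g : ℕ → ℝ) {y z : ℕ} (hyz : y ≤ z) (B : ℝ)
    (hB : ∀ n, y ≤ n → n ≤ z → |∑ k ∈ Ico n z, f k| ≤ B) (hg0 : ∀ n, y ≤ n → 0 ≤ g n)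
    (hg : ∀ n, y ≤ n → g (n + 1) ≤ g n) :
    |∑ n ∈ Ico y z, f n * g n| ≤ 2 * B * g y := by
  rw [abel_tail f g hyz]
  have hB0 : 0 ≤ B := (abs_nonneg _).trans (hB y le_rfl hyz)
  have h1 : |(∑ n ∈ Ico y z, f n) * g y| ≤ B * g y := by
    rw [abs_mul, abs_of_nonneg (hg0 y le_rfl)]
    exact mul_le_mul_of_nonneg_right (hB y le_rfl hyz) (hg0 y le_rfl)
  have h2 : |∑ n ∈ Ico y z, (∑ k ∈ Ico (n + 1) z, f k) * (g (n + 1) - g n)| ≤ B * g y := by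
    refine (abs_sum_le_sum_abs _ _).trans ?_
    have h3 : ∀ n ∈ Ico y z, |(∑ k ∈ Ico (n + 1) z, f k) * (g (n + 1) - g n)| ≤
        B * (-g (n + 1) - -g n) := by
      intro n hn
      rw [mem_Ico] at hn
      rw [abs_mul, abs_of_nonpos (sub_nonpos.mpr (hg n hn.1))]
      have := hB (n + 1) (by omega) (by omega)
      have h4 := hg n hn.1
      calc _ ≤ B * -(g (n + 1) - g n) := by gcongr; linarith
        _ = _ := by ring
    refine (sum_le_sum h3).trans ?_
    rw [← mul_sum, Finset.sum_Ico_sub (fun n => -g n) hyz]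
    have := hg0 z hyz
    nlinarith
  refine (abs_add_le _ _).trans ?_
  linarith

lemma sum_inv_sq_le {y z : ℕ} (hy : 2 ≤ y) (hyz : y ≤ z) :
    ∑ n ∈ Ico y z, 1 / (n : ℝ) ^ 2 ≤ 2 / (y : ℝ) := by
  have h : ∀ n ∈ Ico y z, 1 / (n : ℝ) ^ 2 ≤ -(1 / ((n + 1 : ℕ) - 1 : ℝ)) - -(1 / ((n : ℝ) - 1)) := by
    intro n hn
    rw [mem_Ico] at hn
    have hn2 : (2 : ℝ) ≤ n := by exact_mod_cast hy.trans hn.1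
    have : -(1 / ((n + 1 : ℕ) - 1 : ℝ)) - -(1 / ((n : ℝ) - 1)) = 1 / (n * (n - 1)) := by
      push_cast
      have h3 : (n : ℝ) - 1 ≠ 0 := by linarith
      have h4 : (n : ℝ) ≠ 0 := by linarith
      rw [add_sub_cancel_right]
      field_simp
      ring
    rw [this]
    apply one_div_le_one_div_of_le
    · nlinarith
    · nlinarith
  refine (sum_le_sum h).trans ?_
  rw [Finset.sum_Ico_sub (fun n : ℕ => -(1 / ((n : ℝ) - 1))) hyz]
  have hy2 : (2 : ℝ) ≤ y := by exact_mod_cast hy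
  have hz2 : (2 : ℝ) ≤ z := by exact_mod_cast hy.trans hyz
  have h1 : 0 < 1 / ((z : ℝ) - 1) := by apply one_div_pos.mpr; linarith
  have h2 : 1 / ((y : ℝ) - 1) ≤ 2 / y := by
    rw [div_le_div_iff₀ (by linarith) (by linarith)]; linarith
  linarith

lemma abs_log_one_add_sub_le {x : ℝ} (h0 : 0 ≤ x) : |Real.log (1 + x) - x| ≤ x ^ 2 := by
  have h1 := Real.log_le_sub_one_of_pos (by linarith : 0 < 1 + x)
  have h2 := Real.one_sub_inv_le_log_of_pos (by linarith : 0 < 1 + x)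
  have h3 : x - x ^ 2 ≤ 1 - (1 + x)⁻¹ := by
    have : 1 - (1 + x)⁻¹ = x / (1 + x) := by field_simp; ring
    rw [this, le_div_iff₀ (by linarith)]
    nlinarith [pow_nonneg h0 3]
  rw [abs_le]; constructor <;> linarith [sq_nonneg x]

lemma abs_log_one_sub_add_le {x : ℝ} (h1 : x ≤ 1 / 2) :
    |Real.log (1 - x) + x| ≤ 2 * x ^ 2 := by
  have h2 := Real.log_le_sub_one_of_pos (by linarith : 0 < 1 - x)
  have h3 := Real.one_sub_inv_le_log_of_pos (by linarith : 0 < 1 - x)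
  have h4 : -x - 2 * x ^ 2 ≤ 1 - (1 - x)⁻¹ := by
    have : 1 - (1 - x)⁻¹ = -x / (1 - x) := by
      have : 1 - x ≠ 0 := by linarith
      field_simp; ring
    rw [this, le_div_iff₀ (by linarith)]
    nlinarith [sq_nonneg x]
  rw [abs_le]; constructor <;> linarith [sq_nonneg x]

lemma primeSum_succ (n : ℕ) : primeSum (n + 1) = primeSum n + primeWt n := by
  simp [primeSum, sum_range_succ]

lemma primeWt_sq_sum_le : ∃ C : ℝ, ∀ z : ℕ, ∑ n ∈ range z, primeWt n ^ 2 ≤ C := by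
  have hsum : Summable (fun k : ℕ => (k : ℝ) ^ (-(3 / 2) : ℝ)) :=
    Real.summable_nat_rpow.mpr (by norm_num)
  refine ⟨∑' k : ℕ, 16 * (k : ℝ) ^ (-(3 / 2) : ℝ), fun z => ?_⟩
  refine le_trans (sum_le_sum fun n _ => ?_)
    ((hsum.mul_left 16).sum_le_tsum (range z) (fun k _ => by positivity))
  unfold primeWt
  split_ifs with h
  · have hn1 : (1 : ℝ) ≤ n := by exact_mod_cast h.one_lt.le
    have hn0 : (0 : ℝ) < n := by linarith
    have h1 := log_pow_le 1 4 (by norm_num) hn1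
    norm_num at h1
    have hl := Real.log_nonneg hn1
    rw [div_pow, div_le_iff₀ (by positivity), mul_assoc, ← Real.rpow_natCast (n : ℝ) 2,
      ← Real.rpow_add hn0]
    calc Real.log n ^ 2 ≤ (4 * (n : ℝ) ^ (1 / 4 : ℝ)) ^ 2 := by gcongr
      _ = 16 * ((n : ℝ) ^ (1 / 4 : ℝ)) ^ (2 : ℕ) := by ring
      _ = _ := by rw [← Real.rpow_natCast, ← Real.rpow_mul hn0.le]; norm_num
  · simp; positivity

/-- With the right constant `E`, the sums `∑_{p<z} (log p / p) (A(p) - E - log p)` are bounded. -/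
lemma prime_discrepancy : ∃ E C : ℝ, 0 < C ∧ ∀ z : ℕ, 1 ≤ z →
    |primeSum z - E - Real.log z| ≤ C ∧
    |∑ n ∈ range z, primeWt n * (primeSum n - E - Real.log n)| ≤ C := by
  obtain ⟨E, C, hC⟩ := prime_mertens
  obtain ⟨D, hD⟩ := primeWt_sq_sum_le
  have hC0 : 0 ≤ C := (abs_nonneg _).trans (hC 1 le_rfl).1
  have hD0 : 0 ≤ D := by simpa using hD 0
  refine ⟨E, 1 + C + |E| + (C + |E|) ^ 2 + E ^ 2 + D, by positivity, fun z hz => ?_⟩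
  obtain ⟨h1, h2⟩ := hC z hz
  have h3 : |primeSum z - E - Real.log z| ≤ C + |E| := by
    have : primeSum z - E - Real.log z = (primeSum z - Real.log z) - E := by ring
    rw [this]
    exact (abs_sub _ _).trans (by linarith)
  refine ⟨h3.trans (by nlinarith [sq_nonneg (C + |E|), sq_nonneg E]), ?_⟩
  have e1 : ∀ z : ℕ, ∑ n ∈ range z, primeWt n * (primeSum n - E) =
      ((primeSum z - E) ^ 2 - E ^ 2 - ∑ n ∈ range z, primeWt n ^ 2) / 2 := by
    intro z
    induction z with
    | zero => simp [primeSum]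
    | succ n ih => rw [sum_range_succ, ih, sum_range_succ, primeSum_succ]; ring
  have e2 : ∑ n ∈ range z, primeWt n * (primeSum n - E - Real.log n) =
      ∑ n ∈ range z, primeWt n * (primeSum n - E) - ∑ n ∈ range z, primeWt n * Real.log n := by
    rw [← sum_sub_distrib]; exact sum_congr rfl fun n _ => by ring
  have hs0 : 0 ≤ ∑ n ∈ range z, primeWt n ^ 2 := sum_nonneg fun n _ => sq_nonneg _
  have hs1 := hD z
  set W := ∑ n ∈ range z, primeWt n * Real.log n
  have e3 : ∑ n ∈ range z, primeWt n * (primeSum n - E - Real.log n) =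
      (primeSum z - E - Real.log z) ^ 2 / 2 - E ^ 2 / 2 - (∑ n ∈ range z, primeWt n ^ 2) / 2 -
      (W - (Real.log z * primeSum z - Real.log z ^ 2 / 2 - E * Real.log z)) := by
    rw [e2, e1]; ring
  have h4 : (primeSum z - E - Real.log z) ^ 2 ≤ (C + |E|) ^ 2 := by
    rw [← sq_abs]; gcongr
  rw [e3]
  rw [abs_le] at h2 ⊢
  have := abs_nonneg E
  constructor <;> nlinarith [h2.1, h2.2, sq_nonneg (primeSum z - E - Real.log z), sq_nonneg E,
    sq_nonneg (C + |E|)]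

/-! ### Asymptotics of the sieve density -/

lemma sieveV_succ (n : ℕ) :
    sieveV (n + 1) = sieveV n * (if n.Prime then 1 - 1 / (n : ℝ) else 1) := by
  simp [sieveV, prod_range_succ]

/-- `log z → ∞` along the integers, in explicit form. -/
lemma exists_log_ge (B : ℝ) : ∃ N : ℕ, 2 ≤ N ∧ ∀ n : ℕ, N ≤ n → B ≤ Real.log n := by
  refine ⟨max 2 ⌈Real.exp B⌉₊, le_max_left _ _, fun n hn => ?_⟩
  have h1 : Real.exp B ≤ n :=
    (Nat.le_ceil _).trans (by exact_mod_cast (le_max_right _ _).trans hn)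
  rw [← Real.log_exp B]
  exact Real.log_le_log (Real.exp_pos _) h1

/-- `log (A(z) - E) + log V(z)` is a Cauchy sequence, with rate `O(1/(log y)²)`. -/
lemma log_density_cauchy : ∃ E C C3 : ℝ, ∃ y1 : ℕ, 0 < C ∧ 0 < C3 ∧ 2 ≤ y1 ∧
    (∀ z : ℕ, y1 ≤ z → |primeSum z - E - Real.log z| ≤ C ∧ 4 * C + 4 ≤ Real.log z) ∧
    ∀ y z : ℕ, y1 ≤ y → y ≤ z →
      |(Real.log (primeSum z - E) + Real.log (sieveV z)) -
        (Real.log (primeSum y - E) + Real.log (sieveV y))| ≤ C3 / Real.log y ^ 2 := by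
  obtain ⟨E, C, hC0, hC⟩ := prime_discrepancy
  obtain ⟨y1, hy12, hy1⟩ := exists_log_ge (4 * C + 4)
  refine ⟨E, C, 8 * C + 24, y1, hC0, by positivity, hy12,
    fun z hz => ⟨(hC z (by omega)).1, hy1 z hz⟩, fun y z hy hyz => ?_⟩
  set a : ℕ → ℝ := fun n => primeSum n - E with ha
  set ρ : ℕ → ℝ := fun n => primeSum n - E - Real.log n with hρ
  have hal : ∀ n, y1 ≤ n → Real.log n / 2 ≤ a n := by
    intro n hn
    have h1 := hy1 n hn
    have h2 := (abs_le.mp (hC n (by omega)).1).1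
    simp only [ha]; linarith
  have hlog : ∀ n, y1 ≤ n → 4 ≤ Real.log n := fun n hn => by have := hy1 n hn; linarith
  set w : ℕ → ℝ := fun n => 1 / (Real.log n * a n) with hw
  set lam : ℕ → ℝ := fun n => Real.log (a n) + Real.log (sieveV n) with hlam
  have hinc : ∀ n, y1 ≤ n →
      |lam (n + 1) - lam n + primeWt n * ρ n * w n| ≤ 6 * (1 / (n : ℝ) ^ 2) := by
    intro n hn
    have hn2 : (2 : ℝ) ≤ n := by exact_mod_cast hy12.trans hn
    have hl := hlog n hn
    have han := hal n hn
    have ha0 : 0 < a n := by linarith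
    have has : a (n + 1) = a n + primeWt n := by simp only [ha, primeSum_succ]; ring
    by_cases hp : n.Prime
    · have hwt : primeWt n = Real.log n / n := by simp [primeWt, hp]
      set x := primeWt n / a n with hx
      have hx0 : 0 ≤ x := div_nonneg (primeWt_nonneg n) ha0.le
      have hx2 : x ≤ 2 / n := by
        rw [hx, hwt, div_div, div_le_div_iff₀ (by positivity) (by positivity)]
        nlinarith
      have e1 : lam (n + 1) - lam n = Real.log (1 + x) + Real.log (1 - 1 / n) := by
        simp only [hlam, sieveV_succ, hp, if_true]
        have h1 : (0 : ℝ) < 1 - 1 / n := by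
          rw [sub_pos, div_lt_one (by linarith)]; linarith
        rw [Real.log_mul (sieveV_pos n).ne' h1.ne', has,
          show a n + primeWt n = a n * (1 + x) by rw [hx]; field_simp,
          Real.log_mul ha0.ne' (by linarith)]
        ring
      have e2 : primeWt n * ρ n * w n = 1 / n - x := by
        rw [hx, hwt]
        simp only [hw, hρ, show primeSum n - E = a n from rfl]
        have hl0 : Real.log n ≠ 0 := by linarith
        have hn0 : (n : ℝ) ≠ 0 := by linarith
        have := ha0.ne'
        field_simp
      rw [e1, e2]
      have h1 := abs_log_one_add_sub_le hx0
      have h2 := abs_log_one_sub_add_le (x := 1 / (n : ℝ))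
        (one_div_le_one_div_of_le (by norm_num) hn2)
      have h3 : x ^ 2 ≤ 4 * (1 / (n : ℝ) ^ 2) := by
        calc x ^ 2 ≤ (2 / n) ^ 2 := by gcongr
          _ = _ := by ring
      have e3 : Real.log (1 + x) + Real.log (1 - 1 / n) + (1 / n - x) =
          (Real.log (1 + x) - x) + (Real.log (1 - 1 / n) + 1 / n) := by ring
      rw [e3]
      refine (abs_add_le _ _).trans ?_
      have e4 : 2 * (1 / (n : ℝ)) ^ 2 = 2 * (1 / (n : ℝ) ^ 2) := by ring
      rw [e4] at h2
      linarith
    · have hwt : primeWt n = 0 := by simp [primeWt, hp]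
      have : lam (n + 1) - lam n = 0 := by
        simp only [hlam, sieveV_succ, hp, if_false, has, hwt]; simp
      rw [this, hwt]; simp
  have hy2 : 2 ≤ y := hy12.trans hy
  have hwa : |∑ n ∈ Ico y z, (primeWt n * ρ n) * w n| ≤ 2 * (2 * C) * w y := by
    apply abs_sum_mul_le_of_antitone _ _ hyz
    · intro n hn hnz
      rw [sum_Ico_eq_sub _ hnz]
      refine (abs_sub _ _).trans ?_
      have h1 := (hC z (by omega)).2
      have h2 := (hC n (by omega)).2
      linarith
    · intro n hn
      have h1 := hlog n (hy.trans hn)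
      have h2 := hal n (hy.trans hn)
      exact one_div_nonneg.mpr (mul_nonneg (by linarith) (by linarith))
    · intro n hn
      have h1 := hlog n (hy.trans hn)
      have h2 := hal n (hy.trans hn)
      apply one_div_le_one_div_of_le
      · apply mul_pos <;> linarith
      · have h3 : a n ≤ a (n + 1) := by
          simp only [ha, primeSum_succ]; linarith [primeWt_nonneg n]
        have h4 : Real.log n ≤ Real.log ((n + 1 : ℕ) : ℝ) :=
          Real.log_le_log (by have : 0 < n := by omega
                              positivity) (by push_cast; linarith)
        apply mul_le_mul h4 h3 <;> linarith
  have hwy : w y ≤ 2 / Real.log y ^ 2 := by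
    have h1 := hlog y hy
    have h2 := hal y hy
    simp only [hw]
    rw [div_le_div_iff₀ (by apply mul_pos <;> linarith) (by positivity)]
    nlinarith
  have hsum : |∑ n ∈ Ico y z, (lam (n + 1) - lam n + primeWt n * ρ n * w n)| ≤ 6 * (2 / y) := by
    refine (abs_sum_le_sum_abs _ _).trans ((sum_le_sum fun n hn => hinc n
      (hy.trans (mem_Ico.mp hn).1)).trans ?_)
    rw [← mul_sum]
    have := sum_inv_sq_le hy2 hyz
    linarith
  rw [sum_add_distrib, Finset.sum_Ico_sub lam hyz] at hsum
  have hyl : 2 / (y : ℝ) ≤ 4 / Real.log y ^ 2 := by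
    have hy1' : (1 : ℝ) ≤ y := by exact_mod_cast (by omega)
    have h1 := log_pow_le 2 1 (by norm_num) hy1'
    norm_num at h1
    have := hlog y hy
    rw [div_le_div_iff₀ (by linarith) (by positivity)]
    linarith
  have e : lam z - lam y = (lam z - lam y + ∑ n ∈ Ico y z, primeWt n * ρ n * w n) -
    ∑ n ∈ Ico y z, primeWt n * ρ n * w n := by ring
  change |lam z - lam y| ≤ _
  rw [e]
  refine (abs_sub _ _).trans ?_
  have e5 : (8 * C + 24) / Real.log y ^ 2 =
    2 * (2 * C) * (2 / Real.log y ^ 2) + 6 * (4 / Real.log y ^ 2) := by ring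
  rw [e5]
  have : 2 * (2 * C) * w y ≤ 2 * (2 * C) * (2 / Real.log y ^ 2) := by gcongr
  linarith

/-- The normalised density `v(z) = c / V(z)` stays within `O(1)` of `log z`, and the discrepancies
`v(p) - log p`, summed against `1/p` over primes `y ≤ p < z`, contribute only `O(1/v(y))`. -/
lemma sieve_density : ∃ c R0 CR : ℝ, ∃ y0 : ℕ, 0 < c ∧ 0 < R0 ∧ 0 < CR ∧ 2 ≤ y0 ∧
    (∀ z : ℕ, y0 ≤ z → |c / sieveV z - Real.log z| ≤ R0) ∧
    ∀ y z : ℕ, y0 ≤ y → y ≤ z →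
      |∑ n ∈ Ico y z, if n.Prime then (c / sieveV n - Real.log n) / n else 0| ≤
        CR / (c / sieveV y) := by
  obtain ⟨E, C, C3, y1, hC0, hC3, hy12, hC, hcau⟩ := log_density_cauchy
  set a : ℕ → ℝ := fun n => primeSum n - E with ha
  set lam : ℕ → ℝ := fun n => Real.log (a n) + Real.log (sieveV n) with hlam
  have hcs : CauchySeq (fun n => lam (y1 + n)) := by
    apply cauchySeq_of_le_tendsto_0' (fun n : ℕ => C3 / Real.log ((y1 + n : ℕ) : ℝ) ^ 2)
    · intro n m hnm
      rw [dist_comm, Real.dist_eq]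
      exact hcau (y1 + n) (y1 + m) (by omega) (by omega)
    · apply Filter.Tendsto.const_div_atTop
      apply (Filter.tendsto_pow_atTop (by norm_num : 2 ≠ 0)).comp
      apply Real.tendsto_log_atTop.comp
      apply tendsto_natCast_atTop_atTop.comp
      exact Filter.tendsto_atTop_mono (fun n => by omega : ∀ n, n ≤ y1 + n) Filter.tendsto_id
  obtain ⟨L, hL⟩ := cauchySeq_tendsto_of_complete hcs
  have hLb : ∀ y, y1 ≤ y → |L - lam y| ≤ C3 / Real.log y ^ 2 := by
    intro y hy
    have h1 : Filter.Tendsto (fun n => |lam (y1 + n) - lam y|) Filter.atTop (nhds |L - lam y|) :=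
      (hL.sub_const _).abs
    apply le_of_tendsto h1
    filter_upwards [Filter.eventually_ge_atTop y] with n hn
    exact hcau y (y1 + n) hy (by omega)
  obtain ⟨y2, hy22, hy2⟩ := exists_log_ge (2 * C3 + 1)
  set y0 := max y1 y2 with hy0
  set v : ℕ → ℝ := fun n => Real.exp L / sieveV n with hv
  have hlog : ∀ n, y0 ≤ n → 4 ≤ Real.log n ∧ 2 * C3 + 1 ≤ Real.log n ∧ 4 * C + 4 ≤ Real.log n := by
    intro n hn
    have h1 := (hC n ((le_max_left _ _).trans hn)).2
    exact ⟨by linarith, hy2 n ((le_max_right _ _).trans hn), h1⟩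
  have ha1 : ∀ n, y0 ≤ n → |a n - Real.log n| ≤ C := fun n hn => by
    have := (hC n ((le_max_left _ _).trans hn)).1
    exact this
  have hva : ∀ n, y0 ≤ n → |v n - a n| ≤ 4 * C3 / Real.log n := by
    intro n hn
    obtain ⟨h4, h5, h6⟩ := hlog n hn
    have h1 := abs_le.mp (ha1 n hn)
    have ha0 : 0 < a n := by linarith [h1.1]
    have hVe : sieveV n = Real.exp (lam n) / a n := by
      simp only [hlam]
      rw [Real.exp_add, Real.exp_log ha0, Real.exp_log (sieveV_pos n)]
      field_simp
    have hve : v n = a n * Real.exp (L - lam n) := by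
      simp only [hv]; rw [hVe, Real.exp_sub]; field_simp
    have hL1 := hLb n ((le_max_left _ _).trans hn)
    have hL2 : C3 / Real.log n ^ 2 ≤ 1 := by
      rw [div_le_one (by positivity)]; nlinarith
    have h7 := Real.abs_exp_sub_one_le (hL1.trans hL2)
    have e : v n - a n = a n * (Real.exp (L - lam n) - 1) := by rw [hve]; ring
    rw [e, abs_mul, abs_of_pos ha0]
    calc _ ≤ (2 * Real.log n) * (2 * (C3 / Real.log n ^ 2)) := by
          have : a n ≤ 2 * Real.log n := by linarith [h1.2]
          gcongr
          linarith
      _ = 4 * C3 / Real.log n := by field_simp; ring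
  have hva2 : ∀ n, y0 ≤ n → |v n - a n| ≤ 2 := by
    intro n hn
    obtain ⟨h4, h5, h6⟩ := hlog n hn
    refine (hva n hn).trans ?_
    rw [div_le_iff₀ (by linarith)]; linarith
  have hvl : ∀ n, y0 ≤ n → |v n - Real.log n| ≤ C + 2 := by
    intro n hn
    have e : v n - Real.log n = (v n - a n) + (a n - Real.log n) := by ring
    rw [e]
    refine (abs_add_le _ _).trans ?_
    linarith [hva2 n hn, ha1 n hn]
  have hv2 : ∀ n, y0 ≤ n → v n ≤ 2 * Real.log n := by
    intro n hn
    obtain ⟨h4, h5, h6⟩ := hlog n hn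
    linarith [(abs_le.mp (hvl n hn)).2]
  have hvp : ∀ n, 0 < v n := fun n => div_pos (Real.exp_pos _) (sieveV_pos n)
  refine ⟨Real.exp L, C + 2, 2 * (8 * C3 + 64), y0, Real.exp_pos _, by positivity, by positivity,
    hy12.trans (le_max_left _ _), hvl, fun y z hy hyz => ?_⟩
  change |∑ n ∈ Ico y z, if n.Prime then (v n - Real.log n) / n else 0| ≤ _ / v y
  have hy2' : 2 ≤ y := hy12.trans ((le_max_left _ _).trans hy)
  set f : ℕ → ℝ := fun n => if n.Prime then v n / (n * (n - 1)) else 0 with hf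
  have hterm : ∀ n ∈ Ico y z, (if n.Prime then (v n - Real.log n) / n else 0) =
      ((v (n + 1) - a (n + 1)) - (v n - a n)) - f n := by
    intro n hn
    rw [mem_Ico] at hn
    have hn2 : (2 : ℝ) ≤ n := by exact_mod_cast hy2'.trans hn.1
    have has : a (n + 1) = a n + primeWt n := by simp only [ha, primeSum_succ]; ring
    rw [has]
    by_cases hp : n.Prime
    · have hvs : v (n + 1) = v n * (n / (n - 1)) := by
        simp only [hv, sieveV_succ, hp, if_true]
        have h1 : (n : ℝ) - 1 ≠ 0 := by linarith
        have h2 : (n : ℝ) ≠ 0 := by linarith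
        have h3 := (sieveV_pos n).ne'
        have h4 : 1 - 1 / (n : ℝ) = (n - 1) / n := by field_simp
        rw [h4]
        field_simp
      simp only [hf, hp, if_true, primeWt, hvs]
      have h1 : (n : ℝ) - 1 ≠ 0 := by linarith
      have h2 : (n : ℝ) ≠ 0 := by linarith
      field_simp
      ring
    · have hvs : v (n + 1) = v n := by
        simp only [hv, sieveV_succ, hp, if_false, mul_one]
      simp [hf, hp, primeWt, hvs]
  rw [sum_congr rfl hterm, sum_sub_distrib, Finset.sum_Ico_sub (fun n => v n - a n) hyz]
  have hfs0 : 0 ≤ ∑ n ∈ Ico y z, f n := by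
    apply sum_nonneg; intro n hn
    rw [mem_Ico] at hn
    have hn2 : (2 : ℝ) ≤ n := by exact_mod_cast hy2'.trans hn.1
    simp only [hf]; split_ifs
    · apply div_nonneg (hvp n).le; nlinarith
    · exact le_rfl
  have hfs : ∑ n ∈ Ico y z, f n ≤ 64 / Real.log y := by
    have h1 : ∀ n ∈ Ico y z, f n ≤ -(32 * ((n + 1 : ℕ) : ℝ) ^ (-(1 / 2) : ℝ)) -
        -(32 * (n : ℝ) ^ (-(1 / 2) : ℝ)) := by
      intro n hn
      rw [mem_Ico] at hn
      have hn2 : (2 : ℝ) ≤ n := by exact_mod_cast hy2'.trans hn.1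
      have h2 := rpow_telescope n (by omega)
      refine le_trans ?_ (show 8 * (n : ℝ) ^ (-(3 / 2) : ℝ) ≤ _ by linarith)
      simp only [hf]; split_ifs
      · have h3 := hv2 n (hy.trans hn.1)
        have h4 := log_pow_le 1 2 (by norm_num) (by linarith : (1 : ℝ) ≤ n)
        norm_num at h4
        have hn0 : (0 : ℝ) < n := by linarith
        have e : (n : ℝ) ^ (-(3 / 2) : ℝ) = (n : ℝ) ^ (1 / 2 : ℝ) / n ^ 2 := by
          rw [eq_div_iff (by positivity), ← Real.rpow_natCast, ← Real.rpow_add hn0]; norm_num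
        rw [e, ← mul_div_assoc, div_le_div_iff₀ (by nlinarith) (by positivity)]
        have h5 : v n ≤ 4 * (n : ℝ) ^ (1 / 2 : ℝ) := by linarith
        have h6 : 0 ≤ (n : ℝ) ^ (1 / 2 : ℝ) := by positivity
        calc v n * (n : ℝ) ^ 2 ≤ (4 * (n : ℝ) ^ (1 / 2 : ℝ)) * (n : ℝ) ^ 2 := by gcongr
          _ ≤ _ := by nlinarith [mul_nonneg h6 (by nlinarith : (0 : ℝ) ≤ n * (n - 2))]
      · positivity
    refine (sum_le_sum h1).trans ?_
    rw [Finset.sum_Ico_sub (fun n : ℕ => -(32 * (n : ℝ) ^ (-(1 / 2) : ℝ))) hyz]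
    have hy2r : (2 : ℝ) ≤ y := by exact_mod_cast hy2'
    have h4 := log_pow_le 1 2 (by norm_num) (by linarith : (1 : ℝ) ≤ y)
    norm_num at h4
    have h5 : (y : ℝ) ^ (-(1 / 2) : ℝ) ≤ 2 / Real.log y := by
      rw [le_div_iff₀ (by linarith [(hlog y hy).1]), Real.rpow_neg (by linarith)]
      rw [inv_mul_le_iff₀ (by positivity)]
      linarith
    have h6 : 0 ≤ (z : ℝ) ^ (-(1 / 2) : ℝ) := by positivity
    have e : 64 / Real.log y = 32 * (2 / Real.log y) := by ring
    rw [e]; linarith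
  have hz := hva z (hy.trans hyz)
  have hy' := hva y hy
  have hly := (hlog y hy).1
  have hzy : 4 * C3 / Real.log z ≤ 4 * C3 / Real.log y := by
    gcongr
  have hfin : |v z - a z - (v y - a y) - ∑ n ∈ Ico y z, f n| ≤ (8 * C3 + 64) / Real.log y := by
    have e : (8 * C3 + 64) / Real.log y =
      4 * C3 / Real.log y + 4 * C3 / Real.log y + 64 / Real.log y := by ring
    rw [e, abs_le]
    have h1 := abs_le.mp hz
    have h2 := abs_le.mp hy'
    have h3 : 0 ≤ 64 / Real.log y := by positivity
    constructor <;> linarith [h1.1, h1.2, h2.1, h2.2]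
  refine hfin.trans ?_
  rw [div_le_div_iff₀ (by linarith) (hvp y)]
  have := hv2 y hy
  nlinarith

/-! ### Delay differential equations -/

/-- The integral operator whose fixed point solves the delay equation
`f'(s) = ε f(s - 1) / (s - 1)` for `s ≥ 2` with `f = 1` on `s ≤ 2`. -/
def ddeOp (ε : ℝ) (g : ℝ → ℝ) (s : ℝ) : ℝ :=
  1 + ε * ∫ t in (2 : ℝ)..(max s 2), g (t - 1) / max (t - 1) 1

theorem ddeKer_continuous {g : ℝ → ℝ} (hg : Continuous g) :
    Continuous fun t => g (t - 1) / max (t - 1) 1 := by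
  refine Continuous.div (by fun_prop) (by fun_prop) fun t => ?_
  have := le_max_right (t - 1) (1 : ℝ)
  linarith

theorem ddeOp_continuous (ε : ℝ) {g : ℝ → ℝ} (hg : Continuous g) : Continuous (ddeOp ε g) := by
  have h := ddeKer_continuous hg
  have h1 : Continuous fun s => ∫ t in (2 : ℝ)..s, g (t - 1) / max (t - 1) 1 :=
    intervalIntegral.continuous_primitive (fun a b => h.intervalIntegrable a b) 2
  have h2 : Continuous fun s : ℝ => max s 2 := by fun_prop
  exact continuous_const.add (continuous_const.mul (h1.comp h2))

theorem ddeOp_congr (ε : ℝ) {g g' : ℝ → ℝ} {s : ℝ} (h : ∀ t, t ≤ max s 2 - 1 → g t = g' t) :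
    ddeOp ε g s = ddeOp ε g' s := by
  unfold ddeOp
  congr 2
  refine intervalIntegral.integral_congr fun t ht => ?_
  rw [Set.uIcc_of_le (le_max_right s 2)] at ht
  rw [h (t - 1) (by linarith [ht.2])]

/-- The delay equation `f'(s) = ε f(s - 1)/(s - 1)`, `f = 1` on `s ≤ 2`, has a continuous solution;
the iterates of `ddeOp` stabilise on each bounded interval. -/
theorem dde_exists (ε : ℝ) : ∃ f : ℝ → ℝ, Continuous f ∧ (∀ s ≤ 2, f s = 1) ∧
    ∀ s, 2 ≤ s → HasDerivWithinAt f (ε * (f (s - 1) / (s - 1))) (Set.Ici s) s := by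
  set F : ℕ → ℝ → ℝ := fun n => (ddeOp ε)^[n] (fun _ => 1) with hF
  have hsucc : ∀ n, F (n + 1) = ddeOp ε (F n) := fun n => by
    simp only [hF]; rw [Function.iterate_succ_apply']
  have hcont : ∀ n, Continuous (F n) := by
    intro n
    induction n with
    | zero => exact continuous_const
    | succ n ih => rw [hsucc]; exact ddeOp_continuous ε ih
  have hstep : ∀ n : ℕ, ∀ s : ℝ, s ≤ n + 2 → F (n + 1) s = F n s := by
    intro n
    induction n with
    | zero =>
      intro s hs
      have : max s 2 = 2 := max_eq_right (by simpa using hs)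
      rw [hsucc]; simp [ddeOp, this, hF]
    | succ n ih =>
      intro s hs
      rw [hsucc (n + 1)]
      conv_rhs => rw [hsucc n]
      refine ddeOp_congr ε fun t ht => ih t ?_
      push_cast at hs
      have hn : (0 : ℝ) ≤ n := Nat.cast_nonneg n
      have : max s 2 ≤ n + 3 := max_le (by linarith) (by linarith)
      linarith
  have hle : ∀ n k : ℕ, ∀ s : ℝ, s ≤ n + 2 → F (n + k) s = F n s := by
    intro n k
    induction k with
    | zero => intro s _; rfl
    | succ k ih =>
      intro s hs
      rw [← add_assoc, hstep _ s (by push_cast; linarith [(Nat.cast_nonneg k : (0 : ℝ) ≤ k)]),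
        ih s hs]
  have hag : ∀ n k : ℕ, ∀ s : ℝ, s ≤ n + 2 → s ≤ k + 2 → F n s = F k s := by
    intro n k s h1 h2
    rcases le_total n k with h | h
    · obtain ⟨l, rfl⟩ := Nat.exists_eq_add_of_le h
      exact (hle n l s h1).symm
    · obtain ⟨l, rfl⟩ := Nat.exists_eq_add_of_le h
      exact hle k l s h2
  set f : ℝ → ℝ := fun s => F ⌈s⌉₊ s with hf
  have hfF : ∀ n : ℕ, ∀ s : ℝ, s ≤ n + 2 → f s = F n s := by
    intro n s hs
    exact hag _ _ s (by linarith [Nat.le_ceil s]) hs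
  have hfix : ∀ s, f s = ddeOp ε f s := by
    intro s
    have h1 : s ≤ ⌈s⌉₊ := Nat.le_ceil s
    rw [hfF (⌈s⌉₊ + 1) s (by push_cast; linarith), hsucc]
    refine ddeOp_congr ε fun t ht => (hfF _ t ?_).symm
    have : max s 2 ≤ ⌈s⌉₊ + 2 := max_le (by linarith) (by linarith [(Nat.cast_nonneg ⌈s⌉₊ : (0 : ℝ) ≤ ⌈s⌉₊)])
    linarith
  have hfc : Continuous f := by
    rw [continuous_iff_continuousAt]
    intro s
    have h1 : s < (⌈s⌉₊ : ℝ) + 2 := by linarith [Nat.le_ceil s]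
    refine ((hcont ⌈s⌉₊).continuousAt).congr ?_
    filter_upwards [Iio_mem_nhds h1] with t ht
    exact (hfF _ t (le_of_lt ht)).symm
  refine ⟨f, hfc, ?_, ?_⟩
  · intro s hs
    rw [hfix]; simp [ddeOp, max_eq_right hs]
  · intro s hs
    have hk := ddeKer_continuous hfc
    have h1 : HasDerivAt (fun u => ∫ t in (2 : ℝ)..u, f (t - 1) / max (t - 1) 1)
        (f (s - 1) / max (s - 1) 1) s :=
      intervalIntegral.integral_hasDerivAt_right (hk.intervalIntegrable _ _)
        (hk.stronglyMeasurableAtFilter _ _) hk.continuousAt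
    have h2 := ((h1.const_mul ε).const_add 1).hasDerivWithinAt (s := Set.Ici s)
    rw [max_eq_left (by linarith : (1 : ℝ) ≤ s - 1)] at h2
    refine h2.congr (fun t ht => ?_) ?_
    · rw [hfix]; simp only [ddeOp]; rw [max_eq_left (hs.trans ht)]
    · rw [hfix]; simp only [ddeOp]; rw [max_eq_left hs]

theorem antitoneOn_of_right_deriv {f f' : ℝ → ℝ} {a : ℝ} (hc : ContinuousOn f (Set.Ici a))
    (hd : ∀ x, a ≤ x → HasDerivWithinAt f (f' x) (Set.Ici x) x) {b : ℝ}
    (hneg : ∀ x, a ≤ x → x < b → f' x ≤ 0) {x y : ℝ} (hx : a ≤ x) (hxy : x ≤ y) (hy : y ≤ b) :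
    f y ≤ f x := by
  have := image_le_of_deriv_right_le_deriv_boundary (f := f) (f' := f') (a := x) (b := y)
    (hc.mono fun t ht => hx.trans ht.1) (fun t ht => hd t (hx.trans ht.1))
    (B := fun _ => f x) (B' := fun _ => 0) le_rfl continuousOn_const
    (fun t _ => hasDerivWithinAt_const _ _ _)
    (fun t ht => hneg t (hx.trans ht.1) (ht.2.trans_le hy))
  exact this ⟨hxy, le_rfl⟩

theorem monotoneOn_of_right_deriv {f f' : ℝ → ℝ} {a : ℝ} (hc : ContinuousOn f (Set.Ici a))
    (hd : ∀ x, a ≤ x → HasDerivWithinAt f (f' x) (Set.Ici x) x) {b : ℝ}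
    (hneg : ∀ x, a ≤ x → x < b → 0 ≤ f' x) {x y : ℝ} (hx : a ≤ x) (hxy : x ≤ y) (hy : y ≤ b) :
    f x ≤ f y := by
  have := antitoneOn_of_right_deriv (f := fun t => - f t) (f' := fun t => - f' t) (a := a) hc.neg
    (fun x hx => (hd x hx).neg) (b := b) (fun x h1 h2 => by linarith [hneg x h1 h2]) hx hxy hy
  linarith

/-- Propagation of positivity: a continuous function on `[a, ∞)` that cannot fail to be positive
for the first time never fails. -/
theorem pos_of_no_first_failure {g : ℝ → ℝ} {a : ℝ} (hc : ContinuousOn g (Set.Ici a))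
    (h : ∀ s, a ≤ s → (∀ t, a ≤ t → t < s → 0 < g t) → 0 < g s) : ∀ s, a ≤ s → 0 < g s := by
  by_contra! hcon
  obtain ⟨s, hs, hgs⟩ := hcon
  set A : Set ℝ := Set.Ici a ∩ g ⁻¹' Set.Iic 0 with hA
  have hcl : IsClosed A := hc.preimage_isClosed_of_isClosed isClosed_Ici isClosed_Iic
  have hne : A.Nonempty := ⟨s, hs, hgs⟩
  have hbd : BddBelow A := ⟨a, fun t ht => ht.1⟩
  have hm := hcl.csInf_mem hne hbd
  have := h (sInf A) hm.1 fun t h1 h2 => by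
    by_contra! h3
    exact absurd (csInf_le hbd ⟨h1, h3⟩) (not_le.mpr h2)
  exact absurd hm.2 (not_le.mpr this)

/-! ### The functions of the linear sieve -/

/-- The solution of `r'(s) = -r(s - 1)/(s - 1)`, `r = 1` on `s ≤ 2`, is positive and decays faster
than any power, because `(s - 1) r(s) = ∫_{s-1}^s r`. -/
theorem dde_neg_decay {r : ℝ → ℝ} (hc : Continuous r) (h1 : ∀ s ≤ 2, r s = 1)
    (hd : ∀ s, 2 ≤ s → HasDerivWithinAt r (-1 * (r (s - 1) / (s - 1))) (Set.Ici s) s) :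
    (∀ s, 0 < r s) ∧ ∀ j : ℕ, ∃ N, 0 < N ∧ ∀ s, 1 ≤ s → r s * s ^ j ≤ N := by
  set I : ℝ → ℝ := fun s => ∫ t in (0 : ℝ)..s, r t with hI
  have hId : ∀ s, HasDerivAt I (r s) s := fun s =>
    intervalIntegral.integral_hasDerivAt_right (hc.intervalIntegrable _ _)
      (hc.stronglyMeasurableAtFilter _ _) hc.continuousAt
  have hIc : Continuous I := continuous_iff_continuousAt.mpr fun s => (hId s).continuousAt
  have hIs : ∀ s, ∫ t in (s - 1)..s, r t = I s - I (s - 1) := fun s => by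
    rw [hI]
    exact (intervalIntegral.integral_interval_sub_left (hc.intervalIntegrable _ _)
      (hc.intervalIntegrable _ _)).symm
  set E : ℝ → ℝ := fun s => (s - 1) * r s - (I s - I (s - 1)) with hE
  have hEc : Continuous E := by
    have : Continuous fun s => I (s - 1) := hIc.comp (by fun_prop)
    fun_prop
  have hEd : ∀ s, 2 ≤ s → HasDerivWithinAt E 0 (Set.Ici s) s := by
    intro s hs
    have a1 : HasDerivAt (fun s : ℝ => s - 1) 1 s := (hasDerivAt_id s).sub_const 1
    have a2 : HasDerivAt (fun s => I (s - 1)) (r (s - 1)) s :=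
      (hId (s - 1)).comp_sub_const s 1
    have := (a1.hasDerivWithinAt.mul (hd s hs)).sub
      (((hId s).sub a2).hasDerivWithinAt (s := Set.Ici s))
    refine this.congr_deriv ?_
    have : s - 1 ≠ 0 := by linarith
    field_simp
    ring
  have hE2 : E 2 = 0 := by
    have : ∫ t in ((2 : ℝ) - 1)..2, r t = 1 := by
      rw [intervalIntegral.integral_congr (g := fun _ => (1 : ℝ))]
      · norm_num
      · intro t ht
        rw [Set.uIcc_of_le (by norm_num)] at ht
        exact h1 t ht.2
    rw [hIs] at this
    simp only [hE]; rw [this, h1 2 le_rfl]; norm_num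
  have hEz : ∀ s, 2 ≤ s → (s - 1) * r s = ∫ t in (s - 1)..s, r t := by
    intro s hs
    have u1 := antitoneOn_of_right_deriv (f := E) (f' := fun _ => 0) hEc.continuousOn hEd
      (b := s) (fun _ _ _ => le_rfl) le_rfl hs le_rfl
    have u2 := monotoneOn_of_right_deriv (f := E) (f' := fun _ => 0) hEc.continuousOn hEd
      (b := s) (fun _ _ _ => le_rfl) le_rfl hs le_rfl
    rw [hIs]
    have : E s = 0 := by linarith
    simp only [hE] at this
    linarith
  have hpos2 : ∀ s, 2 ≤ s → 0 < r s := by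
    refine pos_of_no_first_failure hc.continuousOn fun s hs ih => ?_
    have : 0 < ∫ t in (s - 1)..s, r t := by
      refine intervalIntegral.intervalIntegral_pos_of_pos_on (hc.intervalIntegrable _ _)
        (fun t ht => ?_) (by linarith)
      rcases le_total 2 t with h | h
      · exact ih t h ht.2
      · rw [h1 t h]; norm_num
    rw [← hEz s hs] at this
    exact pos_of_mul_pos_right this (by linarith)
  have hpos : ∀ s, 0 < r s := by
    intro s
    rcases le_total 2 s with h | h
    · exact hpos2 s h
    · rw [h1 s h]; norm_num
  have hanti2 : ∀ x y, 2 ≤ x → x ≤ y → r y ≤ r x := fun x y hx hxy =>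
    antitoneOn_of_right_deriv hc.continuousOn hd (b := y)
      (fun t ht _ => by
        have := div_pos (hpos (t - 1)) (by linarith : 0 < t - 1)
        linarith) hx hxy le_rfl
  have hanti : ∀ x y, x ≤ y → r y ≤ r x := by
    intro x y hxy
    rcases le_total 2 x with h | h
    · exact hanti2 x y h hxy
    · rcases le_total 2 y with h' | h'
      · rw [h1 x h, ← h1 2 le_rfl]; exact hanti2 2 y le_rfl h'
      · rw [h1 x h, h1 y h']
  have hrec : ∀ s, 2 ≤ s → (s - 1) * r s ≤ r (s - 1) := by
    intro s hs
    rw [hEz s hs]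
    have := intervalIntegral.integral_mono_on (μ := MeasureTheory.volume) (a := s - 1) (b := s) (by linarith)
      (hc.intervalIntegrable _ _) (g := fun _ => r (s - 1))
      (continuous_const.intervalIntegrable _ _) (fun t ht => hanti _ _ ht.1)
    simpa using this
  refine ⟨hpos, fun j => ?_⟩
  induction j with
  | zero =>
    refine ⟨1, one_pos, fun s hs => ?_⟩
    have := hanti 1 s hs
    rw [h1 1 (by norm_num)] at this
    simpa using this
  | succ j ih =>
    obtain ⟨N, hN, h⟩ := ih
    refine ⟨(N + 1) * 2 ^ (j + 1), by positivity, fun s hs => ?_⟩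
    rcases le_total s 2 with h2 | h2
    · rw [h1 s h2, one_mul]
      calc s ^ (j + 1) ≤ 2 ^ (j + 1) := by gcongr
        _ ≤ (N + 1) * 2 ^ (j + 1) := le_mul_of_one_le_left (by positivity) (by linarith)
    · have k1 := h (s - 1) (by linarith)
      have k2 := hrec s h2
      calc r s * s ^ (j + 1) ≤ r s * (2 * (s - 1)) ^ (j + 1) := by
            have := (hpos s).le
            gcongr; linarith
        _ = ((s - 1) * r s) * (s - 1) ^ j * 2 ^ (j + 1) := by rw [mul_pow]; ring
        _ ≤ r (s - 1) * (s - 1) ^ j * 2 ^ (j + 1) := by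
            have : 0 ≤ s - 1 := by linarith
            gcongr
        _ ≤ (N + 1) * 2 ^ (j + 1) := by gcongr; linarith

/-- The functions `p(s) = s F(s)` and `q(s) = s f(s)` of the linear sieve (normalised by `p = 2`,
`q = 0` on `s ≤ 2`), built from the decoupled solutions `(p + q)/2` and `(p - q)/2`. -/
theorem linear_sieve_pair : ∃ p q : ℝ → ℝ, Continuous p ∧ Continuous q ∧
    (∀ s ≤ 2, p s = 2) ∧ (∀ s ≤ 2, q s = 0) ∧
    (∀ s, 2 ≤ s → HasDerivWithinAt p (q (s - 1) / (s - 1)) (Set.Ici s) s) ∧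
    (∀ s, 2 ≤ s → HasDerivWithinAt q (p (s - 1) / (s - 1)) (Set.Ici s) s) ∧
    (∀ s, q s < p s) ∧ ∃ N, 0 < N ∧ ∀ s, 1 ≤ s → (p s - q s) * s ^ 8 ≤ N := by
  obtain ⟨W, hWc, hW1, hWd⟩ := dde_exists 1
  obtain ⟨r, hrc, hr1, hrd⟩ := dde_exists (-1)
  obtain ⟨hpos, hdec⟩ := dde_neg_decay hrc hr1 hrd
  obtain ⟨N, hN, hdec⟩ := hdec 8
  refine ⟨fun s => W s + r s, fun s => W s - r s, hWc.add hrc, hWc.sub hrc, ?_, ?_, ?_, ?_, ?_,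
    2 * N, by positivity, ?_⟩
  · intro s hs; simp only; rw [hW1 s hs, hr1 s hs]; norm_num
  · intro s hs; simp only; rw [hW1 s hs, hr1 s hs]; norm_num
  · intro s hs
    refine ((hWd s hs).add (hrd s hs)).congr_deriv ?_
    ring
  · intro s hs
    refine ((hWd s hs).sub (hrd s hs)).congr_deriv ?_
    ring
  · intro s; simp only; linarith [hpos s]
  · intro s hs
    have := hdec s hs
    simp only
    nlinarith

/-! ### Monotonicity, convexity and decay of the sieve functions -/

/-- The upper and lower functions `F`, `f` of the linear sieve, together with `hp = -F'` and
`hm = f'`, and the monotonicity, convexity and decay properties used in the sieve induction.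
The number `κ` separates `f` from `F` (it is in fact their common limit). The delay equations `(sf)' = F(s - 1)` and `(sF)' = f(s - 1)` appear
as the inequalities `f_step` and `F_step`, in which the integral has been bounded by monotonicity. -/
structure LinSieve where
  F : ℝ → ℝ
  f : ℝ → ℝ
  hp : ℝ → ℝ
  hm : ℝ → ℝ
  κ : ℝ
  N : ℝ
  κ_pos : 0 < κ
  N_pos : 0 < N
  F_anti : ∀ x y, 0 < x → x ≤ y → F y ≤ F x
  f_mono : ∀ x y, x ≤ y → f x ≤ f y
  f_zero : ∀ x, x ≤ 2 → f x = 0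
  F_ge : ∀ x, 0 < x → κ ≤ F x
  f_le : ∀ x, f x ≤ κ
  F_eq : ∀ x, 0 < x → x ≤ 3 → F x = 2 / x
  f_step : ∀ a b, 2 ≤ a → a ≤ b → (b - a) * F (b - 1) ≤ b * f b - a * f a
  F_step : ∀ a b, 2 ≤ a → a ≤ b → b * F b - a * F a ≤ (b - a) * f (b - 1)
  F_convex : ∀ x y, 0 < x → 0 < y → F y + hp y * (y - x) ≤ F x
  f_concave : ∀ x y, 2 ≤ x → 2 ≤ y → f x ≤ f y + hm y * (x - y)
  hp_pos : ∀ x, 0 < x → 0 < hp x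
  hm_pos : ∀ x, 2 ≤ x → 0 < hm x
  hp_anti : ∀ x y, 0 < x → x ≤ y → hp y ≤ hp x
  hm_anti : ∀ x y, 2 ≤ x → x ≤ y → hm y ≤ hm x
  hp_le : ∀ x, 1 / 2 ≤ x → hp x * x ^ 7 ≤ N
  hm_le : ∀ x, 2 ≤ x → hm x * x ^ 7 ≤ N
  hp_lip : ∀ x y, 1 / 2 ≤ x → x ≤ y → |hp y - hp x| ≤ N / x ^ 7 * (y - x)
  hm_lip : ∀ x y, 2 ≤ x → x ≤ y → |hm y - hm x| ≤ N / x ^ 7 * (y - x)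

theorem lip_of_right_deriv {g g' : ℝ → ℝ} {a M : ℝ} (ha : 0 < a) (hc : ContinuousOn g (Set.Ici a))
    (hd : ∀ x, a ≤ x → HasDerivWithinAt g (g' x) (Set.Ici x) x)
    (hM : ∀ x, a ≤ x → |g' x| * x ^ 7 ≤ M) {x y : ℝ} (hx : a ≤ x) (hxy : x ≤ y) :
    |g y - g x| ≤ M / x ^ 7 * (y - x) := by
  have hx0 : 0 < x := by linarith
  refine norm_image_sub_le_of_norm_deriv_right_le_segment (f := g) (f' := g') (a := x) (b := y)
    (hc.mono fun t ht => hx.trans ht.1) (fun t ht => hd t (hx.trans ht.1)) (fun t ht => ?_) y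
    ⟨hxy, le_rfl⟩
  rw [Real.norm_eq_abs, le_div_iff₀ (by positivity)]
  refine le_trans ?_ (hM t (hx.trans ht.1))
  have := ht.1
  gcongr

theorem linSieve_exists : Nonempty LinSieve := by
  obtain ⟨p, q, hpc, hqc, hp2, hq2, hpd, hqd, hqp, N, hN, hdec⟩ := linear_sieve_pair
  -- `p` stays equal to `2` up to `3`
  have hp3 : ∀ s ≤ 3, p s = 2 := by
    intro s hs
    rcases le_total s 2 with h | h
    · exact hp2 s h
    · have hz : ∀ x, 2 ≤ x → x < 3 → q (x - 1) / (x - 1) = 0 := fun x _ h3 => by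
        rw [hq2 _ (by linarith), zero_div]
      have u1 := antitoneOn_of_right_deriv hpc.continuousOn hpd (b := 3)
        (fun x h2 h3 => (hz x h2 h3).le) le_rfl h hs
      have u2 := monotoneOn_of_right_deriv hpc.continuousOn hpd (b := 3)
        (fun x h2 h3 => (hz x h2 h3).ge) le_rfl h hs
      rw [hp2 2 le_rfl] at u1 u2
      linarith
  have hpd0 : ∀ s, 0 < s → HasDerivWithinAt p (q (s - 1) / (s - 1)) (Set.Ici s) s := by
    intro s hs
    rcases le_or_gt 2 s with h | h
    · exact hpd s h
    · rw [hq2 _ (by linarith), zero_div]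
      refine HasDerivAt.hasDerivWithinAt ?_
      refine (hasDerivAt_const s (2 : ℝ)).congr_of_eventuallyEq ?_
      filter_upwards [Iio_mem_nhds h] with t ht
      exact hp2 t (le_of_lt ht)
  set F : ℝ → ℝ := fun s => p s / s with hF
  set f : ℝ → ℝ := fun s => q s / s with hf
  set dp : ℝ → ℝ := fun s => (F s - f (s - 1)) / s with hdp
  set dm : ℝ → ℝ := fun s => (F (s - 1) - f s) / s with hdm
  have hf2 : ∀ s ≤ 2, f s = 0 := fun s hs => by simp only [hf]; rw [hq2 s hs, zero_div]
  have hF3 : ∀ s, s ≤ 3 → F s = 2 / s := fun s hs => by simp only [hF]; rw [hp3 s hs]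
  have hFc : ∀ a, 0 < a → ContinuousOn F (Set.Ici a) := fun a ha =>
    hpc.continuousOn.div continuousOn_id fun x hx => (lt_of_lt_of_le ha hx).ne'
  have hfc : ∀ a, 0 < a → ContinuousOn f (Set.Ici a) := fun a ha =>
    hqc.continuousOn.div continuousOn_id fun x hx => (lt_of_lt_of_le ha hx).ne'
  have hFd : ∀ s, 0 < s → HasDerivWithinAt F (-dp s) (Set.Ici s) s := by
    intro s hs
    refine ((hpd0 s hs).div (hasDerivWithinAt_id s _) hs.ne').congr_deriv ?_
    simp only [hdp, hF, hf, id]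
    field_simp
    ring
  have hfd : ∀ s, 2 ≤ s → HasDerivWithinAt f (dm s) (Set.Ici s) s := by
    intro s hs
    have hs0 : s ≠ 0 := by linarith
    refine ((hqd s hs).div (hasDerivWithinAt_id s _) hs0).congr_deriv ?_
    simp only [hdm, hF, hf, id]
    field_simp
  have hfF : ∀ s, 0 < s → f s < F s := fun s hs => by
    simp only [hf, hF]
    have := hqp s
    gcongr
  have hdp3 : ∀ s, 0 < s → s ≤ 3 → dp s = 2 / s ^ 2 := by
    intro s hs h3
    simp only [hdp]
    rw [hF3 s h3, hf2 _ (by linarith)]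
    field_simp
    ring
  have hsc : ContinuousOn (fun s : ℝ => s - 1) (Set.Ici 2) := by fun_prop
  have hms : Set.MapsTo (fun s : ℝ => s - 1) (Set.Ici 2) (Set.Ici 1) := fun s hs => by
    simp only [Set.mem_Ici] at hs ⊢; linarith
  have hdpc : ContinuousOn dp (Set.Ici 2) :=
    ((hFc 2 two_pos).sub ((hfc 1 one_pos).comp hsc hms)).div continuousOn_id
      fun x hx => (lt_of_lt_of_le two_pos hx).ne'
  have hdmc : ContinuousOn dm (Set.Ici 2) :=
    (((hFc 1 one_pos).comp hsc hms).sub (hfc 2 two_pos)).div continuousOn_id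
      fun x hx => (lt_of_lt_of_le two_pos hx).ne'
  -- both derivatives are positive: neither can vanish first
  have hmin : ∀ s, 2 ≤ s → 0 < min (dp s) (dm s) := by
    refine pos_of_no_first_failure (continuous_min.comp_continuousOn (hdpc.prodMk hdmc)) fun s hs ih => ?_
    have a1 : F s ≤ F (s - 1) := by
      refine antitoneOn_of_right_deriv (hFc 1 one_pos) (fun x hx => hFd x (by linarith)) (b := s)
        (fun x h1 h2 => ?_) (by linarith) (by linarith) le_rfl
      rcases le_or_gt 2 x with h | h
      · linarith [lt_min_iff.mp (ih x h h2)]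
      · rw [hdp3 x (by linarith) (by linarith)]
        have : 0 < 2 / x ^ 2 := by positivity
        linarith
    have a2 : f (s - 1) ≤ f s := by
      have key : ∀ x, 2 ≤ x → x ≤ s → f x ≤ f s := fun x h1 h2 =>
        monotoneOn_of_right_deriv (hfc 2 two_pos) (fun x hx => hfd x hx) (b := s)
          (fun x h1 h2 => (lt_min_iff.mp (ih x h1 h2)).2.le) h1 h2 le_rfl
      rcases le_or_gt 2 (s - 1) with h | h
      · exact key _ h (by linarith)
      · rw [hf2 _ h.le, ← hf2 2 le_rfl]; exact key 2 le_rfl hs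
    have a3 := hfF s (by linarith)
    have h0 : 0 < s := by linarith
    exact lt_min (div_pos (by linarith) h0) (div_pos (by linarith) h0)
  have hdppos : ∀ s, 0 < s → 0 < dp s := by
    intro s hs
    rcases le_or_gt 2 s with h | h
    · exact (lt_min_iff.mp (hmin s h)).1
    · rw [hdp3 s hs (by linarith)]; positivity
  have hdmpos : ∀ s, 2 ≤ s → 0 < dm s := fun s h => (lt_min_iff.mp (hmin s h)).2
  have hFanti : ∀ x y, 0 < x → x ≤ y → F y ≤ F x := fun x y hx hxy =>
    antitoneOn_of_right_deriv (hFc x hx) (fun t ht => hFd t (by linarith)) (b := y)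
      (fun t ht _ => by linarith [hdppos t (by linarith)]) le_rfl hxy le_rfl
  have hfmono2 : ∀ x y, 2 ≤ x → x ≤ y → f x ≤ f y := fun x y hx hxy =>
    monotoneOn_of_right_deriv (hfc 2 two_pos) (fun t ht => hfd t ht) (b := y)
      (fun t ht _ => (hdmpos t ht).le) hx hxy le_rfl
  have hfmono : ∀ x y, x ≤ y → f x ≤ f y := by
    intro x y hxy
    rcases le_total 2 x with h | h
    · exact hfmono2 x y h hxy
    · rcases le_total 2 y with h' | h'
      · rw [hf2 x h, ← hf2 2 le_rfl]; exact hfmono2 2 y le_rfl h'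
      · rw [hf2 x h, hf2 y h']
  -- any lower value is below any upper value
  have hcross : ∀ x y, 0 < y → f x ≤ F y := by
    intro x y hy
    calc f x ≤ f (max x y) := hfmono _ _ (le_max_left _ _)
      _ ≤ F (max x y) := (hfF _ (hy.trans_le (le_max_right _ _))).le
      _ ≤ F y := hFanti _ _ hy (le_max_right _ _)
  have hf3 : 0 < f 3 := by
    by_contra! hneg
    have c0 : ∀ x, 2 ≤ x → x ≤ 3 → f x = 0 := fun x h2 h3 =>
      le_antisymm ((hfmono x 3 h3).trans hneg) (by rw [← hf2 2 le_rfl]; exact hfmono 2 x h2)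
    have c2 := hfd 2 le_rfl
    have c3 : HasDerivWithinAt f 0 (Set.Ici 2) 2 := by
      refine (hasDerivWithinAt_const (2 : ℝ) (Set.Ici 2) (0 : ℝ)).congr_of_eventuallyEq ?_
        (c0 2 le_rfl (by norm_num))
      filter_upwards [self_mem_nhdsWithin, mem_nhdsWithin_of_mem_nhds (Iio_mem_nhds (by norm_num : (2 : ℝ) < 3))]
        with t h1 h2
      exact c0 t h1 (le_of_lt h2)
    have := (uniqueDiffOn_Ici (2 : ℝ) 2 Set.self_mem_Ici).eq_deriv _ c2 c3
    linarith [hdmpos 2 le_rfl]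
  -- bounds for the derivatives by the decaying difference
  have hdple : ∀ s, 2 ≤ s → dp s ≤ (p (s - 1) - q (s - 1)) / ((s - 1) * s) := by
    intro s hs
    have h1 : 0 < s - 1 := by linarith
    have h0 : 0 < s := by linarith
    have := hFanti (s - 1) s h1 (by linarith)
    rw [← div_div, sub_div]
    simp only [hdp]
    gcongr
  have hdmle : ∀ s, 2 ≤ s → dm s ≤ (p (s - 1) - q (s - 1)) / ((s - 1) * s) := by
    intro s hs
    have h1 : 0 < s - 1 := by linarith
    have h0 : 0 < s := by linarith
    have := hfmono (s - 1) s (by linarith)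
    rw [← div_div, sub_div]
    simp only [hdm]
    gcongr
  have hdecay : ∀ s, 2 ≤ s → (p (s - 1) - q (s - 1)) / ((s - 1) * s) * s ^ 8 ≤ N * 2 ^ 8 := by
    intro s hs
    have h1 : 0 < s - 1 := by linarith
    have h0 : 0 < s := by linarith
    have h2 := hqp (s - 1)
    have h3 := hdec (s - 1) (by linarith)
    have h4 : s ^ 8 ≤ (2 * (s - 1)) ^ 8 := by gcongr; linarith
    have h5 : 1 ≤ (s - 1) * s := by nlinarith
    calc (p (s - 1) - q (s - 1)) / ((s - 1) * s) * s ^ 8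
        ≤ (p (s - 1) - q (s - 1)) / 1 * (2 * (s - 1)) ^ 8 := by
          have : 0 ≤ p (s - 1) - q (s - 1) := by linarith
          gcongr
      _ = (p (s - 1) - q (s - 1)) * (s - 1) ^ 8 * 2 ^ 8 := by ring
      _ ≤ N * 2 ^ 8 := by gcongr
  set N1 : ℝ := N * 2 ^ 8 + 64 with hN1
  have hpow : ∀ s : ℝ, 1 ≤ s → s ^ 7 ≤ s ^ 8 := fun s hs => pow_le_pow_right₀ hs (by norm_num)
  have hdp7 : ∀ s, 1 / 2 ≤ s → dp s * s ^ 7 ≤ N1 := by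
    intro s hs
    rcases le_or_gt 2 s with h | h
    · have h1 := mul_le_mul_of_nonneg_left (hpow s (by linarith)) (hdppos s (by linarith)).le
      have h2 := mul_le_mul_of_nonneg_right (hdple s h) (by positivity : 0 ≤ s ^ 8)
      linarith [hdecay s h]
    · have h0 : 0 < s := by linarith
      rw [hdp3 s h0 (by linarith)]
      have : s ^ 5 ≤ 2 ^ 5 := by gcongr
      have e : 2 / s ^ 2 * s ^ 7 = 2 * s ^ 5 := by field_simp
      rw [e]
      have : 0 ≤ N * 2 ^ 8 := by positivity
      linarith
  have hdm7 : ∀ s, 2 ≤ s → dm s * s ^ 7 ≤ N1 := by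
    intro s h
    have h1 := mul_le_mul_of_nonneg_left (hpow s (by linarith)) (hdmpos s (by linarith)).le
    have h2 := mul_le_mul_of_nonneg_right (hdmle s h) (by positivity : 0 ≤ s ^ 8)
    linarith [hdecay s h]
  -- the functions `s ^ 2 h(s)` have simple derivatives
  set em : ℝ → ℝ := fun s => s * F (s - 1) - q s with hem
  set ep : ℝ → ℝ := fun s => p s - s * f (s - 1) with hep
  have hemd : ∀ s, 2 ≤ s → HasDerivWithinAt em (-(s * dp (s - 1))) (Set.Ici s) s := by
    intro s hs
    have h1 : HasDerivWithinAt (fun s => F (s - 1)) (-dp (s - 1)) (Set.Ici s) s := by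
      have := (hFd (s - 1) (by linarith)).scomp (h := fun s : ℝ => s - 1) (h' := 1) (s := Set.Ici s) s
        (((hasDerivAt_id s).sub_const 1).hasDerivWithinAt)
        (fun t ht => by simp only [Set.mem_Ici] at ht ⊢; linarith)
      simpa [Function.comp_def] using this
    refine (((hasDerivWithinAt_id s _).mul h1).sub (hqd s hs)).congr_deriv ?_
    simp only [hF, id]
    ring
  have hepd : ∀ s, 3 ≤ s → HasDerivWithinAt ep (-(s * dm (s - 1))) (Set.Ici s) s := by
    intro s hs
    have h1 : HasDerivWithinAt (fun s => f (s - 1)) (dm (s - 1)) (Set.Ici s) s := by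
      have := (hfd (s - 1) (by linarith)).scomp (h := fun s : ℝ => s - 1) (h' := 1) (s := Set.Ici s) s
        (((hasDerivAt_id s).sub_const 1).hasDerivWithinAt)
        (fun t ht => by simp only [Set.mem_Ici] at ht ⊢; linarith)
      simpa [Function.comp_def] using this
    refine ((hpd s (by linarith)).sub ((hasDerivWithinAt_id s _).mul h1)).congr_deriv ?_
    simp only [hf, id]
    ring
  have hdmem : ∀ s, s ≠ 0 → dm s = em s / s ^ 2 := by
    intro s hs
    simp only [hdm, hem, hf]
    field_simp
  have hdpep : ∀ s, s ≠ 0 → dp s = ep s / s ^ 2 := by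
    intro s hs
    simp only [hdp, hep, hF]
    field_simp
  have hemc : ContinuousOn em (Set.Ici 2) :=
    (continuousOn_id.mul ((hFc 1 one_pos).comp hsc hms)).sub hqc.continuousOn
  have hepc : ContinuousOn ep (Set.Ici 2) :=
    hpc.continuousOn.sub (continuousOn_id.mul ((hfc 1 one_pos).comp hsc hms))
  have hepc3 : ContinuousOn ep (Set.Ici 3) :=
    hepc.mono (Set.Ici_subset_Ici.mpr (by norm_num))
  have hep3 : ∀ s, s ≤ 3 → ep s = 2 := fun s hs => by
    simp only [hep]; rw [hp3 s hs, hf2 _ (by linarith)]; ring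
  have hemanti : ∀ x y, 2 ≤ x → x ≤ y → em y ≤ em x := fun x y hx hxy =>
    antitoneOn_of_right_deriv hemc hemd (b := y)
      (fun t ht _ => by
        have := mul_pos (by linarith : 0 < t) (hdppos (t - 1) (by linarith))
        linarith) hx hxy le_rfl
  have hepanti3 : ∀ x y, 3 ≤ x → x ≤ y → ep y ≤ ep x := fun x y hx hxy =>
    antitoneOn_of_right_deriv hepc3 hepd (b := y)
      (fun t ht _ => by
        have := mul_pos (by linarith : 0 < t) (hdmpos (t - 1) (by linarith))
        linarith) hx hxy le_rfl
  have hepanti : ∀ x y, x ≤ y → ep y ≤ ep x := by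
    intro x y hxy
    rcases le_total 3 x with h | h
    · exact hepanti3 x y h hxy
    · rcases le_total 3 y with h' | h'
      · rw [hep3 x h, ← hep3 3 le_rfl]; exact hepanti3 3 y le_rfl h'
      · rw [hep3 x h, hep3 y h']
  have hdmanti : ∀ x y, 2 ≤ x → x ≤ y → dm y ≤ dm x := by
    intro x y hx hxy
    have h1 := hemanti x y hx hxy
    have hx0 : 0 < x := by linarith
    have hy0 : 0 < y := by linarith
    have h2 := hdmpos y (by linarith)
    rw [hdmem y hy0.ne'] at h2 ⊢
    rw [hdmem x hx0.ne']
    have h4 : 0 < em y := by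
      rcases div_pos_iff.mp h2 with h | h
      · exact h.1
      · exact absurd h.2 (not_lt.mpr (by positivity))
    have h5 := h4.le.trans h1
    gcongr
  have hdpanti : ∀ x y, 0 < x → x ≤ y → dp y ≤ dp x := by
    intro x y hx0 hxy
    have h1 := hepanti x y hxy
    have hy0 : 0 < y := by linarith
    have h2 := hdppos y (by linarith)
    rw [hdpep y hy0.ne'] at h2 ⊢
    rw [hdpep x hx0.ne']
    have h4 : 0 < ep y := by
      rcases div_pos_iff.mp h2 with h | h
      · exact h.1
      · exact absurd h.2 (not_lt.mpr (by positivity))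
    have h5 := h4.le.trans h1
    gcongr
  -- derivatives of `dm`, `dp`
  have hdmd : ∀ s, 2 ≤ s → HasDerivWithinAt dm (-(dp (s - 1) + 2 * dm s) / s) (Set.Ici s) s := by
    intro s hs
    have hs0 : s ≠ 0 := by linarith
    have h1 := (hemd s hs).div ((hasDerivAt_pow 2 s).hasDerivWithinAt (s := Set.Ici s))
      (pow_ne_zero 2 hs0)
    refine (h1.congr (fun t ht => hdmem t ?_) (hdmem s hs0)).congr_deriv ?_
    · have := Set.mem_Ici.mp ht
      linarith
    · rw [hdmem s hs0]
      field_simp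
      ring
  have hdpd3 : ∀ s, 3 ≤ s → HasDerivWithinAt dp (-(dm (s - 1) + 2 * dp s) / s) (Set.Ici s) s := by
    intro s hs
    have hs0 : s ≠ 0 := by linarith
    have h1 := (hepd s hs).div ((hasDerivAt_pow 2 s).hasDerivWithinAt (s := Set.Ici s))
      (pow_ne_zero 2 hs0)
    refine (h1.congr (fun t ht => hdpep t ?_) (hdpep s hs0)).congr_deriv ?_
    · have := Set.mem_Ici.mp ht
      linarith
    · rw [hdpep s hs0]
      field_simp
      ring
  have hdpd0 : ∀ s, 0 < s → s < 3 → HasDerivAt dp (-4 / s ^ 3) s := by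
    intro s h0 h3
    have h1 : HasDerivAt (fun t : ℝ => 2 / t ^ 2) (-4 / s ^ 3) s := by
      refine ((hasDerivAt_const s (2 : ℝ)).div (hasDerivAt_pow 2 s)
        (pow_ne_zero 2 h0.ne')).congr_deriv ?_
      field_simp
      ring
    refine h1.congr_of_eventuallyEq ?_
    filter_upwards [Iio_mem_nhds h3, Ioi_mem_nhds h0] with t a1 a2
    exact hdp3 t a2 (le_of_lt a1)
  have hdpd : ∀ s, 1 / 2 ≤ s → HasDerivWithinAt dp
      (if s < 3 then -4 / s ^ 3 else -(dm (s - 1) + 2 * dp s) / s) (Set.Ici s) s := by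
    intro s hs
    split_ifs with h
    · exact (hdpd0 s (by linarith) h).hasDerivWithinAt
    · exact hdpd3 s (not_lt.mp h)
  have hdpc' : ContinuousOn dp (Set.Ici (1 / 2)) := by
    intro s hs
    have hs' : 1 / 2 ≤ s := hs
    rcases lt_or_ge s 3 with h | h
    · exact (hdpd0 s (by linarith) h).continuousAt.continuousWithinAt
    · exact (hdpc.continuousAt (Ici_mem_nhds (by linarith))).continuousWithinAt
  have hN1pos : 0 < N1 := by positivity
  have hshift : ∀ s : ℝ, 2 ≤ s → s ^ 7 ≤ 128 * (s - 1) ^ 7 := fun s hs => by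
    calc s ^ 7 ≤ (2 * (s - 1)) ^ 7 := by gcongr; linarith
      _ = 128 * (s - 1) ^ 7 := by ring
  have habs : ∀ s a b : ℝ, 1 ≤ s → 0 ≤ a → 0 ≤ b →
      |-(a + 2 * b) / s| * s ^ 7 ≤ a * s ^ 7 + 2 * (b * s ^ 7) := by
    intro s a b hs ha hb
    rw [abs_div, abs_neg, abs_of_nonneg (by positivity : 0 ≤ a + 2 * b),
      abs_of_nonneg (by linarith : 0 ≤ s)]
    have : (a + 2 * b) / s ≤ a + 2 * b := div_le_self (by positivity) hs
    have h7 : 0 ≤ s ^ 7 := by positivity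
    nlinarith
  have hbdd : BddAbove (Set.range f) := ⟨F 1, by rintro _ ⟨x, rfl⟩; exact hcross x 1 one_pos⟩
  exact ⟨{
    F := F
    f := f
    hp := dp
    hm := dm
    κ := ⨆ x, f x
    N := 130 * N1 + 400
    κ_pos := hf3.trans_le (le_ciSup hbdd 3)
    N_pos := by positivity
    F_anti := hFanti
    f_mono := hfmono
    f_zero := hf2
    F_ge := fun x hx => ciSup_le fun y => hcross y x hx
    f_le := fun x => le_ciSup hbdd x
    F_eq := fun x _ h => hF3 x h
    f_step := by
      intro a b ha hab
      have := monotoneOn_of_right_deriv (f := fun t => q t - F (b - 1) * t)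
        (f' := fun t => p (t - 1) / (t - 1) - F (b - 1) * 1) (a := 2)
        (hqc.sub (continuous_const.mul continuous_id)).continuousOn
        (fun t ht => (hqd t ht).sub ((hasDerivWithinAt_id t _).const_mul _)) (b := b)
        (fun t h1 h2 => by
          have := hFanti (t - 1) (b - 1) (by linarith) (by linarith)
          simp only [hF] at this ⊢
          linarith) ha hab le_rfl
      have e1 : b * f b = q b := by
        have : b ≠ 0 := by linarith
        simp only [hf]; field_simp
      have e2 : a * f a = q a := by
        have : a ≠ 0 := by linarith
        simp only [hf]; field_simp
      rw [e1, e2]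
      linarith
    F_step := by
      intro a b ha hab
      have := antitoneOn_of_right_deriv (f := fun t => p t - f (b - 1) * t)
        (f' := fun t => q (t - 1) / (t - 1) - f (b - 1) * 1) (a := 2)
        (hpc.sub (continuous_const.mul continuous_id)).continuousOn
        (fun t ht => (hpd t ht).sub ((hasDerivWithinAt_id t _).const_mul _)) (b := b)
        (fun t h1 h2 => by
          have := hfmono (t - 1) (b - 1) (by linarith)
          simp only [hf] at this ⊢
          linarith) ha hab le_rfl
      have e1 : b * F b = p b := by
        have : b ≠ 0 := by linarith
        simp only [hF]; field_simp
      have e2 : a * F a = p a := by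
        have : a ≠ 0 := by linarith
        simp only [hF]; field_simp
      rw [e1, e2]
      linarith
    F_convex := by
      intro x y hx hy
      have hd : ∀ a, 0 < a → ∀ t, a ≤ t →
          HasDerivWithinAt (fun t => F t + dp y * t) (-dp t + dp y * 1) (Set.Ici t) t :=
        fun a ha t ht => (hFd t (by linarith)).add ((hasDerivWithinAt_id t _).const_mul _)
      have hc : ∀ a, 0 < a → ContinuousOn (fun t => F t + dp y * t) (Set.Ici a) := fun a ha =>
        (hFc a ha).add (continuous_const.mul continuous_id).continuousOn
      rcases le_total x y with h | h
      · have := antitoneOn_of_right_deriv (hc x hx) (hd x hx) (b := y)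
          (fun t h1 h2 => by linarith [hdpanti t y (by linarith) h2.le]) le_rfl h le_rfl
        linarith
      · have := monotoneOn_of_right_deriv (hc y hy) (hd y hy) (b := x)
          (fun t h1 h2 => by linarith [hdpanti y t (by linarith) h1]) le_rfl h le_rfl
        linarith
    f_concave := by
      intro x y hx hy
      have hd : ∀ t, 2 ≤ t →
          HasDerivWithinAt (fun t => f t - dm y * t) (dm t - dm y * 1) (Set.Ici t) t :=
        fun t ht => (hfd t ht).sub ((hasDerivWithinAt_id t _).const_mul _)
      have hc : ContinuousOn (fun t => f t - dm y * t) (Set.Ici 2) :=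
        (hfc 2 two_pos).sub (continuous_const.mul continuous_id).continuousOn
      rcases le_total x y with h | h
      · have := monotoneOn_of_right_deriv hc hd (b := y)
          (fun t h1 h2 => by linarith [hdmanti t y h1 h2.le]) hx h le_rfl
        linarith
      · have := antitoneOn_of_right_deriv (a := y) (hc.mono (Set.Ici_subset_Ici.mpr hy))
          (fun t ht => hd t (hy.trans ht)) (b := x)
          (fun t h1 h2 => by linarith [hdmanti y t hy h1]) le_rfl h le_rfl
        linarith
    hp_pos := hdppos
    hm_pos := hdmpos
    hp_anti := hdpanti
    hm_anti := hdmanti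
    hp_le := fun x hx => (hdp7 x hx).trans (by linarith)
    hm_le := fun x hx => (hdm7 x hx).trans (by linarith)
    hp_lip := by
      intro x y hx hxy
      refine lip_of_right_deriv (by norm_num) hdpc' hdpd (fun t ht => ?_) hx hxy
      have ht0 : 0 < t := by linarith
      split_ifs with h
      · rw [abs_div, abs_of_pos (by positivity : 0 < t ^ 3)]
        have e : |(-4 : ℝ)| / t ^ 3 * t ^ 7 = 4 * t ^ 4 := by
          rw [abs_neg, abs_of_pos (by norm_num : (0 : ℝ) < 4)]; field_simp
        have : t ^ 4 ≤ 3 ^ 4 := by gcongr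
        rw [e]; linarith
      · have h3 := not_lt.mp h
        refine (habs t _ _ (by linarith) (hdmpos (t - 1) (by linarith)).le
          (hdppos t ht0).le).trans ?_
        have h4 := mul_le_mul_of_nonneg_left (hshift t (by linarith))
          (hdmpos (t - 1) (by linarith)).le
        have h5 := hdm7 (t - 1) (by linarith)
        have h6 := hdp7 t ht
        linarith
    hm_lip := by
      intro x y hx hxy
      refine lip_of_right_deriv two_pos hdmc hdmd (fun t ht => ?_) hx hxy
      refine (habs t _ _ (by linarith) (hdppos (t - 1) (by linarith)).le
          (hdmpos t ht).le).trans ?_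
      have h4 := mul_le_mul_of_nonneg_left (hshift t (by linarith))
          (hdppos (t - 1) (by linarith)).le
      have h5 := hdp7 (t - 1) (by linarith)
      have h6 := hdm7 t ht
      linarith }⟩

/-! ### Error terms in one step of the sieve induction -/

/-- Error term `v^{-5/2} (v/U)^6` of the sieve induction. -/
def sieveErr (U v : ℝ) : ℝ := v ^ 3 * √v / U ^ 6

/-- The constant governing how large `v` must be for one induction step. -/
def LinSieve.C (L : LinSieve) (R0 CR : ℝ) : ℝ := L.N * 4 ^ 7 * R0 ^ 2 + CR * L.N * 4 ^ 8

/-- For `s ≤ 11` the gain `K h` dominates; for larger `s` the ratio `(s/y)^6` is at most `2`. -/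
theorem step_numeric {K h s y : ℝ} (hh : 0 ≤ K * h) (hs : 2 ≤ s) (hy : s - 11 / 10 ≤ y)
    (hK : s ≤ 11 → 8 ≤ K * h) : 1 / y ^ 6 ≤ K * h / 4 + 2 / s ^ 6 := by
  have hy0 : 9 / 10 ≤ y := by linarith
  rcases le_total s 11 with h1 | h1
  · have h2 := hK h1
    have h3 : 1 / y ^ 6 ≤ 2 := by
      have : (9 / 10 : ℝ) ^ 6 ≤ y ^ 6 := by gcongr
      rw [div_le_iff₀ (by positivity)]
      norm_num at this
      linarith
    have : 0 < 2 / s ^ 6 := by positivity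
    linarith
  · have h3 : 1 / y ^ 6 ≤ 2 / s ^ 6 := by
      have : (9 / 10 * s) ^ 6 ≤ y ^ 6 := by gcongr; linarith
      rw [mul_pow] at this
      rw [div_le_div_iff₀ (by positivity) (by positivity)]
      have h6 : 0 < s ^ 6 := by positivity
      norm_num at this
      linarith
    linarith

/-- The change of the sieve variable `s = U / v` over one prime `p`. -/
theorem step_s {K v p s U U' v' : ℝ} (hv : 1 ≤ v) (hK0 : 0 < K) (hK : K ≤ v) (hp : 4 ≤ p)
    (hs : U = s * v) (hs2 : 2 ≤ s) (hv' : v' = v * p / (p - 1)) (hU' : U' = U - K / (p * √v)) :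
    U' / v' ≤ s ∧ s - U' / v' ≤ (s + 1) / p ∧ s / 2 ≤ U' / v' := by
  have hsq : 1 ≤ √v := Real.one_le_sqrt.mpr hv
  have e : s - U' / v' = s / p + (1 - 1 / p) * (K / v) / √v / p := by
    subst hs hv' hU'
    have : p - 1 ≠ 0 := by linarith
    have : p ≠ 0 := by linarith
    have : v ≠ 0 := by linarith
    have : √v ≠ 0 := by linarith
    field_simp
    ring
  have h1 : (1 - 1 / p) * (K / v) / √v ≤ 1 := by
    have a1 : K / v ≤ 1 := (div_le_one (by linarith)).mpr hK
    have a2 : 0 < K / v := by positivity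
    have a3 : 0 < 1 / p := by positivity
    rw [div_le_one (by linarith)]
    nlinarith
  have h0 : 0 ≤ (1 - 1 / p) * (K / v) / √v := by
    have : 1 / p ≤ 1 := (div_le_one (by linarith)).mpr (by linarith)
    have : 0 ≤ 1 - 1 / p := by linarith
    positivity
  have h2 : (1 - 1 / p) * (K / v) / √v / p ≤ 1 / p := by
    gcongr
  have h3 : 0 ≤ (1 - 1 / p) * (K / v) / √v / p := by positivity
  have h4 : 0 ≤ s / p := by positivity
  refine ⟨by linarith, by rw [e, add_div]; linarith, ?_⟩
  have h5 : s / p ≤ s / 4 := by gcongr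
  have h6 : 1 / p ≤ 1 / 4 := by gcongr
  linarith

/-- The change of the weight `h(x) / v²` over one prime `p`. -/
theorem step_g {N v p s v' x x' hx hx' : ℝ} (hv : 1 ≤ v) (hN : 0 < N) (hp : 4 ≤ p) (hs2 : 2 ≤ s)
    (hv' : v' = v * p / (p - 1)) (hxx : x - x' ≤ (s + 1) / p) (hx4 : s / 4 ≤ x')
    (h0 : 0 ≤ hx') (h7 : hx' * x' ^ 7 ≤ N) (hlip : |hx - hx'| ≤ N / x' ^ 7 * (x - x')) :
    |hx' / v' ^ 2 - hx / v ^ 2| ≤ N * 4 ^ 8 / (p * s ^ 6 * v ^ 2) := by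
  have hp1 : 0 < p - 1 := by linarith
  have hx'0 : 0 < x' := by linarith
  have e : hx' / v' ^ 2 - hx / v ^ 2 = -(hx - hx') / v ^ 2 - hx' * (2 / p - 1 / p ^ 2) / v ^ 2 := by
    subst hv'
    field_simp
    ring
  have hb : N / x' ^ 7 ≤ N * 4 ^ 7 / s ^ 7 := by
    have : s ^ 7 / 4 ^ 7 ≤ x' ^ 7 := by rw [← div_pow]; gcongr
    rw [div_le_div_iff₀ (by positivity) (by positivity)]
    have : s ^ 7 ≤ x' ^ 7 * 4 ^ 7 := by rwa [div_le_iff₀ (by positivity)] at this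
    nlinarith
  have h1 : hx' ≤ N * 4 ^ 7 / s ^ 7 := ((le_div_iff₀ (by positivity)).mpr h7).trans hb
  have hq : 0 ≤ 2 / p - 1 / p ^ 2 ∧ 2 / p - 1 / p ^ 2 ≤ 2 / p := by
    have a : 0 < 1 / p ^ 2 := by positivity
    have b : 1 / p ^ 2 ≤ 1 / p := by
      gcongr; nlinarith
    have c : 2 / p = 1 / p + 1 / p := by ring
    constructor <;> linarith
  have h2 : |hx - hx'| ≤ N * 4 ^ 7 / s ^ 7 * ((s + 1) / p) := by
    refine hlip.trans ?_
    have : 0 ≤ x - x' := by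
      by_contra! hneg
      have h1 : N / x' ^ 7 * (x - x') < 0 := mul_neg_of_pos_of_neg (by positivity) hneg
      linarith [abs_nonneg (hx - hx')]
    gcongr
  have h3 : hx' * (2 / p - 1 / p ^ 2) ≤ N * 4 ^ 7 / s ^ 7 * (2 / p) := by
    have := hq.1
    have := hq.2
    gcongr
  rw [e]
  calc |-(hx - hx') / v ^ 2 - hx' * (2 / p - 1 / p ^ 2) / v ^ 2|
      ≤ |-(hx - hx') / v ^ 2| + |hx' * (2 / p - 1 / p ^ 2) / v ^ 2| := abs_sub _ _
    _ = |hx - hx'| / v ^ 2 + hx' * (2 / p - 1 / p ^ 2) / v ^ 2 := by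
        rw [abs_div, abs_neg, abs_of_pos (by positivity : 0 < v ^ 2),
          abs_of_nonneg (div_nonneg (mul_nonneg h0 hq.1) (by positivity))]
    _ ≤ N * 4 ^ 7 / s ^ 7 * ((s + 1) / p) / v ^ 2 + N * 4 ^ 7 / s ^ 7 * (2 / p) / v ^ 2 := by
        gcongr
    _ = N * 4 ^ 7 * (s + 3) / (s ^ 7 * p * v ^ 2) := by field_simp; ring
    _ ≤ N * 4 ^ 7 * (4 * s) / (s ^ 7 * p * v ^ 2) := by gcongr; linarith
    _ = N * 4 ^ 8 / (p * s ^ 6 * v ^ 2) := by field_simp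

/-- Growth of the error term over one prime. -/
theorem sieveErr_step {v p U U' v' : ℝ} (hv : 0 < v) (hp : 1 < p) (hU : U' ≤ U) (hU0 : 0 < U')
    (hv' : v' = v * p / (p - 1)) : (1 + 3 / p) * sieveErr U v ≤ sieveErr U' v' := by
  have hp1 : 0 < p - 1 := by linarith
  have hvv : v * (1 + 1 / p) ≤ v' := by
    rw [hv', mul_div_assoc]
    gcongr
    rw [le_div_iff₀ hp1]
    have : (1 + 1 / p) * (p - 1) = p - 1 / p := by field_simp; ring
    rw [this]
    have : 0 < 1 / p := by positivity
    linarith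
  have h1p : 0 < 1 / p := by positivity
  have hvv0 : v ≤ v' := by nlinarith
  unfold sieveErr
  have h3 : (1 + 3 / p) * v ^ 3 ≤ v' ^ 3 := by
    calc (1 + 3 / p) * v ^ 3 ≤ (1 + 1 / p) ^ 3 * v ^ 3 := by
          gcongr
          have : (1 + 1 / p) ^ 3 = 1 + 3 / p + 3 * (1 / p) ^ 2 + (1 / p) ^ 3 := by ring
          rw [this]
          have : 0 ≤ 3 * (1 / p) ^ 2 + (1 / p) ^ 3 := by positivity
          linarith
      _ = (v * (1 + 1 / p)) ^ 3 := by ring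
      _ ≤ v' ^ 3 := by gcongr
  calc (1 + 3 / p) * (v ^ 3 * √v / U ^ 6) = ((1 + 3 / p) * v ^ 3) * √v / U ^ 6 := by ring
    _ ≤ v' ^ 3 * √v' / U' ^ 6 := by
        have : 0 ≤ v' := by linarith
        gcongr

theorem sieveErr_scale {s v : ℝ} (hv : 0 < v) : sieveErr (s * v) v = √v / v ^ 3 / s ^ 6 := by
  unfold sieveErr
  rcases eq_or_ne s 0 with rfl | hs
  · simp
  · field_simp

/-- All the error terms of one step are controlled by the gain: the shift of `U` gives `K h`, and
the growth of the error term gives `3 s⁻⁶`. -/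
theorem step_final (L : LinSieve) {R0 CR K h s y v p v' : ℝ} (hv : 1 ≤ v) (hCR : 0 < CR)
    (hC : L.C R0 CR ≤ √v) (hp : 4 ≤ p) (hh : 0 ≤ K * h) (hs : 2 ≤ s) (hy : s - 11 / 10 ≤ y)
    (hK : s ≤ 11 → 8 ≤ K * h) (hv' : v' = v * p / (p - 1)) :
    1 / p * (√v / v ^ 3 / y ^ 6) + 1 / p * (L.N * 4 ^ 7 / s ^ 7 * R0 ^ 2 / v ^ 3) +
      CR / v * (L.N * 4 ^ 8 / (p * s ^ 6 * v ^ 2)) ≤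
    K * h / (p * √v) / v' ^ 2 + 3 / p * (√v / v ^ 3 / s ^ 6) := by
  have hN := L.N_pos
  have hsq : 1 ≤ √v := Real.one_le_sqrt.mpr hv
  have hp1 : 0 < p - 1 := by linarith
  have hy0 : 0 < y := by linarith
  have hvp : 0 < v' := by rw [hv']; positivity
  have hv2 : v' ≤ 2 * v := by
    rw [hv', div_le_iff₀ hp1]; nlinarith
  have hnum := step_numeric hh hs hy hK
  set Q : ℝ := √v / v ^ 3 with hQ
  have hQ0 : 0 < Q := by positivity
  have hsv : √v * √v = v := Real.mul_self_sqrt (by linarith)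
  have hg : K * h / 4 * Q / p ≤ K * h / (p * √v) / v' ^ 2 := by
    have e : K * h / 4 * Q / p = K * h / (p * √v) / (2 * v) ^ 2 := by
      rw [hQ]; field_simp; nlinarith
    rw [e]
    gcongr
  have hc : 1 / p * (L.N * 4 ^ 7 / s ^ 7 * R0 ^ 2 / v ^ 3) +
      CR / v * (L.N * 4 ^ 8 / (p * s ^ 6 * v ^ 2)) ≤ 1 / p * (Q / s ^ 6) := by
    have hs1 : s ^ 6 ≤ s ^ 7 := pow_le_pow_right₀ (by linarith) (by norm_num)
    calc 1 / p * (L.N * 4 ^ 7 / s ^ 7 * R0 ^ 2 / v ^ 3) +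
          CR / v * (L.N * 4 ^ 8 / (p * s ^ 6 * v ^ 2))
        ≤ 1 / p * (L.N * 4 ^ 7 / s ^ 6 * R0 ^ 2 / v ^ 3) +
          CR / v * (L.N * 4 ^ 8 / (p * s ^ 6 * v ^ 2)) := by gcongr
      _ = 1 / p * (L.C R0 CR / v ^ 3 / s ^ 6) := by
          unfold LinSieve.C; field_simp
      _ ≤ 1 / p * (√v / v ^ 3 / s ^ 6) := by gcongr
  calc _ ≤ 1 / p * (Q / y ^ 6) + 1 / p * (Q / s ^ 6) := by linarith
    _ = Q / p * (1 / y ^ 6) + Q / p / s ^ 6 := by ring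
    _ ≤ Q / p * (K * h / 4 + 2 / s ^ 6) + Q / p / s ^ 6 := by gcongr
    _ = K * h / 4 * Q / p + 3 / p * (Q / s ^ 6) := by ring
    _ ≤ _ := by linarith

/-! ### One prime of the sieve induction -/

theorem quarter_bound {N s x : ℝ} (hN : 0 < N) (hs : 2 ≤ s) (hx : s / 4 ≤ x) :
    N / x ^ 7 ≤ N * 4 ^ 7 / s ^ 7 := by
  have : N * 4 ^ 7 / s ^ 7 = N / (s / 4) ^ 7 := by rw [div_pow]; field_simp
  rw [this]
  gcongr

/-- One prime of the lower-bound induction. -/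
theorem step_lower (L : LinSieve) {R0 CR K R v p U U' v' : ℝ} (hv : 1 ≤ v) (hR0 : 0 < R0)
    (hCR : 0 < CR) (hvR : 10 * R0 ≤ v) (hK0 : 0 < K) (hvK : K ≤ v) (hC : L.C R0 CR ≤ √v)
    (hK : 8 ≤ K * L.hm 11) (hp : 4 ≤ p) (hR : |R| ≤ R0)
    (hv' : v' = v * p / (p - 1)) (hU' : U' = U - K / (p * √v)) (hs' : 2 * v' ≤ U') :
    1 / p * (L.F ((U - (v - R)) / v) / v + sieveErr (U - (v - R)) v) +
      1 / p * R * (L.hp (U / v - 1) / v ^ 2) +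
      CR / v * |L.hp (U' / v' - 1) / v' ^ 2 - L.hp (U / v - 1) / v ^ 2| ≤
    (L.f (U / v) / v - sieveErr U v) - (L.f (U' / v') / v' - sieveErr U' v') := by
  have hN := L.N_pos
  have hv0 : 0 < v := by linarith
  have hsq : 1 ≤ √v := Real.one_le_sqrt.mpr hv
  have hp1 : 0 < p - 1 := by linarith
  have hvp : 0 < v' := by rw [hv']; positivity
  have hvv : v ≤ v' := by rw [hv', le_div_iff₀ hp1]; nlinarith
  have hkp : 0 < K / (p * √v) := by positivity
  have hUU : U' ≤ U := by rw [hU']; linarith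
  have hs'2 : 2 ≤ U' / v' := by rwa [le_div_iff₀ hvp]
  set s := U / v with hs
  have hUs : U = s * v := by rw [hs]; field_simp
  have hss : U' / v' ≤ s := by rw [hs]; gcongr; linarith
  have hs2 : 2 ≤ s := by linarith
  obtain ⟨-, hsd, hsh⟩ := step_s hv hK0 hvK hp hUs hs2 hv' hU'
  -- the point where the upper bound for the sifted multiples of `p` is evaluated
  set y := s - 1 + R / v with hy
  have hRv : |R / v| ≤ 1 / 10 := by
    rw [abs_div, abs_of_pos hv0, div_le_iff₀ hv0]; linarith
  have hRv' := abs_le.mp hRv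
  have hyU : (U - (v - R)) = y * v := by rw [hUs, hy]; field_simp; ring
  have hyd : (U - (v - R)) / v = y := by rw [hyU]; field_simp
  have hy1 : s - 11 / 10 ≤ y := by rw [hy]; linarith
  set a := U / v' with ha
  have haa : U' / v' ≤ a := by rw [ha]; gcongr
  have has : a ≤ s := by
    rw [ha, hs]
    have : 0 < U := by rw [hUs]; positivity
    gcongr
  have h1 : L.F (s - 1) / (p * v) ≤ L.f s / v - L.f a / v' := by
    have h := L.f_step a s (by linarith) has
    have hU0 : 0 < U := by rw [hUs]; positivity
    have e1 : L.f s / v = s * L.f s / U := by rw [hUs]; field_simp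
    have e2 : L.f a / v' = a * L.f a / U := by rw [ha]; field_simp
    have e3 : (s - a) / U = 1 / (p * v) := by
      rw [ha, hv', hs]; field_simp; ring
    calc L.F (s - 1) / (p * v) = (s - a) * L.F (s - 1) / U := by
          rw [mul_div_right_comm, e3]; ring
      _ ≤ (s * L.f s - a * L.f a) / U := by gcongr
      _ = _ := by rw [e1, e2]; ring
  have h2 : L.f (U' / v') / v' ≤ L.f a / v' - K * L.hm s / (p * √v) / v' ^ 2 := by
    have h := L.f_concave (U' / v') a hs'2 (by linarith)
    have hm := L.hm_anti a s (by linarith) has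
    have e : U' / v' - a = -(K / (p * √v) / v') := by rw [ha, hU']; ring
    rw [e] at h
    have h' : L.hm s * (K / (p * √v) / v') ≤ L.hm a * (K / (p * √v) / v') := by gcongr
    calc L.f (U' / v') / v' ≤ (L.f a - L.hm s * (K / (p * √v) / v')) / v' := by gcongr; linarith
      _ = _ := by field_simp
  have h3 := sieveErr_step hv0 (by linarith : 1 < p) hUU (by linarith [mul_pos two_pos hvp]) hv'
  -- expansion of the upper function around `s - 1`
  have hlip : |L.hp y - L.hp (s - 1)| ≤ L.N * 4 ^ 7 / s ^ 7 * (R0 / v) := by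
    have hd : |y - (s - 1)| ≤ R0 / v := by
      have : y - (s - 1) = R / v := by rw [hy]; ring
      rw [this, abs_div, abs_of_pos hv0]; gcongr
    rcases le_total (s - 1) y with h | h
    · refine (L.hp_lip (s - 1) y (by linarith) h).trans ?_
      rw [← abs_of_nonneg (sub_nonneg.mpr h)]
      have := quarter_bound hN hs2 (by linarith : s / 4 ≤ s - 1)
      gcongr
    · rw [abs_sub_comm]
      refine (L.hp_lip y (s - 1) (by linarith) h).trans ?_
      rw [abs_sub_comm] at hd
      rw [← abs_of_nonneg (sub_nonneg.mpr h)]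
      have := quarter_bound hN hs2 (by linarith : s / 4 ≤ y)
      gcongr
  have h4 : L.F y / v ≤ L.F (s - 1) / v - R * (L.hp (s - 1) / v ^ 2) +
      L.N * 4 ^ 7 / s ^ 7 * R0 ^ 2 / v ^ 3 := by
    have h := L.F_convex (s - 1) y (by linarith) (by linarith)
    have e : y - (s - 1) = R / v := by rw [hy]; ring
    rw [e] at h
    have hm : |(L.hp y - L.hp (s - 1)) * (R / v)| ≤ L.N * 4 ^ 7 / s ^ 7 * (R0 / v) * (R0 / v) := by
      rw [abs_mul, abs_div, abs_of_pos hv0]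
      gcongr
    have hm' := (abs_le.mp hm).1
    calc L.F y / v ≤ (L.F (s - 1) - L.hp (s - 1) * (R / v) +
          L.N * 4 ^ 7 / s ^ 7 * (R0 / v) * (R0 / v)) / v := by gcongr; linarith
      _ = _ := by field_simp
  -- variation of the weights
  have h5 : |L.hp (U' / v' - 1) / v' ^ 2 - L.hp (s - 1) / v ^ 2| ≤
      L.N * 4 ^ 8 / (p * s ^ 6 * v ^ 2) := by
    refine step_g (x := s - 1) (x' := U' / v' - 1) hv hN hp hs2 hv' (by linarith) (by linarith)
      (L.hp_pos _ (by linarith)).le (L.hp_le _ (by linarith)) ?_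
    exact L.hp_lip _ _ (by linarith) (by linarith)
  have h6 := step_final L (h := L.hm s) hv hCR hC hp (mul_pos hK0 (L.hm_pos s hs2)).le hs2 hy1
    (fun h => hK.trans (by have := L.hm_anti s 11 hs2 h; gcongr)) hv'
  rw [hyd, hyU, sieveErr_scale hv0]
  rw [hUs, sieveErr_scale hv0] at h3 ⊢
  have h4' : 1 / p * (L.F y / v) ≤ L.F (s - 1) / (p * v) - 1 / p * R * (L.hp (s - 1) / v ^ 2) +
      1 / p * (L.N * 4 ^ 7 / s ^ 7 * R0 ^ 2 / v ^ 3) := by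
    calc 1 / p * (L.F y / v) ≤ 1 / p * (L.F (s - 1) / v - R * (L.hp (s - 1) / v ^ 2) +
      L.N * 4 ^ 7 / s ^ 7 * R0 ^ 2 / v ^ 3) := by gcongr
      _ = _ := by field_simp
  have h5' : CR / v * |L.hp (U' / v' - 1) / v' ^ 2 - L.hp (s - 1) / v ^ 2| ≤
      CR / v * (L.N * 4 ^ 8 / (p * s ^ 6 * v ^ 2)) := by gcongr
  linarith

/-- One prime of the upper-bound induction. Here `B` is any nonnegative lower bound for the
normalised count of sifted multiples of `p`. -/
theorem step_upper (L : LinSieve) {R0 CR K R v p U U' v' B : ℝ} (hv : 1 ≤ v) (hR0 : 0 < R0)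
    (hCR : 0 < CR) (hvR : 10 * R0 ≤ v) (hK0 : 0 < K) (hvK : K ≤ v) (hC : L.C R0 CR ≤ √v)
    (hK : 8 ≤ K * L.hp 11) (hp : 4 ≤ p) (hR : |R| ≤ R0)
    (hv' : v' = v * p / (p - 1)) (hU' : U' = U - K / (p * √v)) (hs3 : 3 * v ≤ U)
    (hB0 : 0 ≤ B)
    (hB : 2 * v ≤ U - (v - R) → L.f ((U - (v - R)) / v) / v - sieveErr (U - (v - R)) v ≤ B) :
    1 / p * R * (L.hm (max (U / v - 1) 2) / v ^ 2) +
      CR / v * |L.hm (max (U' / v' - 1) 2) / v' ^ 2 - L.hm (max (U / v - 1) 2) / v ^ 2| -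
      1 / p * B ≤
    (L.F (U' / v') / v' + sieveErr U' v') - (L.F (U / v) / v + sieveErr U v) := by
  have hN := L.N_pos
  have hv0 : 0 < v := by linarith
  have hsq : 1 ≤ √v := Real.one_le_sqrt.mpr hv
  have hp1 : 0 < p - 1 := by linarith
  have hvp : 0 < v' := by rw [hv']; positivity
  have hvv : v ≤ v' := by rw [hv', le_div_iff₀ hp1]; nlinarith
  have hkp : 0 < K / (p * √v) := by positivity
  have hUU : U' ≤ U := by rw [hU']; linarith
  set s := U / v with hs
  have hUs : U = s * v := by rw [hs]; field_simp
  have hs3' : 3 ≤ s := by rw [hs, le_div_iff₀ hv0]; exact hs3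
  have hs2 : 2 ≤ s := by linarith
  obtain ⟨hss, hsd, hsh⟩ := step_s hv hK0 hvK hp hUs hs2 hv' hU'
  have hU'0 : 0 < U' := by
    have h : 0 < U' / v' := by linarith
    exact (div_pos_iff_of_pos_right hvp).mp h
  set y := s - 1 + R / v with hy
  have hRv : |R / v| ≤ 1 / 10 := by
    rw [abs_div, abs_of_pos hv0, div_le_iff₀ hv0]; linarith
  have hRv' := abs_le.mp hRv
  have hyU : (U - (v - R)) = y * v := by rw [hUs, hy]; field_simp; ring
  have hyd : (U - (v - R)) / v = y := by rw [hyU]; field_simp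
  have hy1 : s - 11 / 10 ≤ y := by rw [hy]; linarith
  have hU0 : 0 < U := by rw [hUs]; positivity
  set a := U / v' with ha
  have haa : U' / v' ≤ a := by rw [ha]; gcongr
  have has : a ≤ s := by
    rw [ha, hs]
    gcongr
  have ha2 : 2 ≤ a := by
    rw [ha, le_div_iff₀ hvp, hv', ← mul_div_assoc, div_le_iff₀ hp1]
    nlinarith
  rw [max_eq_left (by linarith : 2 ≤ s - 1)]
  have h1 : L.F s / v - L.F a / v' ≤ L.f (s - 1) / (p * v) := by
    have h := L.F_step a s (by linarith) has
    have e1 : L.F s / v = s * L.F s / U := by rw [hUs]; field_simp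
    have e2 : L.F a / v' = a * L.F a / U := by rw [ha]; field_simp
    have e3 : (s - a) / U = 1 / (p * v) := by
      rw [ha, hv', hs]; field_simp; ring
    calc L.F s / v - L.F a / v' = (s * L.F s - a * L.F a) / U := by rw [e1, e2]; ring
      _ ≤ (s - a) * L.f (s - 1) / U := by gcongr
      _ = L.f (s - 1) / (p * v) := by
          rw [mul_div_right_comm, e3]; ring
  have h2 : L.F a / v' + K * L.hp s / (p * √v) / v' ^ 2 ≤ L.F (U' / v') / v' := by
    have h := L.F_convex (U' / v') a (by positivity) (by linarith)
    have hm := L.hp_anti a s (by linarith) has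
    have e : a - U' / v' = K / (p * √v) / v' := by rw [ha, hU']; ring
    rw [e] at h
    have h' : L.hp s * (K / (p * √v) / v') ≤ L.hp a * (K / (p * √v) / v') := by gcongr
    calc _ = (L.F a + L.hp s * (K / (p * √v) / v')) / v' := by field_simp
      _ ≤ L.F (U' / v') / v' := by gcongr; linarith
  have h3 := sieveErr_step hv0 (by linarith : 1 < p) hUU hU'0 hv'
  -- below `2` the lower function vanishes, so the argument may be raised to `2`
  set y2 := max y 2 with hy2
  have hy2y : y ≤ y2 := le_max_left _ _
  have hy22 : 2 ≤ y2 := le_max_right _ _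
  have hd : |y2 - (s - 1)| ≤ R0 / v := by
    have h' : |y - (s - 1)| ≤ R0 / v := by
      have : y - (s - 1) = R / v := by rw [hy]; ring
      rw [this, abs_div, abs_of_pos hv0]; gcongr
    refine le_trans ?_ h'
    rcases le_total 2 y with h | h
    · rw [hy2, max_eq_left h]
    · rw [hy2, max_eq_right h, abs_of_nonpos (by linarith), abs_of_nonpos (by linarith)]
      linarith
  have hlip : |L.hm y2 - L.hm (s - 1)| ≤ L.N * 4 ^ 7 / s ^ 7 * (R0 / v) := by
    rcases le_total (s - 1) y2 with h | h
    · refine (L.hm_lip (s - 1) y2 (by linarith) h).trans ?_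
      rw [← abs_of_nonneg (sub_nonneg.mpr h)]
      have := quarter_bound hN hs2 (by linarith : s / 4 ≤ s - 1)
      gcongr
    · rw [abs_sub_comm]
      refine (L.hm_lip y2 (s - 1) (by linarith) h).trans ?_
      rw [abs_sub_comm] at hd
      rw [← abs_of_nonneg (sub_nonneg.mpr h)]
      have := quarter_bound hN hs2 (by linarith : s / 4 ≤ y2)
      gcongr
  have h4 : L.f (s - 1) / v + R * (L.hm (s - 1) / v ^ 2) -
      L.N * 4 ^ 7 / s ^ 7 * R0 ^ 2 / v ^ 3 ≤ L.f y2 / v := by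
    have h := L.f_concave (s - 1) y2 (by linarith) hy22
    have e : (s - 1) - y2 ≤ -(R / v) := by linarith
    have h' : L.hm y2 * ((s - 1) - y2) ≤ L.hm y2 * (-(R / v)) :=
      mul_le_mul_of_nonneg_left e (L.hm_pos y2 hy22).le
    have hm : |(L.hm y2 - L.hm (s - 1)) * (R / v)| ≤
        L.N * 4 ^ 7 / s ^ 7 * (R0 / v) * (R0 / v) := by
      rw [abs_mul, abs_div, abs_of_pos hv0]
      gcongr
    have hm' := (abs_le.mp hm).1
    calc _ = (L.f (s - 1) + L.hm (s - 1) * (R / v) -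
          L.N * 4 ^ 7 / s ^ 7 * (R0 / v) * (R0 / v)) / v := by field_simp
      _ ≤ L.f y2 / v := by gcongr; linarith
  have hBy : L.f y2 / v ≤ B + √v / v ^ 3 / y ^ 6 := by
    rcases le_total 2 y with h | h
    · have h' := hB (by rw [hyU]; gcongr)
      rw [hyd, hyU, sieveErr_scale hv0] at h'
      rw [hy2, max_eq_left h]
      linarith
    · rw [hy2, max_eq_right h, L.f_zero 2 le_rfl, zero_div]
      have : 0 ≤ √v / v ^ 3 / y ^ 6 := by positivity
      linarith
  have h5 : |L.hm (max (U' / v' - 1) 2) / v' ^ 2 - L.hm (s - 1) / v ^ 2| ≤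
      L.N * 4 ^ 8 / (p * s ^ 6 * v ^ 2) := by
    have hx : max (U' / v' - 1) 2 ≤ s - 1 := max_le (by linarith) (by linarith)
    have hx1 := le_max_left (U' / v' - 1) 2
    have hx2 := le_max_right (U' / v' - 1) 2
    refine step_g (x := s - 1) (x' := max (U' / v' - 1) 2) hv hN hp hs2 hv' (by linarith)
      (by linarith) (L.hm_pos _ hx2).le (L.hm_le _ hx2) ?_
    exact L.hm_lip _ _ hx2 hx
  have h6 := step_final L (h := L.hp s) hv hCR hC hp (mul_pos hK0 (L.hp_pos s (by linarith))).le
    hs2 hy1 (fun h => hK.trans (by have := L.hp_anti s 11 (by linarith) h; gcongr)) hv'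
  rw [hUs, sieveErr_scale hv0] at h3 ⊢
  have h4' : L.f (s - 1) / (p * v) + 1 / p * R * (L.hm (s - 1) / v ^ 2) -
      1 / p * (L.N * 4 ^ 7 / s ^ 7 * R0 ^ 2 / v ^ 3) ≤
      1 / p * B + 1 / p * (√v / v ^ 3 / y ^ 6) := by
    calc _ = 1 / p * (L.f (s - 1) / v + R * (L.hm (s - 1) / v ^ 2) -
          L.N * 4 ^ 7 / s ^ 7 * R0 ^ 2 / v ^ 3) := by field_simp
      _ ≤ 1 / p * (B + √v / v ^ 3 / y ^ 6) := by
          gcongr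
          exact h4.trans hBy
      _ = _ := by ring
  have h5' : CR / v * |L.hm (max (U' / v' - 1) 2) / v' ^ 2 - L.hm (s - 1) / v ^ 2| ≤
      CR / v * (L.N * 4 ^ 8 / (p * s ^ 6 * v ^ 2)) := by gcongr
  linarith

/-! ### Sifted intervals and the Buchstab identity -/

open Classical in
/-- The integers in `(a, a + X]` free of prime factors below `z`. -/
def siftSet (a X : ℝ) (z : ℕ) : Finset ℤ :=
  {n ∈ Ioc ⌊a⌋ ⌊a + X⌋ | ∀ q < z, q.Prime → ¬ (q : ℤ) ∣ n}

/-- The number of integers in `(a, a + X]` free of prime factors below `z`. -/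
def sift (a X : ℝ) (z : ℕ) : ℝ := #(siftSet a X z)

theorem mem_siftSet {a X : ℝ} {z : ℕ} {n : ℤ} :
    n ∈ siftSet a X z ↔ (a < n ∧ n ≤ a + X) ∧ ∀ q < z, q.Prime → ¬ (q : ℤ) ∣ n := by
  simp [siftSet, Int.floor_lt, Int.le_floor]

theorem sift_nonneg (a X : ℝ) (z : ℕ) : 0 ≤ sift a X z := Nat.cast_nonneg _

theorem sift_anti (a X : ℝ) {z w : ℕ} (h : z ≤ w) : sift a X w ≤ sift a X z := by
  unfold sift
  norm_cast
  refine card_le_card fun n hn => ?_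
  rw [mem_siftSet] at hn ⊢
  exact ⟨hn.1, fun q hq => hn.2 q (hq.trans_le h)⟩

theorem sift_succ_of_not_prime (a X : ℝ) {z : ℕ} (h : ¬ z.Prime) : sift a X (z + 1) = sift a X z := by
  unfold sift
  congr 2
  ext n
  rw [mem_siftSet, mem_siftSet]
  refine and_congr_right fun _ => ⟨fun H q hq => H q (by omega), fun H q hq hqp => ?_⟩
  rcases eq_or_ne q z with rfl | hne
  · exact absurd hqp h
  · exact H q (by omega) hqp

open Classical in
/-- Integers free of primes below `p` and divisible by `p` are the multiples `p m` with `m` free of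
primes below `p`. -/
theorem sift_dvd (a X : ℝ) {p z : ℕ} (hp : p.Prime) (hz : z ≤ p) :
    (#{n ∈ siftSet a X z | (p : ℤ) ∣ n} : ℝ) = sift (a / p) (X / p) z := by
  unfold sift
  norm_cast
  have hp0 : (0 : ℝ) < p := by exact_mod_cast hp.pos
  symm
  refine card_bij (fun m _ => (p : ℤ) * m) ?_ ?_ ?_
  · intro m hm
    rw [mem_siftSet] at hm
    rw [mem_filter, mem_siftSet]
    obtain ⟨⟨h1, h2⟩, h3⟩ := hm
    rw [← add_div, le_div_iff₀ hp0] at h2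
    rw [div_lt_iff₀ hp0] at h1
    refine ⟨⟨⟨by push_cast; linarith, by push_cast; linarith⟩, fun q hq hqp hd => ?_⟩, dvd_mul_right _ _⟩
    rcases (Nat.prime_iff_prime_int.mp hqp).dvd_or_dvd hd with h | h
    · have := (Nat.prime_dvd_prime_iff_eq hqp hp).mp (by exact_mod_cast h)
      omega
    · exact h3 q hq hqp h
  · intro m _ m' _ h
    have : (p : ℤ) ≠ 0 := by exact_mod_cast hp.ne_zero
    exact mul_left_cancel₀ this h
  · intro n hn
    rw [mem_filter, mem_siftSet] at hn
    obtain ⟨⟨⟨h1, h2⟩, h3⟩, m, rfl⟩ := hn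
    refine ⟨m, ?_, rfl⟩
    rw [mem_siftSet]
    push_cast at h1 h2
    refine ⟨⟨by rw [div_lt_iff₀ hp0]; linarith, by rw [← add_div, le_div_iff₀ hp0]; linarith⟩,
      fun q hq hqp hd => h3 q hq hqp (hd.mul_left _)⟩

theorem sift_succ_of_prime (a X : ℝ) {p : ℕ} (hp : p.Prime) :
    sift a X (p + 1) = sift a X p - sift (a / p) (X / p) p := by
  classical
  have h := card_filter_add_card_filter_not (s := siftSet a X p) (fun n => (p : ℤ) ∣ n)
  have h2 : {n ∈ siftSet a X p | ¬ (p : ℤ) ∣ n} = siftSet a X (p + 1) := by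
    ext n
    rw [mem_filter, mem_siftSet, mem_siftSet]
    constructor
    · rintro ⟨⟨h1, h2⟩, h3⟩
      refine ⟨h1, fun q hq hqp => ?_⟩
      rcases eq_or_ne q p with rfl | hne
      · exact h3
      · exact h2 q (by omega) hqp
    · rintro ⟨h1, h2⟩
      exact ⟨⟨h1, fun q hq => h2 q (by omega)⟩, h2 p (by omega) hp⟩
  rw [h2] at h
  rw [← sift_dvd a X hp le_rfl]
  unfold sift
  rw [eq_sub_iff_add_eq]
  norm_cast
  omega

theorem sift_zero_approx {a X : ℝ} (hX : 0 ≤ X) : |sift a X 0 - X| ≤ 1 := by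
  have : sift a X 0 = ⌊a + X⌋ - ⌊a⌋ := by
    have e : siftSet a X 0 = Ioc ⌊a⌋ ⌊a + X⌋ := by
      ext n; simp [siftSet]
    unfold sift
    rw [e, Int.card_Ioc]
    have : ⌊a⌋ ≤ ⌊a + X⌋ := Int.floor_le_floor (by linarith)
    have h2 : ((⌊a + X⌋ - ⌊a⌋).toNat : ℤ) = ⌊a + X⌋ - ⌊a⌋ := Int.toNat_of_nonneg (by linarith)
    exact_mod_cast h2
  rw [this, abs_le]
  constructor <;> linarith [Int.floor_le a, Int.lt_floor_add_one a, Int.floor_le (a + X),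
    Int.lt_floor_add_one (a + X)]

/-- The sieve of Eratosthenes, with its trivial error term. -/
theorem sift_approx (z : ℕ) : ∀ a X : ℝ, 0 ≤ X → |sift a X z - X * sieveV z| ≤ 2 ^ z := by
  induction z with
  | zero =>
    intro a X hX
    have := sift_zero_approx (a := a) hX
    simpa [sieveV] using this
  | succ z ih =>
    intro a X hX
    have h1 := ih a X hX
    rw [pow_succ]
    by_cases hz : z.Prime
    · have hz0 : (0 : ℝ) < z := by exact_mod_cast hz.pos
      rw [sift_succ_of_prime a X hz]
      have h2 := ih (a / z) (X / z) (by positivity)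
      have e : sieveV (z + 1) = sieveV z * (1 - 1 / z) := by
        unfold sieveV; rw [prod_range_succ, if_pos hz]
      rw [e]
      have e2 : sift a X z - sift (a / z) (X / z) z - X * (sieveV z * (1 - 1 / z)) =
        (sift a X z - X * sieveV z) - (sift (a / z) (X / z) z - X / z * sieveV z) := by ring
      rw [e2]
      have := abs_sub (sift a X z - X * sieveV z) (sift (a / z) (X / z) z - X / z * sieveV z)
      linarith
    · rw [sift_succ_of_not_prime a X hz]
      have e : sieveV (z + 1) = sieveV z := by
        unfold sieveV; rw [prod_range_succ, if_neg hz, mul_one]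
      rw [e]
      have : (0 : ℝ) < 2 ^ z := by positivity
      linarith

/-- Buchstab's identity. -/
theorem buchstab (a X : ℝ) {z0 z : ℕ} (h : z0 ≤ z) :
    sift a X z = sift a X z0 -
      ∑ n ∈ Ico z0 z, if n.Prime then sift (a / n) (X / n) n else 0 := by
  induction z, h using Nat.le_induction with
  | base => simp
  | succ n hn ih =>
    rw [sum_Ico_succ_top hn]
    split_ifs with hp
    · rw [sift_succ_of_prime a X hp, ih]; ring
    · rw [sift_succ_of_not_prime a X hp, ih]; ring

/-! ### Induction over the sifting level -/

theorem telescope_sum_le {T d : ℕ → ℝ} {y z : ℕ} (hyz : y ≤ z)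
    (h : ∀ n, y ≤ n → n < z → d n ≤ T n - T (n + 1)) : ∑ n ∈ Ico y z, d n ≤ T y - T z := by
  induction z, hyz using Nat.le_induction with
  | base => simp
  | succ n hn ih =>
    rw [sum_Ico_succ_top hn]
    have h1 := ih fun k h1 h2 => h k h1 (by omega)
    have h2 := h n hn (by omega)
    linarith

theorem monotone_from {f : ℕ → ℝ} {z0 : ℕ} (h : ∀ n, z0 ≤ n → f n ≤ f (n + 1)) {n m : ℕ}
    (hn : z0 ≤ n) (hnm : n ≤ m) : f n ≤ f m := by
  induction m, hnm using Nat.le_induction with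
  | base => exact le_rfl
  | succ k hk ih => exact ih.trans (h k (hn.trans hk))

theorem sieveErr_nonneg {U v : ℝ} (hv : 0 ≤ v) : 0 ≤ sieveErr U v := by
  unfold sieveErr
  have : 0 ≤ U ^ 6 := by positivity
  positivity

/-- The boundary term of the partial summation is absorbed by half of the error term. -/
theorem initial_weight_le (L : LinSieve) {R0 CR h s x v : ℝ} (hv : 1 ≤ v) (hCR : 0 < CR)
    (hC : L.C R0 CR ≤ √v) (hs : 2 ≤ s) (hx : s / 4 ≤ x) (h0 : 0 ≤ h) (h7 : h * x ^ 7 ≤ L.N) :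
    CR / v * |h / v ^ 2| ≤ sieveErr (s * v) v / 2 := by
  have hN := L.N_pos
  have hv0 : 0 < v := by linarith
  have hx0 : 0 < x := by linarith
  have h1 : h ≤ L.N * 4 ^ 7 / s ^ 7 :=
    ((le_div_iff₀ (by positivity)).mpr h7).trans (quarter_bound hN hs hx)
  have h2 : CR * L.N * 4 ^ 8 ≤ √v := by
    refine le_trans ?_ hC
    unfold LinSieve.C
    have : 0 ≤ L.N * 4 ^ 7 * R0 ^ 2 := by positivity
    linarith
  rw [sieveErr_scale hv0, abs_of_nonneg (by positivity)]
  calc CR / v * (h / v ^ 2) ≤ CR / v * (L.N * 4 ^ 7 / s ^ 7 / v ^ 2) := by gcongr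
    _ = CR * L.N * 4 ^ 8 / v ^ 3 / s ^ 6 / (4 * s) := by field_simp
    _ ≤ √v / v ^ 3 / s ^ 6 / 2 := by gcongr; linarith

/-- The induction over the sifting level, with the size conditions on the parameters abstracted:
`U = log X - η_z` is the shifted logarithm of the length. -/
theorem sieve_induction (L : LinSieve) (v η : ℕ → ℝ) {A K R0 CR : ℝ} {z0 : ℕ} (hz0 : 4 ≤ z0)
    (hA : 0 < A) (hR0 : 0 < R0) (hCR : 0 < CR) (hK0 : 0 < K)
    (hvp : ∀ n, z0 ≤ n → n.Prime → v (n + 1) = v n * n / (n - 1))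
    (hvn : ∀ n, z0 ≤ n → ¬ n.Prime → v (n + 1) = v n)
    (hηp : ∀ n, z0 ≤ n → n.Prime → η (n + 1) = η n + K / (n * √(v n)))
    (hηn : ∀ n, z0 ≤ n → ¬ n.Prime → η (n + 1) = η n)
    (hv1 : ∀ n, z0 ≤ n → 1 ≤ v n) (hvR : ∀ n, z0 ≤ n → 10 * R0 ≤ v n)
    (hvK : ∀ n, z0 ≤ n → K ≤ v n) (hC : ∀ n, z0 ≤ n → L.C R0 CR ≤ √(v n))
    (hKm : 8 ≤ K * L.hm 11) (hKp : 8 ≤ K * L.hp 11)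
    (hR : ∀ n, z0 ≤ n → |v n - Real.log n| ≤ R0)
    (htail : ∀ y z, z0 ≤ y → y ≤ z →
      |∑ n ∈ Ico y z, if n.Prime then (v n - Real.log n) / n else 0| ≤ CR / v y)
    (hbaseP : ∀ a X, 0 < X → 0 < Real.log X - η z0 → sift a X z0 ≤
      A * X * (L.F ((Real.log X - η z0) / v z0) / v z0 + sieveErr (Real.log X - η z0) (v z0) / 2))
    (hbaseM : ∀ a X, 0 < X → 2 * v z0 ≤ Real.log X - η z0 →
      A * X * (L.f ((Real.log X - η z0) / v z0) / v z0 - sieveErr (Real.log X - η z0) (v z0) / 2) ≤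
      sift a X z0) :
    ∀ z, z0 ≤ z →
    (∀ a X, 0 < X → 0 < Real.log X - η z → sift a X z ≤
      A * X * (L.F ((Real.log X - η z) / v z) / v z + sieveErr (Real.log X - η z) (v z))) ∧
    (∀ a X, 0 < X → 2 * v z ≤ Real.log X - η z →
      A * X * (L.f ((Real.log X - η z) / v z) / v z - sieveErr (Real.log X - η z) (v z)) ≤
      sift a X z) := by
  have hcast : ∀ n : ℕ, z0 ≤ n → (4 : ℝ) ≤ n := fun n hn => by exact_mod_cast hz0.trans hn
  have hvmono : ∀ n m, z0 ≤ n → n ≤ m → v n ≤ v m := fun n m hn hnm => by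
    refine monotone_from (z0 := z0) (fun k hk => ?_) hn hnm
    by_cases hp : k.Prime
    · have h4 := hcast k hk
      rw [hvp k hk hp, le_div_iff₀ (by linarith)]
      nlinarith [hv1 k hk]
    · rw [hvn k hk hp]
  have hηmono : ∀ n m, z0 ≤ n → n ≤ m → η n ≤ η m := fun n m hn hnm => by
    refine monotone_from (z0 := z0) (fun k hk => ?_) hn hnm
    by_cases hp : k.Prime
    · rw [hηp k hk hp]
      have : 0 ≤ K / (k * √(v k)) := by positivity
      linarith
    · rw [hηn k hk hp]
  set ρ : ℕ → ℝ := fun n => if n.Prime then (v n - Real.log n) / n else 0 with hρ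
  -- partial summation against the cancellation in the discrepancy of the primes
  have habel : ∀ (g : ℕ → ℝ) (z : ℕ), z0 ≤ z →
      |∑ n ∈ Ico z0 z, ρ n * g n| ≤ CR / v z0 * |g z0| +
        ∑ n ∈ Ico z0 z, CR / v n * |g (n + 1) - g n| := by
    intro g z hz
    rw [abel_tail ρ g hz]
    refine (abs_add_le _ _).trans (add_le_add ?_ ?_)
    · rw [abs_mul]
      exact mul_le_mul_of_nonneg_right (htail z0 z le_rfl hz) (abs_nonneg _)
    · refine (abs_sum_le_sum_abs _ _).trans (sum_le_sum fun n hn => ?_)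
      rw [mem_Ico] at hn
      rw [abs_mul]
      refine mul_le_mul_of_nonneg_right ?_ (abs_nonneg _)
      refine (htail (n + 1) z (by omega) (by omega)).trans ?_
      have := hvmono n (n + 1) hn.1 (by omega)
      have := hv1 n hn.1
      gcongr
  intro z
  induction z using Nat.strong_induction_on with
  | _ z ih =>
  intro hz
  constructor
  · intro a X hX hU
    rcases eq_or_lt_of_le hz with rfl | hlt
    · refine (hbaseP a X hX hU).trans ?_
      have := sieveErr_nonneg (U := Real.log X - η z0) (by linarith [hv1 z0 le_rfl] : 0 ≤ v z0)
      gcongr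
      linarith
    obtain ⟨k, rfl⟩ : ∃ k, z = k + 1 := ⟨z - 1, by omega⟩
    have hk : z0 ≤ k := by omega
    set U : ℕ → ℝ := fun n => Real.log X - η n with hUdef
    have hUm : ∀ n m, z0 ≤ n → n ≤ m → U m ≤ U n := fun n m h1 h2 => by
      simp only [hUdef]; linarith [hηmono n m h1 h2]
    have hUk : 0 < U k := lt_of_lt_of_le hU (hUm k (k + 1) hk (by omega))
    rcases lt_or_ge (U k) (3 * v k) with h3 | h3
    · -- short range: the main term does not depend on the sifting level
      refine (sift_anti a X (Nat.le_succ k)).trans ?_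
      refine ((ih k (by omega) hk).1 a X hX hUk).trans ?_
      have hvk := hv1 k hk
      have hvk1 := hv1 (k + 1) (by omega)
      have hvv := hvmono k (k + 1) hk (by omega)
      have hUU := hUm k (k + 1) hk (by omega)
      have e1 : L.F (U k / v k) / v k = 2 / U k := by
        rw [L.F_eq _ (by positivity) (by rw [div_le_iff₀ (by linarith)]; linarith)]
        field_simp
      have e2 : L.F (U (k + 1) / v (k + 1)) / v (k + 1) = 2 / U (k + 1) := by
        have : 0 < U (k + 1) := hU
        rw [L.F_eq _ (by positivity) (by rw [div_le_iff₀ (by linarith)]; linarith)]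
        field_simp
      have h1 : 2 / U k ≤ 2 / U (k + 1) := by
        have : 0 < U (k + 1) := hU
        gcongr
      have h2 : sieveErr (U k) (v k) ≤ sieveErr (U (k + 1)) (v (k + 1)) := by
        have : 0 < U (k + 1) := hU
        unfold sieveErr
        have : 0 ≤ v k := by linarith
        have : 0 ≤ v (k + 1) := by linarith
        gcongr
      change A * X * (L.F (U k / v k) / v k + sieveErr (U k) (v k)) ≤
        A * X * (L.F (U (k + 1) / v (k + 1)) / v (k + 1) + sieveErr (U (k + 1)) (v (k + 1)))
      rw [e1, e2]
      gcongr
    · set B : ℕ → ℝ := fun n => n * sift (a / n) (X / n) n / (A * X) with hB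
      set g : ℕ → ℝ := fun n => L.hm (max (U n / v n - 1) 2) / v n ^ 2 with hg
      set T : ℕ → ℝ := fun n => -(L.F (U n / v n) / v n + sieveErr (U n) (v n)) with hT
      have hstep : ∀ n, z0 ≤ n → n < k + 1 →
          (ρ n * g n + CR / v n * |g (n + 1) - g n|) - (if n.Prime then 1 / (n : ℝ) * B n else 0)
            ≤ T n - T (n + 1) := by
        intro n hn hnk
        by_cases hp : n.Prime
        · have hn4 := hcast n hn
          have h3n : 3 * v n ≤ U n := by
            have := hvmono n k hn (by omega)
            have := hUm n k hn (by omega)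
            linarith
          have hlog : Real.log n = v n - (v n - Real.log n) := by ring
          have hlog2 : Real.log (X / n) - η n = U n - (v n - (v n - Real.log n)) := by
            rw [Real.log_div hX.ne' (by positivity)]; simp only [hUdef]; ring
          have := step_upper L (U := U n) (U' := U (n + 1)) (B := B n) (hv1 n hn) hR0 hCR (hvR n hn)
            hK0 (hvK n hn) (hC n hn) hKp hn4 (hR n hn) (hvp n hn hp)
            (by simp only [hUdef]; rw [hηp n hn hp]; ring) h3n
            (by have := sift_nonneg (a / n) (X / n) n; positivity) (fun h2 => by
              have h5 := (ih n (by omega) hn).2 (a / n) (X / n) (by positivity)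
                (by rw [hlog2]; exact h2)
              rw [hlog2] at h5
              simp only [hB]
              rw [le_div_iff₀ (by positivity)]
              calc _ = n * (A * (X / n) * (L.f ((U n - (v n - (v n - Real.log n))) / v n) / v n -
                    sieveErr (U n - (v n - (v n - Real.log n))) (v n))) := by field_simp
                _ ≤ _ := by gcongr)
          simp only [hρ, hg, hT, if_pos hp]
          have e : (v n - Real.log n) / n = 1 / n * (v n - Real.log n) := by ring
          rw [e]
          linarith
        · have e1 : U (n + 1) = U n := by simp only [hUdef]; rw [hηn n hn hp]
          have e2 := hvn n hn hp
          simp only [hρ, hg, hT, if_neg hp]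
          rw [e1, e2]
          simp
      have hsum := telescope_sum_le hz hstep
      rw [sum_sub_distrib, sum_add_distrib] at hsum
      have hab := (abs_le.mp (habel g (k + 1) hz)).1
      have hvz := hv1 z0 le_rfl
      have hUv : 3 ≤ U z0 / v z0 := by
        rw [le_div_iff₀ (by linarith)]
        have := hvmono z0 k le_rfl hk
        have := hUm z0 k le_rfl hk
        linarith
      have hstart : CR / v z0 * |g z0| ≤ sieveErr (U z0) (v z0) / 2 := by
        have hm2 := le_max_right (U z0 / v z0 - 1) 2
        have := initial_weight_le L (s := U z0 / v z0) (x := max (U z0 / v z0 - 1) 2) hvz hCR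
          (hC z0 le_rfl) (by linarith) (by linarith [le_max_left (U z0 / v z0 - 1) 2])
          (L.hm_pos _ hm2).le (L.hm_le _ hm2)
        rwa [div_mul_cancel₀ _ (by linarith : v z0 ≠ 0)] at this
      have hb := hbaseP a X hX (lt_of_lt_of_le hUk (hUm z0 k le_rfl hk))
      rw [buchstab a X hz]
      have hBs : (∑ n ∈ Ico z0 (k + 1), if n.Prime then sift (a / n) (X / n) n else 0) =
          A * X * ∑ n ∈ Ico z0 (k + 1), if n.Prime then 1 / (n : ℝ) * B n else 0 := by
        rw [mul_sum]
        refine sum_congr rfl fun n hn => ?_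
        rw [mem_Ico] at hn
        have := hcast n hn.1
        split_ifs
        · simp only [hB]; field_simp
        · simp
      rw [hBs]
      have hfin : L.F (U z0 / v z0) / v z0 + sieveErr (U z0) (v z0) / 2 -
          (∑ n ∈ Ico z0 (k + 1), if n.Prime then 1 / (n : ℝ) * B n else 0) ≤
          L.F (U (k + 1) / v (k + 1)) / v (k + 1) + sieveErr (U (k + 1)) (v (k + 1)) := by
        simp only [hT] at hsum
        linarith
      calc _ ≤ A * X * (L.F (U z0 / v z0) / v z0 + sieveErr (U z0) (v z0) / 2) -
            A * X * ∑ n ∈ Ico z0 (k + 1), (if n.Prime then 1 / (n : ℝ) * B n else 0) := by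
            linarith
        _ = A * X * (L.F (U z0 / v z0) / v z0 + sieveErr (U z0) (v z0) / 2 -
            ∑ n ∈ Ico z0 (k + 1), (if n.Prime then 1 / (n : ℝ) * B n else 0)) := by ring
        _ ≤ _ := by gcongr
  · intro a X hX hU
    set U : ℕ → ℝ := fun n => Real.log X - η n with hUdef
    have hUm : ∀ n m, z0 ≤ n → n ≤ m → U m ≤ U n := fun n m h1 h2 => by
      simp only [hUdef]; linarith [hηmono n m h1 h2]
    have hU2 : ∀ n, z0 ≤ n → n ≤ z → 2 * v n ≤ U n := fun n h1 h2 => by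
      have := hvmono n z h1 h2
      have := hUm n z h1 h2
      have : 2 * v z ≤ U z := hU
      linarith
    set B : ℕ → ℝ := fun n => n * sift (a / n) (X / n) n / (A * X) with hB
    set g : ℕ → ℝ := fun n => L.hp (U n / v n - 1) / v n ^ 2 with hg
    set T : ℕ → ℝ := fun n => L.f (U n / v n) / v n - sieveErr (U n) (v n) with hT
    have hstep : ∀ n, z0 ≤ n → n < z →
        (ρ n * g n + CR / v n * |g (n + 1) - g n|) + (if n.Prime then 1 / (n : ℝ) * B n else 0)
          ≤ T n - T (n + 1) := by
      intro n hn hnk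
      by_cases hp : n.Prime
      · have hn4 := hcast n hn
        have hlog2 : Real.log (X / n) - η n = U n - (v n - (v n - Real.log n)) := by
          rw [Real.log_div hX.ne' (by positivity)]; simp only [hUdef]; ring
        have hst := step_lower L (U := U n) (U' := U (n + 1)) (hv1 n hn) hR0 hCR (hvR n hn)
          hK0 (hvK n hn) (hC n hn) hKm hn4 (hR n hn) (hvp n hn hp)
          (by simp only [hUdef]; rw [hηp n hn hp]; ring) (hU2 (n + 1) (by omega) (by omega))
        have h5 := (ih n (by omega) hn).1 (a / n) (X / n) (by positivity) (by
          rw [hlog2]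
          have h1 := hU2 n hn hnk.le
          have h2 := (abs_le.mp (hR n hn)).1
          have h3 := hvR n hn
          linarith [hv1 n hn])
        rw [hlog2] at h5
        have hBle : B n ≤ L.F ((U n - (v n - (v n - Real.log n))) / v n) / v n +
            sieveErr (U n - (v n - (v n - Real.log n))) (v n) := by
          simp only [hB]
          rw [div_le_iff₀ (by positivity)]
          calc _ ≤ n * (A * (X / n) * (L.F ((U n - (v n - (v n - Real.log n))) / v n) / v n +
                  sieveErr (U n - (v n - (v n - Real.log n))) (v n))) := by gcongr
            _ = _ := by field_simp
        have hBle' : 1 / (n : ℝ) * B n ≤ 1 / (n : ℝ) *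
            (L.F ((U n - (v n - (v n - Real.log n))) / v n) / v n +
            sieveErr (U n - (v n - (v n - Real.log n))) (v n)) := by gcongr
        simp only [hρ, hg, hT, if_pos hp]
        have e : (v n - Real.log n) / n = 1 / n * (v n - Real.log n) := by ring
        rw [e]
        linarith
      · have e1 : U (n + 1) = U n := by simp only [hUdef]; rw [hηn n hn hp]
        have e2 := hvn n hn hp
        simp only [hρ, hg, hT, if_neg hp]
        rw [e1, e2]
        simp
    have hsum := telescope_sum_le hz hstep
    rw [sum_add_distrib, sum_add_distrib] at hsum
    have hab := (abs_le.mp (habel g z hz)).1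
    have hvz := hv1 z0 le_rfl
    have hUv : 2 ≤ U z0 / v z0 := by
      rw [le_div_iff₀ (by linarith)]
      exact hU2 z0 le_rfl hz
    have hstart : CR / v z0 * |g z0| ≤ sieveErr (U z0) (v z0) / 2 := by
      have := initial_weight_le L (s := U z0 / v z0) (x := U z0 / v z0 - 1) hvz hCR
        (hC z0 le_rfl) (by linarith) (by linarith)
        (L.hp_pos _ (by linarith)).le (L.hp_le _ (by linarith))
      rwa [div_mul_cancel₀ _ (by linarith : v z0 ≠ 0)] at this
    have hb := hbaseM a X hX (hU2 z0 le_rfl hz)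
    rw [buchstab a X hz]
    have hBs : (∑ n ∈ Ico z0 z, if n.Prime then sift (a / n) (X / n) n else 0) =
        A * X * ∑ n ∈ Ico z0 z, if n.Prime then 1 / (n : ℝ) * B n else 0 := by
      rw [mul_sum]
      refine sum_congr rfl fun n hn => ?_
      rw [mem_Ico] at hn
      have := hcast n hn.1
      split_ifs
      · simp only [hB]; field_simp
      · simp
    rw [hBs]
    have hfin : L.f (U z / v z) / v z - sieveErr (U z) (v z) ≤
        L.f (U z0 / v z0) / v z0 - sieveErr (U z0) (v z0) / 2 -
        (∑ n ∈ Ico z0 z, if n.Prime then 1 / (n : ℝ) * B n else 0) := by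
      simp only [hT] at hsum
      linarith
    calc _ ≤ A * X * (L.f (U z0 / v z0) / v z0 - sieveErr (U z0) (v z0) / 2 -
          ∑ n ∈ Ico z0 z, (if n.Prime then 1 / (n : ℝ) * B n else 0)) := by gcongr
      _ = A * X * (L.f (U z0 / v z0) / v z0 - sieveErr (U z0) (v z0) / 2) -
          A * X * ∑ n ∈ Ico z0 z, (if n.Prime then 1 / (n : ℝ) * B n else 0) := by ring
      _ ≤ _ := by linarith

/-! ### The linear sieve for intervals -/

/-- In the base case of the induction the error of the sieve of Eratosthenes, a constant `M`, is
absorbed by the error term because `e^U ≥ U^6 / 720`. -/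
theorem base_error_le {U v A M E : ℝ} (hU : 0 < U) (hv : 1 ≤ v) (hA : 0 < A)
    (hE : 1440 * M / A ≤ E) (hM : 0 ≤ M) : M ≤ A * (E * Real.exp U) * (sieveErr U v / 2) := by
  have h1 : U ^ 6 / 720 ≤ Real.exp U := by
    have := Real.pow_div_factorial_le_exp U hU.le 6
    norm_num [Nat.factorial] at this
    exact this
  have h2 : 1 / U ^ 6 ≤ sieveErr U v := by
    unfold sieveErr
    have h3 : 1 ≤ √v := by rw [Real.one_le_sqrt]; exact hv
    have : 1 ≤ v ^ 3 * √v := by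
      have : 1 ≤ v ^ 3 := one_le_pow₀ hv
      nlinarith
    gcongr
  have hE0 : 0 ≤ E := le_trans (by positivity) hE
  calc M = A * (1440 * M / A * (U ^ 6 / 720)) * ((1 / U ^ 6) / 2) := by
        field_simp
        ring
    _ ≤ _ := by gcongr

/-- The fundamental theorem of the linear sieve for intervals, with error term `v^{-5/2} (v/U)^6`,
`v = log z + O(1)`, `U = log X + O(1)`. -/
theorem linear_sieve : ∃ (L : LinSieve) (v η : ℕ → ℝ) (A E R0 : ℝ) (z0 : ℕ), 0 < A ∧ 0 < R0 ∧
    4 ≤ z0 ∧ (∀ n, z0 ≤ n → 0 ≤ η n ∧ η n ≤ E) ∧ (∀ n, z0 ≤ n → 1 ≤ v n ∧ |v n - Real.log n| ≤ R0) ∧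
    ∀ z, z0 ≤ z →
    (∀ a X, 0 < X → 0 < Real.log X - η z → sift a X z ≤
      A * X * (L.F ((Real.log X - η z) / v z) / v z + sieveErr (Real.log X - η z) (v z))) ∧
    (∀ a X, 0 < X → 2 * v z ≤ Real.log X - η z →
      A * X * (L.f ((Real.log X - η z) / v z) / v z - sieveErr (Real.log X - η z) (v z)) ≤
      sift a X z) := by
  obtain ⟨L⟩ := linSieve_exists
  obtain ⟨c, R0, CR, y0, hc, hR0, hCR, hy0, hR, htail⟩ := sieve_density
  set K : ℝ := max 1 (max (8 / L.hm 11) (8 / L.hp 11)) with hK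
  have hm11 := L.hm_pos 11 (by norm_num)
  have hp11 := L.hp_pos 11 (by norm_num)
  have hK0 : 0 < K := lt_of_lt_of_le one_pos (le_max_left _ _)
  have hKm : 8 ≤ K * L.hm 11 := by
    rw [← div_le_iff₀ hm11]; exact (le_max_left _ _).trans (le_max_right _ _)
  have hKp : 8 ≤ K * L.hp 11 := by
    rw [← div_le_iff₀ hp11]; exact (le_max_right _ _).trans (le_max_right _ _)
  obtain ⟨N, hN2, hN⟩ := exists_log_ge (R0 + (1 + 10 * R0 + K + (L.C R0 CR) ^ 2))
  set z0 : ℕ := max 4 (max y0 N) with hz0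
  have h4 : 4 ≤ z0 := le_max_left _ _
  have hy : y0 ≤ z0 := (le_max_left _ _).trans (le_max_right _ _)
  have hNz : N ≤ z0 := (le_max_right _ _).trans (le_max_right _ _)
  set v : ℕ → ℝ := fun n => c / sieveV n with hv
  have hvR0 : ∀ n, z0 ≤ n → |v n - Real.log n| ≤ R0 := fun n hn => hR n (hy.trans hn)
  have hvbig : ∀ n, z0 ≤ n → 1 + 10 * R0 + K + (L.C R0 CR) ^ 2 ≤ v n := fun n hn => by
    have h1 := abs_le.mp (hvR0 n hn)
    have h2 := hN n (hNz.trans hn)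
    linarith [h1.1]
  have hCsq := sq_nonneg (L.C R0 CR)
  have hv1 : ∀ n, z0 ≤ n → 1 ≤ v n := fun n hn => by linarith [hvbig n hn]
  have hvp : ∀ n, z0 ≤ n → n.Prime → v (n + 1) = v n * n / (n - 1) := fun n hn hp => by
    have hn4 : (4 : ℝ) ≤ n := by exact_mod_cast h4.trans hn
    have h0 := sieveV_pos n
    have h1 : (n : ℝ) - 1 ≠ 0 := by linarith
    simp only [hv, sieveV_succ, if_pos hp]
    have h3 : 1 - 1 / (n : ℝ) = (n - 1) / n := by field_simp
    rw [h3]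
    field_simp
  have hvn : ∀ n, z0 ≤ n → ¬ n.Prime → v (n + 1) = v n := fun n hn hp => by
    simp [hv, sieveV_succ, if_neg hp]
  set A := c / L.κ with hA
  have hA0 : 0 < A := div_pos hc L.κ_pos
  set M : ℝ := 2 ^ z0 with hM
  have hM0 : 0 < M := by positivity
  set η0 : ℝ := Real.log (1 + 1440 * M / A) with hη0
  have hq : 0 < 1440 * M / A := by positivity
  have hη00 : 0 ≤ η0 := Real.log_nonneg (by linarith)
  have hη0e : Real.exp η0 = 1 + 1440 * M / A := Real.exp_log (by linarith)
  set η : ℕ → ℝ := fun n => η0 + ∑ k ∈ Ico z0 n, if k.Prime then K / (k * √(v k)) else 0 with hη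
  have hηz : η z0 = η0 := by simp [hη]
  have hηs : ∀ n, z0 ≤ n → η (n + 1) = η n + if n.Prime then K / (n * √(v n)) else 0 := fun n hn => by
    simp only [hη, sum_Ico_succ_top hn]; ring
  -- `η + 2 K / √v` is non-increasing
  have hηle : ∀ n, z0 ≤ n → η n + 2 * K / √(v n) ≤ η0 + 2 * K / √(v z0) := by
    intro n hn
    induction n, hn using Nat.le_induction with
    | base => rw [hηz]
    | succ n hn ih =>
      refine le_trans ?_ ih
      rw [hηs n hn]
      split_ifs with hp
      · have hn4 : (4 : ℝ) ≤ n := by exact_mod_cast h4.trans hn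
        have hvv := hv1 n hn
        have hs : 0 < √(v n) := Real.sqrt_pos.mpr (by linarith)
        have h5 : √(v n) ≤ √(v (n + 1)) * (1 - 1 / (2 * n)) := by
          have h7 : 1 / (2 * (n : ℝ)) ≤ 1 := by rw [div_le_one (by positivity)]; linarith
          refine Real.sqrt_le_iff.mpr ⟨mul_nonneg (Real.sqrt_nonneg _) (by linarith), ?_⟩
          rw [mul_pow, Real.sq_sqrt (by linarith [hv1 (n+1) (by omega)]), hvp n hn hp]
          have h8 : v n * n / (n - 1) * (1 - 1 / (2 * (n:ℝ))) ^ 2 = v n * (1 + 1 / (4 * n * (n - 1))) := by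
            have : (n : ℝ) - 1 ≠ 0 := by linarith
            field_simp
            ring
          rw [h8]
          have : 0 ≤ 1 / (4 * (n:ℝ) * (n - 1)) := by
            apply div_nonneg (by norm_num)
            nlinarith
          nlinarith
        have hs' : 0 < √(v (n + 1)) := Real.sqrt_pos.mpr (by linarith [hv1 (n+1) (by omega)])
        have h6 : 2 * K / √(v (n + 1)) ≤ 2 * K * (1 - 1 / (2 * n)) / √(v n) := by
          rw [div_le_div_iff₀ hs' hs]
          nlinarith
        have h9 : 2 * K * (1 - 1 / (2 * (n:ℝ))) / √(v n) = 2 * K / √(v n) - K / (n * √(v n)) := by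
          field_simp
        linarith
      · rw [hvn n hn hp]; simp
  have hbase : ∀ X, 0 < X → 0 < Real.log X - η z0 →
      M ≤ A * X * (sieveErr (Real.log X - η z0) (v z0) / 2) := by
    intro X hX hU
    have h1 : X = Real.exp η0 * Real.exp (Real.log X - η z0) := by
      rw [← Real.exp_add, hηz, add_sub_cancel, Real.exp_log hX]
    have := base_error_le (E := Real.exp η0) hU (hv1 z0 le_rfl) hA0 (by rw [hη0e]; linarith) hM0.le
    rwa [← h1] at this
  have hV : sieveV z0 = A * (L.κ / v z0) := by
    have := L.κ_pos
    have := sieveV_pos z0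
    simp only [hA, hv]
    field_simp
  refine ⟨L, v, η, A, η0 + 2 * K / √(v z0), R0, z0, hA0, hR0, h4, fun n hn => ⟨?_, ?_⟩,
    fun n hn => ⟨hv1 n hn, hvR0 n hn⟩, ?_⟩
  · refine add_nonneg hη00 (sum_nonneg fun k _ => ?_)
    split_ifs <;> positivity
  · have := hηle n hn
    have h0 : 0 ≤ 2 * K / √(v n) := by positivity
    linarith
  refine sieve_induction L v η (K := K) (R0 := R0) (CR := CR) h4 hA0 hR0 hCR hK0 hvp hvn
    (fun n hn hp => by rw [hηs n hn, if_pos hp]) (fun n hn hp => by rw [hηs n hn, if_neg hp, add_zero])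
    hv1 (fun n hn => by linarith [hvbig n hn]) (fun n hn => by linarith [hvbig n hn])
    (fun n hn => Real.le_sqrt_of_sq_le (by linarith [hvbig n hn])) hKm hKp hvR0
    (fun y z hyy hyz => htail y z (hy.trans hyy) hyz) ?_ ?_
  · intro a X hX hU
    have h1 := (abs_le.mp (sift_approx z0 a X hX.le)).2
    have h2 := hbase X hX hU
    have hv0 : 0 < v z0 := by linarith [hv1 z0 le_rfl]
    have h3 : L.κ / v z0 ≤ L.F ((Real.log X - η z0) / v z0) / v z0 := by
      gcongr
      exact L.F_ge _ (by positivity)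
    have h4 : A * X * (L.κ / v z0) ≤ A * X * (L.F ((Real.log X - η z0) / v z0) / v z0) := by gcongr
    rw [hV] at h1
    linarith
  · intro a X hX hU
    have hv0 : 0 < v z0 := by linarith [hv1 z0 le_rfl]
    have h1 := (abs_le.mp (sift_approx z0 a X hX.le)).1
    have h2 := hbase X hX (by linarith)
    have h3 : L.f ((Real.log X - η z0) / v z0) / v z0 ≤ L.κ / v z0 := by
      gcongr
      exact L.f_le _
    have h4 : A * X * (L.f ((Real.log X - η z0) / v z0) / v z0) ≤ A * X * (L.κ / v z0) := by gcongr
    rw [hV] at h1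
    linarith

/-! ### The bound for the Jacobsthal function -/

/-- Sifting limit: at length `≍ z²` the lower bound sieve detects `≫ X / log² z` survivors, while
the upper bound sieve stays of the right order as soon as the length exceeds `√z`. -/
theorem sieve_consequences : ∃ (c₁ C₁ C₂ : ℝ) (z₁ : ℕ), 0 < c₁ ∧ 0 < C₁ ∧ 4 ≤ C₂ ∧ 4 ≤ z₁ ∧
    ∀ z : ℕ, z₁ ≤ z →
      (∃ X : ℝ, (z : ℝ) ^ 2 ≤ X ∧ X ≤ C₁ * z ^ 2 ∧
        ∀ a, c₁ * X / Real.log z ^ 2 ≤ sift a X z) ∧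
      ∀ a Y : ℝ, √z ≤ Y → sift a Y z ≤ C₂ * Y / Real.log z := by
  obtain ⟨L, v, η, A, E, R0, z0, hA, hR0, hz0, hη, hv, hS⟩ := linear_sieve
  have hm3 := L.hm_pos 3 (by norm_num)
  set T : ℝ := 2 * R0 + 1 with hT
  obtain ⟨N, -, hN⟩ := exists_log_ge (R0 + T + (1 / (32 * L.hm 3)) ^ 2 + 4 * |E| + 3 * R0)
  refine ⟨A * L.hm 3 / 8, Real.exp (2 * R0 + T + E), max 4 (A * (8 + 4096) * 2), max z0 N,
    by positivity, Real.exp_pos _, le_max_left _ _, hz0.trans (le_max_left _ _), fun z hz => ?_⟩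
  have hzz0 : z0 ≤ z := (le_max_left _ _).trans hz
  have hlog := hN z ((le_max_right _ _).trans hz)
  obtain ⟨hη0, hηE⟩ := hη z hzz0
  obtain ⟨hv1, hvR⟩ := hv z hzz0
  obtain ⟨hU, hLw⟩ := hS z hzz0
  rw [abs_le] at hvR
  have hsq0 := sq_nonneg (1 / (32 * L.hm 3))
  have hEa := abs_nonneg E
  have hEa' := le_abs_self E
  have hl0 : 0 < Real.log z := by linarith
  have hz1 : (0 : ℝ) < z := by
    have : (4 : ℝ) ≤ z := by exact_mod_cast hz0.trans hzz0
    linarith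
  have hvpos : 0 < v z := by linarith
  have hv2 : v z ≤ 2 * Real.log z := by linarith
  have hzexp : (z : ℝ) ^ 2 = Real.exp (2 * Real.log z) := by
    rw [two_mul, Real.exp_add, Real.exp_log hz1, sq]
  constructor
  · refine ⟨Real.exp (2 * v z + T + η z), ?_, ?_, fun a => ?_⟩
    · rw [hzexp]
      exact Real.exp_le_exp.mpr (by linarith)
    · rw [hzexp, ← Real.exp_add]
      exact Real.exp_le_exp.mpr (by linarith)
    · set X := Real.exp (2 * v z + T + η z) with hX
      have hX0 : 0 < X := Real.exp_pos _
      have h1 := hLw a X hX0 (by rw [hX, Real.log_exp]; linarith)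
      refine le_trans ?_ h1
      have hlU : Real.log X - η z = 2 * v z + T := by rw [hX, Real.log_exp]; ring
      rw [hlU]
      have hs : (2 * v z + T) / v z = 2 + T / v z := by field_simp
      have hT0 : 0 ≤ T / v z := by positivity
      have hT1 : T / v z ≤ 1 := by rw [div_le_one hvpos]; linarith
      have hf : L.hm 3 * (1 / v z) ≤ L.f ((2 * v z + T) / v z) := by
        have h2 := L.f_concave 2 (2 + T / v z) le_rfl (by linarith)
        rw [L.f_zero 2 le_rfl] at h2
        have h3 := L.hm_anti (2 + T / v z) 3 (by linarith) (by linarith)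
        have h4 : L.hm 3 * (1 / v z) ≤ L.hm (2 + T / v z) * (T / v z) := by
          have : (1:ℝ) ≤ T := by linarith
          gcongr
          exact hm3.le.trans h3
        rw [hs]
        linarith
      have hsv : 1 / (32 * L.hm 3) ≤ √(v z) := Real.le_sqrt_of_sq_le (by linarith)
      have hsv0 : 0 < √(v z) := Real.sqrt_pos.mpr hvpos
      have herr : sieveErr (2 * v z + T) (v z) ≤ L.hm 3 / (2 * v z ^ 2) := by
        unfold sieveErr
        have h5 : (2 * v z) ^ 6 ≤ (2 * v z + T) ^ 6 := by gcongr; linarith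
        calc v z ^ 3 * √(v z) / (2 * v z + T) ^ 6 ≤ v z ^ 3 * √(v z) / (2 * v z) ^ 6 := by gcongr
          _ = √(v z) / (64 * v z ^ 3) := by field_simp; ring
          _ ≤ _ := by
            rw [div_le_div_iff₀ (by positivity) (by positivity)]
            rw [div_le_iff₀ (by positivity)] at hsv
            have hvv : √(v z) * √(v z) = v z := Real.mul_self_sqrt hvpos.le
            have : √(v z) ≤ 32 * L.hm 3 * v z := by nlinarith
            nlinarith [sq_nonneg (v z)]
      calc A * L.hm 3 / 8 * X / Real.log z ^ 2
          = A * X * (L.hm 3 / (2 * (2 * Real.log z) ^ 2)) := by field_simp; ring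
        _ ≤ A * X * (L.hm 3 / (2 * v z ^ 2)) := by gcongr
        _ = A * X * (L.hm 3 * (1 / v z) / v z - L.hm 3 / (2 * v z ^ 2)) := by field_simp; ring
        _ ≤ _ := by gcongr
  · intro a Y hY
    have hY0 : 0 < Y := lt_of_lt_of_le (Real.sqrt_pos.mpr hz1) hY
    have hlY : Real.log z / 2 ≤ Real.log Y := by
      rw [← Real.log_sqrt hz1.le]
      exact Real.log_le_log (Real.sqrt_pos.mpr hz1) hY
    have hU4 : v z / 4 ≤ Real.log Y - η z := by linarith
    refine (hU a Y hY0 (by linarith)).trans ?_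
    have hF : L.F ((Real.log Y - η z) / v z) ≤ 8 := by
      have h1 := L.F_anti (1 / 4) ((Real.log Y - η z) / v z) (by norm_num)
        (by rw [le_div_iff₀ hvpos]; linarith)
      rw [L.F_eq (1 / 4) (by norm_num) (by norm_num)] at h1
      norm_num at h1
      exact h1
    have herr : sieveErr (Real.log Y - η z) (v z) ≤ 4096 / v z := by
      unfold sieveErr
      have hsq : √(v z) ≤ v z := by
        rw [Real.sqrt_le_left hvpos.le]
        nlinarith
      calc v z ^ 3 * √(v z) / (Real.log Y - η z) ^ 6 ≤ v z ^ 3 * v z / (v z / 4) ^ 6 := by gcongr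
        _ = 4096 / v z ^ 2 := by field_simp; norm_num
        _ ≤ 4096 / v z := by
          gcongr
          nlinarith
    calc _ ≤ A * Y * (8 / v z + 4096 / v z) := by gcongr
      _ = A * (8 + 4096) * Y / v z := by ring
      _ ≤ A * (8 + 4096) * Y / (Real.log z / 2) := by gcongr; linarith
      _ = A * (8 + 4096) * 2 * Y / Real.log z := by field_simp
      _ ≤ _ := by gcongr; exact le_max_right _ _

/-- Iwaniec's bound for Jacobsthal's function: any interval of length `≫ log² n` contains an
integer coprime to `n`. -/
theorem jacobsthal : ∃ B : ℝ, 0 < B ∧ ∀ n : ℕ, 1 ≤ n → ∀ a : ℝ,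
    ∃ k : ℤ, a < k ∧ k ≤ a + B * (1 + Real.log n) ^ 2 ∧ IsCoprime k n := by
  classical
  obtain ⟨c₁, C₁, C₂, z₁, hc₁, hC₁, hC₂, hz₁, H⟩ := sieve_consequences
  set K := 2 * C₂ / c₁ with hK
  have hK0 : 0 < K := by positivity
  refine ⟨C₁ * (z₁ + 1 + K) ^ 2, by positivity, fun n hn a => ?_⟩
  have hln : 0 ≤ Real.log n := Real.log_nonneg (by exact_mod_cast hn)
  set z : ℕ := max z₁ ⌈K * Real.log n⌉₊ with hz
  have hzz : z₁ ≤ z := le_max_left _ _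
  have hKz : K * Real.log n ≤ z := (Nat.le_ceil _).trans (by exact_mod_cast le_max_right _ _)
  have hzle : (z : ℝ) ≤ (z₁ + 1 + K) * (1 + Real.log n) := by
    have h1 : (⌈K * Real.log n⌉₊ : ℝ) < K * Real.log n + 1 := Nat.ceil_lt_add_one (by positivity)
    have h2 : (z : ℝ) ≤ z₁ + (K * Real.log n + 1) := by
      rw [hz]
      push_cast
      have : (0 : ℝ) ≤ z₁ := by positivity
      exact max_le (by nlinarith) (by linarith)
    have h3 : (0 : ℝ) ≤ z₁ * Real.log n := by positivity
    nlinarith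
  obtain ⟨⟨X, hX1, hX2, hlow⟩, hup⟩ := H z hzz
  have hz4 : (4 : ℝ) ≤ z := by exact_mod_cast hz₁.trans hzz
  have hX0 : 0 < X := by nlinarith
  have hlz : 0 < Real.log z := Real.log_pos (by linarith)
  have hXB : X ≤ C₁ * (z₁ + 1 + K) ^ 2 * (1 + Real.log n) ^ 2 := by
    refine hX2.trans ?_
    rw [mul_assoc, ← mul_pow]
    gcongr
  by_contra! hcon
  set P : Finset ℕ := {p ∈ n.primeFactors | z ≤ p} with hP
  -- every survivor shares with `n` a prime factor which is at least `z`
  have hcover : sift a X z ≤ ∑ p ∈ P, sift (a / p) (X / p) z := by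
    have h1 : siftSet a X z ⊆ P.biUnion fun p => {k ∈ siftSet a X z | (p : ℤ) ∣ k} := by
      intro k hk
      have hk' := mem_siftSet.mp hk
      have hnc := hcon k hk'.1.1 (hk'.1.2.trans (by linarith))
      rw [Int.isCoprime_iff_gcd_eq_one] at hnc
      obtain ⟨p, hp, hpd⟩ := Nat.exists_prime_and_dvd hnc
      have hpk : (p : ℤ) ∣ k := (Int.natCast_dvd_natCast.mpr hpd).trans (Int.gcd_dvd_left _ _)
      have hpn : p ∣ n := by
        have := (Int.natCast_dvd_natCast.mpr hpd).trans (Int.gcd_dvd_right k n)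
        exact_mod_cast this
      rw [mem_biUnion]
      refine ⟨p, ?_, mem_filter.mpr ⟨hk, hpk⟩⟩
      rw [hP, mem_filter]
      refine ⟨Nat.mem_primeFactors.mpr ⟨hp, hpn, by omega⟩, ?_⟩
      by_contra! hlt
      exact hk'.2 p hlt hp hpk
    have h2 : (#(siftSet a X z) : ℝ) ≤
        ∑ p ∈ P, (#{k ∈ siftSet a X z | (p : ℤ) ∣ k} : ℝ) := by
      exact_mod_cast (card_le_card h1).trans card_biUnion_le
    refine h2.trans (le_of_eq (sum_congr rfl fun p hp => ?_))
    rw [hP, mem_filter] at hp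
    convert sift_dvd a X (Nat.prime_of_mem_primeFactors hp.1) hp.2
  have hterm : ∀ p ∈ P, sift (a / p) (X / p) z ≤ C₂ * X / (z * Real.log z) := by
    intro p hp
    rw [hP, mem_filter] at hp
    have hzp : (z : ℝ) ≤ p := by exact_mod_cast hp.2
    have hp0 : (0 : ℝ) < p := by linarith
    rcases le_total (√z) (X / p) with h | h
    · refine (hup _ _ h).trans ?_
      calc C₂ * (X / p) / Real.log z = C₂ * X / (p * Real.log z) := by field_simp
        _ ≤ _ := by gcongr
    · have hs1 : 2 ≤ √z := Real.le_sqrt_of_sq_le (by linarith)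
      have hss : √(z:ℝ) * √z = z := Real.mul_self_sqrt (by linarith)
      have h1 : sift (a / p) (X / p) z ≤ 2 * √z := by
        refine (sift_anti _ _ (Nat.zero_le z)).trans ?_
        have := (abs_le.mp (sift_zero_approx (a := a / p) (X := X / p) (by positivity))).2
        linarith
      have h2 : Real.log z ≤ 2 * √z := by
        have := Real.log_le_sub_one_of_pos (show 0 < √(z:ℝ) by linarith)
        rw [Real.log_sqrt (by linarith)] at this
        linarith
      refine h1.trans ?_
      rw [le_div_iff₀ (by positivity)]
      calc 2 * √z * (z * Real.log z) ≤ 2 * √z * (z * (2 * √z)) := by gcongr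
        _ = 4 * z * (√z * √z) := by ring
        _ = 4 * z ^ 2 := by rw [hss]; ring
        _ ≤ C₂ * X := by gcongr
  have hcard : (#P : ℝ) * Real.log z ≤ Real.log n := by
    have h1 : z ^ #P ≤ n := by
      calc z ^ #P = ∏ _p ∈ P, z := by rw [prod_const]
        _ ≤ ∏ p ∈ P, p := prod_le_prod' fun p hp => (mem_filter.mp hp).2
        _ ≤ ∏ p ∈ n.primeFactors, p := by
          refine prod_le_prod_of_subset_of_one_le' (filter_subset _ _) fun p hp _ => ?_
          exact (Nat.prime_of_mem_primeFactors hp).one_le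
        _ ≤ n := Nat.le_of_dvd hn (Nat.prod_primeFactors_dvd n)
    rw [← Real.log_pow]
    exact Real.log_le_log (by positivity) (by exact_mod_cast h1)
  have hfin : sift a X z ≤ c₁ * X / Real.log z ^ 2 / 2 := by
    refine (hcover.trans (sum_le_card_nsmul _ _ _ hterm)).trans ?_
    rw [nsmul_eq_mul]
    have h1 : (#P : ℝ) ≤ z / K / Real.log z := by
      rw [le_div_iff₀ hlz, le_div_iff₀ hK0]
      nlinarith
    calc (#P : ℝ) * (C₂ * X / (z * Real.log z)) ≤ z / K / Real.log z * (C₂ * X / (z * Real.log z)) := by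
          gcongr
      _ = _ := by rw [hK]; field_simp
  have h1 := hlow a
  have h2 : 0 < c₁ * X / Real.log z ^ 2 := by positivity
  linarith

/-! ### Primitive points on the hyperplane -/

/-- Integer points on the hyperplane `h·x = D` exist within bounded distance of any of its real
points, provided `gcd h ∣ D`. -/
theorem exists_int_point {m : ℕ} (h : Fin m → ℕ) (h0 : h ≠ 0) : ∃ C : ℝ, 0 < C ∧
    ∀ D : ℕ, univ.gcd h ∣ D → ∀ t : Fin m → ℝ, ∑ j, (h j : ℝ) * t j = D →
      ∃ x : Fin m → ℤ, ∑ j, (h j : ℤ) * x j = D ∧ ∀ j, |(x j : ℝ) - t j| ≤ C := by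
  obtain ⟨e, he⟩ := (IsPrincipalIdealRing.principal
    (Ideal.span (Set.range fun j => (h j : ℤ)))).principal
  have hmem : e ∈ Ideal.span (Set.range fun j => (h j : ℤ)) := by
    rw [he]; exact Submodule.mem_span_singleton_self e
  obtain ⟨β, hβ⟩ := Ideal.mem_span_range_iff_exists_fun.mp hmem
  have hdvd : ∀ j, e ∣ (h j : ℤ) := fun j => by
    have : (h j : ℤ) ∈ Ideal.span (Set.range fun j => (h j : ℤ)) :=
      Ideal.subset_span ⟨j, rfl⟩
    rw [he] at this
    exact Ideal.mem_span_singleton.mp this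
  have he0 : e ≠ 0 := by
    rintro rfl
    apply h0
    funext j
    have := hdvd j
    rw [zero_dvd_iff] at this
    exact_mod_cast this
  have hS0 : (0 : ℝ) ≤ ∑ j, (h j : ℝ) := by positivity
  have hB0 : (0 : ℝ) ≤ ∑ j, |(β j : ℝ)| := by positivity
  refine ⟨1 + (∑ j, (h j : ℝ)) * ∑ j, |(β j : ℝ)|, by positivity, fun D hD t ht => ?_⟩
  have heD : e ∣ (D : ℤ) := by
    rw [← Int.natAbs_dvd_natAbs, Int.natAbs_natCast]
    refine dvd_trans (Finset.dvd_gcd fun j _ => ?_) hD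
    have := Int.natAbs_dvd_natAbs.mpr (hdvd j)
    simpa using this
  obtain ⟨q, hq⟩ : e ∣ (D : ℤ) - ∑ j, (h j : ℤ) * ⌊t j⌋ :=
    dvd_sub heD (Finset.dvd_sum fun j _ => (hdvd j).mul_right _)
  have hdef : ((D : ℝ) - ∑ j, (h j : ℝ) * ⌊t j⌋) = ∑ j, (h j : ℝ) * Int.fract (t j) := by
    rw [← ht, ← sum_sub_distrib]
    refine sum_congr rfl fun j _ => ?_
    rw [← Int.self_sub_floor]; ring
  have hqr : (D : ℝ) - ∑ j, (h j : ℝ) * ⌊t j⌋ = e * q := by exact_mod_cast hq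
  have hqle : |(q : ℝ)| ≤ ∑ j, (h j : ℝ) := by
    have h1 : |(e : ℝ) * q| ≤ ∑ j, (h j : ℝ) := by
      rw [← hqr, hdef, abs_of_nonneg (sum_nonneg fun j _ =>
        mul_nonneg (Nat.cast_nonneg _) (Int.fract_nonneg _))]
      refine sum_le_sum fun j _ => mul_le_of_le_one_right (Nat.cast_nonneg _) (Int.fract_lt_one _).le
    have h2 : (1 : ℝ) ≤ |(e : ℝ)| := by exact_mod_cast Int.one_le_abs he0
    rw [abs_mul] at h1
    nlinarith [abs_nonneg (q : ℝ)]
  refine ⟨fun j => ⌊t j⌋ + q * β j, ?_, fun j => ?_⟩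
  · simp only [mul_add, sum_add_distrib]
    have : ∑ j, (h j : ℤ) * (q * β j) = q * e := by
      rw [← hβ, mul_sum]
      exact sum_congr rfl fun j _ => by ring
    rw [this]
    linarith
  · push_cast
    have h1 : (⌊t j⌋ : ℝ) + q * β j - t j = - Int.fract (t j) + q * β j := by
      rw [← Int.self_sub_floor]; ring
    rw [h1]
    refine (abs_add_le _ _).trans (add_le_add ?_ ?_)
    · rw [abs_neg, abs_of_nonneg (Int.fract_nonneg _)]
      exact (Int.fract_lt_one _).le
    · rw [abs_mul]
      have : |(β j : ℝ)| ≤ ∑ k, |(β k : ℝ)| :=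
        single_le_sum (f := fun k => |(β k : ℝ)|) (fun k _ => abs_nonneg _) (mem_univ j)
      gcongr

/-- Moving an integer point of `h·x = D` by `t (h_j e_i - h_i e_j) / gcd(h_i, h_j)` keeps it on the
hyperplane and preserves the linear form `N = (h_i x_i + h_j x_j) / gcd(h_i, h_j)`; by the bound for
Jacobsthal's function some `t ≪ log² N` makes the `i`-th and `j`-th coordinates coprime. -/
theorem exists_coprime_shift {B : ℝ} (hB : ∀ n : ℕ, 1 ≤ n → ∀ a : ℝ,
      ∃ k : ℤ, a < k ∧ k ≤ a + B * (1 + Real.log n) ^ 2 ∧ IsCoprime k n)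
    {a b : ℤ} (hab : IsCoprime a b) (x y : ℤ) (hN : 0 < b * x + a * y) :
    ∃ t : ℤ, 0 < t ∧ (t : ℝ) ≤ B * (1 + Real.log (b * x + a * y)) ^ 2 ∧
      IsCoprime (x + t * a) (y - t * b) := by
  obtain ⟨u, w, huw⟩ := hab
  obtain ⟨N, hN'⟩ := Int.eq_ofNat_of_zero_le hN.le
  obtain ⟨k, hk1, hk2, α, γ, hco⟩ := hB N (by omega) ((u * x - w * y : ℤ) : ℝ)
  have hNr : (b * x + a * y : ℝ) = N := by exact_mod_cast hN'
  refine ⟨k - (u * x - w * y), ?_, ?_, ?_⟩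
  · have : u * x - w * y < k := by exact_mod_cast hk1
    linarith
  · rw [hNr]
    push_cast at hk2 ⊢
    linarith
  · refine ⟨α * u + γ * b, γ * a - α * w, ?_⟩
    have hN'' : (N : ℤ) = b * x + a * y := hN'.symm
    rw [hN''] at hco
    linear_combination hco + α * (k - (u * x - w * y)) * huw

theorem log_sq_eventually_lt (M ε : ℝ) (hε : 0 < ε) :
    ∀ᶠ D : ℕ in Filter.atTop, M * Real.log D ^ 2 < ε * D := by
  have h1 := (Real.isLittleO_pow_log_id_atTop (n := 2)).comp_tendsto tendsto_natCast_atTop_atTop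
  have h2 := h1.bound (show 0 < ε / (|M| + 1) by positivity)
  filter_upwards [h2, Filter.eventually_gt_atTop 0] with D hD hD0
  have hDr : (0 : ℝ) < D := by exact_mod_cast hD0
  simp only [Function.comp, Real.norm_eq_abs, id, abs_of_pos hDr,
    abs_of_nonneg (sq_nonneg (Real.log D))] at hD
  rw [div_mul_eq_mul_div, le_div_iff₀ (by positivity)] at hD
  rcases (sq_nonneg (Real.log D)).eq_or_lt with h0 | h0
  · rw [← h0]; simp; positivity
  · nlinarith [le_abs_self M]

/-- **Proposition `prop: euclid`.** Given `h ∈ H` and `r > 0` with `r·h > r·h'` for all other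
`h' ∈ H`, every sufficiently large `D` divisible by `gcd(h)` can be written as `D = h·d` with
`gcd(d) = 1`, each `d_j` close to `D r_j/(r·h)`, and `h'·d < D` for all other `h' ∈ H`. -/
theorem stmt16 (m : ℕ) (hm : 2 ≤ m) (H : Finset (Fin m → ℕ)) (hH0 : ∀ h ∈ H, h ≠ 0)
    (h : Fin m → ℕ) (hhH : h ∈ H) (r : Fin m → ℝ) (hr : ∀ j, 0 < r j)
    (hmax : ∀ h' ∈ H, h' ≠ h → (∑ j, r j * (h' j : ℝ)) < ∑ j, r j * (h j : ℝ)) :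
    ∃ c : ℝ, 0 < c ∧ ∃ D0 : ℕ, ∀ D : ℕ, D0 ≤ D → Finset.univ.gcd h ∣ D →
      ∃ d : Fin m → ℕ, (∀ j, 1 ≤ d j) ∧ Finset.univ.gcd d = 1 ∧
        (∀ j, |(d j : ℝ) - (D : ℝ) * r j / (∑ k, r k * (h k : ℝ))| ≤
          c * (Real.log D) ^ 2) ∧
        (∑ j, h j * d j) = D ∧
        ∀ h' ∈ H, h' ≠ h → (∑ j, h' j * d j) < D := by
  obtain ⟨B, hB0, hB⟩ := jacobsthal
  have h0 := hH0 h hhH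
  obtain ⟨C, hC0, hC⟩ := exists_int_point h h0
  obtain ⟨i, hi⟩ : ∃ i, h i ≠ 0 := Function.ne_iff.mp h0
  have : Nontrivial (Fin m) := Fin.nontrivial_iff_two_le.mpr hm
  obtain ⟨j, hji⟩ := exists_ne i
  set S := ∑ k, r k * (h k : ℝ) with hS
  have hS0 : 0 < S := by
    refine sum_pos' (fun k _ => mul_nonneg (hr k).le (Nat.cast_nonneg _)) ⟨i, mem_univ i, ?_⟩
    exact mul_pos (hr i) (by exact_mod_cast Nat.pos_of_ne_zero hi)
  set g := Nat.gcd (h j) (h i) with hg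
  have hg0 : 0 < g := Nat.gcd_pos_of_pos_right _ (Nat.pos_of_ne_zero hi)
  obtain ⟨a, ha⟩ : g ∣ h j := Nat.gcd_dvd_left _ _
  obtain ⟨b, hb⟩ : g ∣ h i := Nat.gcd_dvd_right _ _
  have hb0 : 0 < b := Nat.pos_of_ne_zero fun hb' => hi (by rw [hb, hb', mul_zero])
  have hab : Nat.Coprime a b := by
    have h1 : g * Nat.gcd a b = g * 1 := by
      rw [← Nat.gcd_mul_left, ← ha, ← hb, ← hg, mul_one]
    exact Nat.eq_of_mul_eq_mul_left hg0 h1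
  set G : ℝ := b * (r i / S + C) + a * (r j / S + C) with hG
  have hri := hr i
  have hrj := hr j
  have hG0 : 0 < G := by
    have : (0 : ℝ) < b := by exact_mod_cast hb0
    positivity
  set Q : ℝ := B * (2 + |Real.log G|) ^ 2 with hQ
  set c : ℝ := C + (a + b) * Q with hc
  have hQ0 : 0 ≤ Q := by positivity
  have hc0 : 0 < c := by positivity
  refine ⟨c, hc0, ?_⟩
  have hev1 : ∀ᶠ D : ℕ in Filter.atTop, ∀ k, (c + 1) * Real.log D ^ 2 < r k / S * D :=
    Filter.eventually_all.mpr fun k => log_sq_eventually_lt _ _ (div_pos (hr k) hS0)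
  have hev2 : ∀ᶠ D : ℕ in Filter.atTop, ∀ h' ∈ H, h' ≠ h →
      (∑ k, (h' k : ℝ)) * c * Real.log D ^ 2 < (1 - (∑ k, r k * (h' k : ℝ)) / S) * D := by
    rw [Filter.eventually_all_finset]
    intro h' hh'
    by_cases hne : h' = h
    · exact Filter.Eventually.of_forall fun D hD => absurd hne hD
    · have h1 : 0 < 1 - (∑ k, r k * (h' k : ℝ)) / S := by
        rw [sub_pos, div_lt_one hS0]
        exact hmax h' hh' hne
      filter_upwards [log_sq_eventually_lt ((∑ k, (h' k : ℝ)) * c) _ h1] with D hD _ using hD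
  obtain ⟨N, hN2, hN⟩ := exists_log_ge 1
  obtain ⟨D0, hD0⟩ := Filter.eventually_atTop.mp (hev1.and hev2)
  refine ⟨max N D0, fun D hD hgD => ?_⟩
  obtain ⟨hE1, hE2⟩ := hD0 D ((le_max_right _ _).trans hD)
  have hl1 := hN D ((le_max_left _ _).trans hD)
  have hD1 : (1 : ℝ) ≤ D := by
    have : 1 ≤ D := by have := (le_max_left N D0).trans hD; omega
    exact_mod_cast this
  have hl2 : 1 ≤ Real.log D ^ 2 := one_le_pow₀ hl1
  obtain ⟨x, hx, hxt⟩ := hC D hgD (fun k => D * r k / S) (by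
    have : ∀ k, (h k : ℝ) * (D * r k / S) = D / S * (r k * h k) := fun k => by ring
    simp_rw [this]
    rw [← mul_sum, ← hS]
    field_simp)
  have hcC : C ≤ c := le_add_of_nonneg_right (by positivity)
  have hxpos : ∀ k, (0 : ℝ) < x k := fun k => by
    have h1 := (abs_le.mp (hxt k)).1
    have h2 := hE1 k
    have h3 : (D : ℝ) * r k / S = r k / S * D := by ring
    have h4 : c ≤ c * Real.log D ^ 2 := le_mul_of_one_le_right hc0.le hl2
    linarith
  have hxle : ∀ k, (x k : ℝ) ≤ (r k / S + C) * D := fun k => by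
    have h1 := (abs_le.mp (hxt k)).2
    have h3 : (D : ℝ) * r k / S = r k / S * D := by ring
    have h4 : C ≤ C * D := le_mul_of_one_le_right hC0.le hD1
    linarith
  have hNpos : (0 : ℝ) < b * x i + a * x j := by
    have : (0 : ℝ) < b := by exact_mod_cast hb0
    have := hxpos i
    have := hxpos j
    positivity
  obtain ⟨t, ht0, htle, hcop⟩ := exists_coprime_shift hB (a := a) (b := b)
    (Nat.isCoprime_iff_coprime.mpr hab) (x i) (x j) (by exact_mod_cast hNpos)
  have htQ : (t : ℝ) ≤ Q * Real.log D ^ 2 := by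
    push_cast at htle
    refine htle.trans ?_
    rw [hQ, mul_assoc, ← mul_pow]
    by_cases hone : b * (x i : ℝ) + a * x j < 1
    · exfalso
      have h1 : (b : ℤ) * x i + a * x j < 1 := by exact_mod_cast hone
      have h2 : 0 < (b : ℤ) * x i + a * x j := by exact_mod_cast hNpos
      omega
    · have h1 : 0 ≤ Real.log (b * (x i : ℝ) + a * x j) := Real.log_nonneg (not_lt.mp hone)
      have h2 : Real.log (b * (x i : ℝ) + a * x j) ≤ Real.log G + Real.log D := by
        rw [← Real.log_mul hG0.ne' (by linarith)]
        refine Real.log_le_log hNpos ?_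
        have := mul_le_mul_of_nonneg_left (hxle i) (Nat.cast_nonneg (α := ℝ) b)
        have := mul_le_mul_of_nonneg_left (hxle j) (Nat.cast_nonneg (α := ℝ) a)
        rw [hG]
        linarith
      gcongr
      have h3 : |Real.log G| ≤ |Real.log G| * Real.log D :=
        le_mul_of_one_le_right (abs_nonneg _) hl1
      linarith [le_abs_self (Real.log G)]
  set e : Fin m → ℤ := fun k => x k + (if k = i then t * a else 0) - (if k = j then t * b else 0)
    with he
  have hei : e i = x i + t * a := by simp [he, hji.symm]
  have hej : e j = x j - t * b := by simp [he, hji]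
  have htr : (0 : ℝ) < t := by exact_mod_cast ht0
  have hedist : ∀ k, |(e k : ℝ) - D * r k / S| ≤ c * Real.log D ^ 2 := by
    intro k
    have h1 : |(e k : ℝ) - x k| ≤ (a + b) * t := by
      have ha' : (0 : ℝ) ≤ t * a := by positivity
      have hb' : (0 : ℝ) ≤ t * b := by positivity
      simp only [he]
      push_cast
      rw [abs_le]
      constructor <;> split_ifs <;> linarith
    have h2 : |(e k : ℝ) - D * r k / S| ≤ |(e k : ℝ) - x k| + |(x k : ℝ) - D * r k / S| :=
      abs_sub_le _ _ _
    have h3 : ((a : ℝ) + b) * t ≤ (a + b) * (Q * Real.log D ^ 2) := by gcongr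
    have h4 := hxt k
    have h5 : C ≤ C * Real.log D ^ 2 := le_mul_of_one_le_right hC0.le hl2
    rw [hc]
    linarith
  have hepos : ∀ k, 1 ≤ e k := fun k => by
    have h1 := (abs_le.mp (hedist k)).1
    have h2 := hE1 k
    have h3 : (D : ℝ) * r k / S = r k / S * D := by ring
    have h4 : (1 : ℝ) ≤ e k := by linarith
    exact_mod_cast h4
  have hesum : ∑ k, (h k : ℤ) * e k = D := by
    rw [← hx]
    simp only [he, mul_sub, mul_add, sum_sub_distrib, sum_add_distrib]
    simp only [mul_ite, mul_zero, sum_ite_eq', mem_univ, if_true]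
    rw [ha, hb]
    push_cast
    ring
  have hcast : ∀ k, ((e k).toNat : ℤ) = e k := fun k => Int.toNat_of_nonneg (by linarith [hepos k])
  have hcastr : ∀ k, ((e k).toNat : ℝ) = e k := fun k => by exact_mod_cast hcast k
  refine ⟨fun k => (e k).toNat, fun k => ?_, ?_, fun k => ?_, ?_, fun h' hh' hne => ?_⟩
  · show 1 ≤ (e k).toNat
    have := hepos k
    omega
  · have h1 : Nat.Coprime (e i).toNat (e j).toNat := by
      rw [← Nat.isCoprime_iff_coprime, hcast, hcast, hei, hej]
      exact hcop
    exact Nat.eq_one_of_dvd_coprimes h1 (Finset.gcd_dvd (mem_univ i)) (Finset.gcd_dvd (mem_univ j))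
  · rw [hcastr]
    exact hedist k
  · zify
    simp_rw [hcast]
    exact hesum
  · have h1 : ∑ k, (h' k : ℝ) * e k ≤
        ∑ k, (h' k : ℝ) * (D * r k / S + c * Real.log D ^ 2) := by
      refine sum_le_sum fun k _ => ?_
      have := (abs_le.mp (hedist k)).2
      gcongr
      linarith
    have h2 : ∑ k, (h' k : ℝ) * (D * r k / S + c * Real.log D ^ 2) =
        (∑ k, r k * (h' k : ℝ)) / S * D + (∑ k, (h' k : ℝ)) * c * Real.log D ^ 2 := by
      simp only [mul_add, sum_add_distrib, sum_div, sum_mul]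
      congr 1
      · exact sum_congr rfl fun k _ => by ring
      · exact sum_congr rfl fun k _ => by ring
    have h3 := hE2 h' hh' hne
    have h4 : ((∑ k, h' k * (e k).toNat : ℕ) : ℝ) < D := by
      push_cast
      simp_rw [hcastr]
      linarith
    exact_mod_cast h4
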